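/- arXiv:2106.14953 — 3 statements merged into one kernel-verified Lean document; each statement's English description precedes it below -/
import Mathlib

section
/- There exist a constant C > 0, a real number x₀, and for each real x ≥ x₀ a set E(x) of positive integers at most x, such that #E(x) = o(x) as x → ∞, and for every real x ≥ x₀ and every positive integer d satisfying d > x^{1/(2 log log log x)} and P⁻(d) > log log x, the number of integers n with 1 ≤ n ≤ x, n ∉ E(x), and d ∣ s(n) is at most C·x/(d^{1/4} log x). -/
open scoped Classical
open Filter Finset

/-- `sigma1 n` is `σ(n)`, the sum of all positive divisors of `n`. -/
def sigma1 (n : ℕ) : ℕ := ArithmeticFunction.sigma 1 n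

/-- `s n` is the sum of the proper divisors of `n`, i.e. `σ(n) − n`. -/
def s (n : ℕ) : ℕ := sigma1 n - n

theorem sigma1_eq_sum (n : ℕ) : sigma1 n = ∑ e ∈ n.divisors, e := by
  simp [sigma1, ArithmeticFunction.sigma_one_apply]

theorem sigma1_mul {a b : ℕ} (h : Nat.Coprime a b) : sigma1 (a * b) = sigma1 a * sigma1 b :=
  ArithmeticFunction.isMultiplicative_sigma.map_mul_of_coprime h

theorem sigma1_prime {p : ℕ} (hp : p.Prime) : sigma1 p = p + 1 := by
  rw [sigma1_eq_sum, hp.sum_divisors]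

theorem sigma1_one : sigma1 1 = 1 := by simp [sigma1_eq_sum]

theorem le_sigma1 (n : ℕ) : n ≤ sigma1 n := by
  rcases Nat.eq_zero_or_pos n with rfl | h
  · simp
  rw [sigma1_eq_sum]
  exact Finset.single_le_sum (f := fun e => e) (fun _ _ => Nat.zero_le _)
    (Nat.mem_divisors_self n h.ne')

theorem add_s (n : ℕ) : n + s n = sigma1 n := by
  have := le_sigma1 n
  unfold s; omega

theorem s_eq_sum (n : ℕ) : s n = ∑ e ∈ n.properDivisors, e := by
  have h := add_s n
  rw [sigma1_eq_sum, Nat.sum_divisors_eq_sum_properDivisors_add_self] at h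
  omega

theorem s_pos {n : ℕ} (h : 2 ≤ n) : 0 < s n := by
  rw [s_eq_sum]
  have : (1:ℕ) ≤ ∑ e ∈ n.properDivisors, e :=
    Finset.single_le_sum (f := fun e => e) (fun _ _ => Nat.zero_le _)
      (Nat.one_mem_properDivisors_iff_one_lt.2 h)
  exact this

theorem sigma1_pos {n : ℕ} (h : 0 < n) : 0 < sigma1 n := lt_of_lt_of_le h (le_sigma1 n)

theorem sigma1_eq_self {n : ℕ} (h0 : 0 < n) (h : sigma1 n = n) : n = 1 := by
  by_contra h1
  have := s_pos (n := n) (by omega)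
  have := add_s n
  omega

theorem s_mul {a b : ℕ} (h : Nat.Coprime a b) : s (a * b) = a * s b + s a * sigma1 b := by
  have h1 := add_s (a * b)
  rw [sigma1_mul h, ← add_s a, ← add_s b] at h1
  rw [← add_s b]
  nlinarith

theorem sigma1_le (n : ℕ) (hn : 0 < n) : (sigma1 n : ℝ) ≤ n * (1 + Real.log n) := by
  rw [sigma1_eq_sum]
  have h1 : (∑ e ∈ n.divisors, e) = ∑ e ∈ n.divisors, n / e :=
    (Nat.sum_div_divisors n (fun e => e)).symm
  rw [h1]
  push_cast
  have h2 : ∑ e ∈ n.divisors, ((n / e : ℕ) : ℝ) ≤ ∑ e ∈ n.divisors, (n : ℝ) * (e : ℝ)⁻¹ := by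
    apply Finset.sum_le_sum
    intro e _
    rw [← div_eq_mul_inv]
    exact Nat.cast_div_le
  have h3 : ∑ e ∈ n.divisors, (n : ℝ) * (e : ℝ)⁻¹ ≤ ∑ e ∈ Finset.Icc 1 n, (n : ℝ) * (e : ℝ)⁻¹ := by
    apply Finset.sum_le_sum_of_subset_of_nonneg
    · intro e he
      have := Nat.divisor_le he
      have := Nat.pos_of_mem_divisors he
      simp; omega
    · intros; positivity
  have h4 : ∑ e ∈ Finset.Icc 1 n, (n : ℝ) * (e : ℝ)⁻¹ = n * (harmonic n : ℝ) := by
    rw [← Finset.mul_sum, harmonic_eq_sum_Icc]; push_cast; rfl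
  have h5 := harmonic_le_one_add_log n
  calc _ ≤ _ := h2
    _ ≤ _ := h3
    _ = _ := h4
    _ ≤ _ := by gcongr

theorem sum_biUnion_le' (S : Finset ℕ) (f : ℕ → Finset ℕ) :
    ∑ e ∈ S.biUnion f, e ≤ ∑ p ∈ S, ∑ e ∈ f p, e := by
  induction S using Finset.induction_on with
  | empty => simp
  | insert p S hp ih =>
    rw [Finset.biUnion_insert, Finset.sum_insert hp]
    have := Finset.sum_union_inter (s₁ := f p) (s₂ := S.biUnion f) (f := fun e : ℕ => e)
    omega

theorem s_le_sum (a : ℕ) : s a ≤ ∑ p ∈ a.primeFactors, sigma1 (a / p) := by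
  rw [s_eq_sum]
  have : a.properDivisors ⊆ a.primeFactors.biUnion (fun p => (a / p).divisors) := by
    intro e he
    rw [Nat.mem_properDivisors] at he
    obtain ⟨⟨k, hk⟩, hlt⟩ := he
    have hk1 : k ≠ 1 := by rintro rfl; omega
    have ha : a ≠ 0 := by omega
    obtain ⟨p, hp, m, rfl⟩ := Nat.exists_prime_and_dvd hk1
    rw [Finset.mem_biUnion]
    refine ⟨p, ?_, ?_⟩
    · rw [Nat.mem_primeFactors]; exact ⟨hp, ⟨e * m, by rw [hk]; ring⟩, ha⟩
    · have : a / p = e * m := by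
        rw [hk, show e * (p * m) = p * (e * m) by ring]; exact Nat.mul_div_cancel_left _ hp.pos
      rw [this, Nat.mem_divisors]
      refine ⟨dvd_mul_right _ _, ?_⟩
      intro h0; apply ha; rw [hk, show e * (p * m) = p * (e * m) by ring, h0]; simp
  calc _ ≤ ∑ e ∈ a.primeFactors.biUnion (fun p => (a / p).divisors), e :=
        Finset.sum_le_sum_of_subset this
    _ ≤ ∑ p ∈ a.primeFactors, ∑ e ∈ (a / p).divisors, e := by
        exact sum_biUnion_le' _ _
    _ = _ := by simp [sigma1_eq_sum]

/-- If `P` is an odd prime at least as large as each prime factor of the odd squarefree `a`,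
then `P ∤ σ(a)`. -/
theorem not_dvd_sigma1 : ∀ (a : ℕ), Squarefree a → ¬ 2 ∣ a → ∀ P : ℕ, P.Prime →
    (∀ p, p.Prime → p ∣ a → p ≤ P) → ¬ P ∣ sigma1 a := by
  intro a
  induction a using Nat.strong_induction_on with
  | _ a ih =>
    intro hsq h2 P hP hle hd
    by_cases h1 : a = 1
    · subst h1; rw [sigma1_one] at hd; exact hP.one_lt.ne' (Nat.dvd_one.1 hd)
    obtain ⟨q, hq, m, rfl⟩ := Nat.exists_prime_and_dvd h1
    have hcop : Nat.Coprime q m := Nat.coprime_of_squarefree_mul hsq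
    rw [sigma1_mul hcop, sigma1_prime hq, hP.dvd_mul] at hd
    have hm0 : 0 < m := by
      rcases Nat.eq_zero_or_pos m with rfl | h
      · simp at h2
      · exact h
    rcases hd with hd | hd
    · have hqP := hle q hq (dvd_mul_right _ _)
      have h3 := Nat.le_of_dvd (by omega) hd
      have hq2 : q ≠ 2 := by rintro rfl; exact h2 (dvd_mul_right _ _)
      have hqo := hq.eq_two_or_odd
      rcases hP.eq_two_or_odd with hP2 | hPo
      · have := hq.two_le; omega
      · have : q = P := by omega
        subst this
        have : q ∣ 1 := (Nat.dvd_add_right (dvd_refl q)).1 hd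
        exact hq.one_lt.ne' (Nat.dvd_one.1 this)
    · refine ih m ?_ (hsq.of_mul_right) (fun h => h2 (h.mul_left _)) P hP
        (fun p hp hpm => hle p hp (hpm.mul_left _)) hd
      have := hq.two_le; nlinarith

theorem sigma_ratio_inj : ∀ (N a a' : ℕ), a + a' ≤ N → Squarefree a → Squarefree a' → ¬ 2 ∣ a →
    ¬ 2 ∣ a' → a * sigma1 a' = a' * sigma1 a → a = a' := by
  intro N
  induction N with
  | zero => intro a a' h; intros; omega
  | succ N ih =>
    intro a a' hN ha ha' h2 h2' heq
    have ha0 : 0 < a := Nat.pos_of_ne_zero ha.ne_zero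
    have ha0' : 0 < a' := Nat.pos_of_ne_zero ha'.ne_zero
    by_cases h1 : a = 1
    · subst h1
      rw [sigma1_one] at heq
      exact (sigma1_eq_self ha0' (by omega)).symm
    by_cases h1' : a' = 1
    · subst h1'
      rw [sigma1_one] at heq
      exact (sigma1_eq_self ha0 (by omega))
    have hne : (a * a').primeFactors.Nonempty := by
      rw [Nat.nonempty_primeFactors]
      have : 2 ≤ a := by omega
      nlinarith
    obtain ⟨P, hPm, hmax⟩ := Finset.exists_max_image _ (fun p => p) hne
    rw [Nat.mem_primeFactors] at hPm
    obtain ⟨hP, hPd, hne0⟩ := hPm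
    have hmaxa : ∀ p, p.Prime → p ∣ a → p ≤ P := fun p hp hpa =>
      hmax p (Nat.mem_primeFactors.2 ⟨hp, hpa.mul_right _, hne0⟩)
    have hmaxa' : ∀ p, p.Prime → p ∣ a' → p ≤ P := fun p hp hpa =>
      hmax p (Nat.mem_primeFactors.2 ⟨hp, hpa.mul_left _, hne0⟩)
    have hn := not_dvd_sigma1 a ha h2 P hP hmaxa
    have hn' := not_dvd_sigma1 a' ha' h2' P hP hmaxa'
    have hboth : P ∣ a ∧ P ∣ a' := by
      rcases hP.dvd_mul.1 hPd with h | h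
      · refine ⟨h, ?_⟩
        have : P ∣ a' * sigma1 a := heq ▸ h.mul_right _
        exact (hP.dvd_mul.1 this).resolve_right hn
      · refine ⟨?_, h⟩
        have : P ∣ a * sigma1 a' := heq ▸ h.mul_right _
        exact (hP.dvd_mul.1 this).resolve_right hn'
    obtain ⟨⟨m, rfl⟩, ⟨m', rfl⟩⟩ := hboth
    rw [sigma1_mul (Nat.coprime_of_squarefree_mul ha),
      sigma1_mul (Nat.coprime_of_squarefree_mul ha'), sigma1_prime hP] at heq
    have : m * sigma1 m' = m' * sigma1 m := by
      have hpos : 0 < P * (P + 1) := by have := hP.pos; positivity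
      apply Nat.eq_of_mul_eq_mul_left hpos
      linarith
    have hm0 : 0 < m := Nat.pos_of_ne_zero ha.of_mul_right.ne_zero
    rw [ih m m' ?_ ha.of_mul_right ha'.of_mul_right (fun h => h2 (h.mul_left _))
      (fun h => h2' (h.mul_left _)) this]
    have := hP.two_le
    nlinarith

/-- Two solutions `a, a'` for the same cofactor `b`. -/
theorem two_solutions {a a' b d : ℕ} (h : Nat.Coprime a b) (h' : Nat.Coprime a' b)
    (hd : d ∣ s (a * b)) (hd' : d ∣ s (a' * b)) :
    (d : ℤ) ∣ ((a : ℤ) * s a' - a' * s a) * (Nat.gcd b (sigma1 b) : ℤ) := by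
  rw [s_mul h] at hd
  rw [s_mul h'] at hd'
  have e1 : (d : ℤ) ∣ (a : ℤ) * s b + s a * sigma1 b := by exact_mod_cast hd
  have e2 : (d : ℤ) ∣ (a' : ℤ) * s b + s a' * sigma1 b := by exact_mod_cast hd'
  have hs : (sigma1 b : ℤ) = b + s b := by exact_mod_cast (add_s b).symm
  obtain ⟨u, hu⟩ := e1
  obtain ⟨v, hv⟩ := e2
  have hg : ((Nat.gcd b (sigma1 b) : ℕ) : ℤ) = _ := Nat.gcd_eq_gcd_ab b (sigma1 b)
  have f1 : ((a : ℤ) * s a' - a' * s a) * sigma1 b = d * (a * v - a' * u) := by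
    linear_combination (a : ℤ) * hv - a' * hu
  have f2 : ((a : ℤ) * s a' - a' * s a) * s b = d * (s a' * u - s a * v) := by
    linear_combination (s a' : ℤ) * hu - s a * hv
  have f3 : ((a : ℤ) * s a' - a' * s a) * b = d * (a * v - a' * u) - d * (s a' * u - s a * v) := by
    have hb' : (b : ℤ) = sigma1 b - s b := by linarith
    linear_combination f1 - f2 + ((a : ℤ) * s a' - a' * s a) * hb'
  refine ⟨((a * v - a' * u) - (s a' * u - s a * v)) * Nat.gcdA b (sigma1 b)
    + (a * v - a' * u) * Nat.gcdB b (sigma1 b), ?_⟩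
  rw [hg]
  linear_combination (Nat.gcdA b (sigma1 b)) * f3 + (Nat.gcdB b (sigma1 b)) * f1

noncomputable def smPart (y : ℝ) (n : ℕ) : ℕ :=
  ∏ p ∈ n.primeFactors.filter (fun p : ℕ => (p : ℝ) ≤ y), p ^ (n.factorization p)

noncomputable def rgPart (y : ℝ) (n : ℕ) : ℕ :=
  ∏ p ∈ n.primeFactors.filter (fun p : ℕ => ¬ (p : ℝ) ≤ y), p ^ (n.factorization p)

theorem sm_mul_rg (y : ℝ) {n : ℕ} (hn : n ≠ 0) : smPart y n * rgPart y n = n := by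
  unfold smPart rgPart
  rw [Finset.prod_filter_mul_prod_filter_not]
  exact Nat.prod_factorization_pow_eq_self hn

theorem prime_dvd_rg {y : ℝ} {n p : ℕ} (hp : p.Prime) (h : p ∣ rgPart y n) : y < p := by
  unfold rgPart at h
  rw [hp.prime.dvd_finsetProd_iff] at h
  obtain ⟨q, hq, hd⟩ := h
  rw [Finset.mem_filter, Nat.mem_primeFactors] at hq
  have := (Nat.prime_dvd_prime_iff_eq hp hq.1.1).1 (hp.dvd_of_dvd_pow hd)
  subst this
  exact not_le.1 hq.2

theorem le_smPart {y : ℝ} {n g : ℕ} (hn : n ≠ 0) (hg : g ∣ n)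
    (h : ∀ p, p.Prime → p ∣ g → (p : ℝ) ≤ y) : g ≤ smPart y n := by
  have hm := sm_mul_rg y hn
  have hpos : 0 < smPart y n := by
    rcases Nat.eq_zero_or_pos (smPart y n) with h0 | h0
    · rw [h0] at hm; simp at hm; omega
    · exact h0
  apply Nat.le_of_dvd hpos
  have hc : Nat.Coprime g (rgPart y n) := by
    apply Nat.Coprime.symm
    apply Nat.coprime_of_dvd
    intro p hp h1 h2
    exact absurd (prime_dvd_rg hp h1) (not_lt.2 (h p hp h2))
  rw [← hm] at hg
  exact hc.dvd_of_dvd_mul_right hg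

theorem prime_dvd_sigma1 {n p : ℕ} (hn : n ≠ 0) (hp : p.Prime) (h : p ∣ sigma1 n) :
    ∃ q, q.Prime ∧ q ∣ n ∧ p ∣ sigma1 (q ^ n.factorization q) := by
  unfold sigma1 at h
  rw [ArithmeticFunction.IsMultiplicative.multiplicative_factorization _
    ArithmeticFunction.isMultiplicative_sigma hn, Finsupp.prod, hp.prime.dvd_finsetProd_iff] at h
  obtain ⟨q, hq, hd⟩ := h
  rw [Nat.support_factorization, Nat.mem_primeFactors] at hq
  exact ⟨q, hq.1, hq.2.1, hd⟩

theorem sigma1_le_sq (n : ℕ) : sigma1 n ≤ n ^ 2 := by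
  rw [sigma1_eq_sum]
  calc ∑ e ∈ n.divisors, e ≤ ∑ e ∈ n.divisors, n := Finset.sum_le_sum fun e he => Nat.divisor_le he
    _ = n.divisors.card * n := by simp
    _ ≤ n * n := Nat.mul_le_mul_right _ (Nat.card_divisors_le_self n)
    _ = n ^ 2 := by ring

/-- the structural conditions on `n` outside the exceptional set -/
structure Good (x l w y T : ℝ) (n : ℕ) : Prop where
  lb : x / l < n
  ub : (n : ℝ) ≤ x
  sq : ∀ m : ℕ, m ^ 2 ∣ n → (m : ℝ) ≤ w
  pq : ∀ p q : ℕ, p.Prime → q.Prime → y < p → p ∣ n → q ∣ n → ¬ p ∣ q + 1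
  sm : (smPart y n : ℝ) ≤ T

theorem prime_gcd_le {x l w y T : ℝ} {n p : ℕ} (hwy : w ^ 6 ≤ y) (hn : n ≠ 0)
    (hG : Good x l w y T n) (hp : p.Prime) (hpn : p ∣ n) (hps : p ∣ sigma1 n) : (p : ℝ) ≤ y := by
  by_contra hlt
  rw [not_le] at hlt
  obtain ⟨q, hq, hqn, hd⟩ := prime_dvd_sigma1 hn hp hps
  set e := n.factorization q with he
  have hdiv : q ^ e ∣ n := Nat.ordProj_dvd n q
  have he1 : 1 ≤ e := by
    exact (hq.dvd_iff_one_le_factorization hn).1 hqn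
  rcases Nat.lt_or_ge e 2 with h2 | h2
  · have : e = 1 := by omega
    rw [this, pow_one, sigma1_prime hq] at hd
    exact hG.pq p q hp hq hlt hpn hqn hd
  · have hm : (q ^ (e / 2)) ^ 2 ∣ n := by
      rw [← pow_mul]
      exact (pow_dvd_pow q (by omega)).trans hdiv
    have h3 := hG.sq _ hm
    have h4 : q ^ e ≤ (q ^ (e / 2)) ^ 3 := by
      rw [← pow_mul]
      exact Nat.pow_le_pow_right hq.pos (by omega)
    have h5 := Nat.le_of_dvd (sigma1_pos (pow_pos hq.pos e)) hd
    have h6 := sigma1_le_sq (q ^ e)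
    have h7 : p ≤ (q ^ (e / 2)) ^ 6 := by
      calc p ≤ (q ^ e) ^ 2 := h5.trans h6
        _ ≤ ((q ^ (e / 2)) ^ 3) ^ 2 := Nat.pow_le_pow_left h4 2
        _ = _ := by ring
    have h8 : (p : ℝ) ≤ ((q ^ (e / 2) : ℕ) : ℝ) ^ 6 := by exact_mod_cast h7
    have h9 : ((q ^ (e / 2) : ℕ) : ℝ) ^ 6 ≤ w ^ 6 := by gcongr
    linarith

theorem gcd_le {x l w y T : ℝ} {n a b : ℕ} (hwy : w ^ 6 ≤ y) (hn : n ≠ 0)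
    (hG : Good x l w y T n) (hab : n = a * b) (hc : Nat.Coprime a b) :
    (Nat.gcd b (sigma1 b) : ℝ) ≤ T := by
  refine le_trans ?_ hG.sm
  have : Nat.gcd b (sigma1 b) ≤ smPart y n := by
    have hbn : b ∣ n := ⟨a, by rw [hab]; ring⟩
    apply le_smPart hn ((Nat.gcd_dvd_left _ _).trans hbn)
    intro p hp hpg
    apply prime_gcd_le hwy hn hG hp
    · exact (hpg.trans (Nat.gcd_dvd_left _ _)).trans hbn
    · rw [hab, sigma1_mul hc]
      exact (hpg.trans (Nat.gcd_dvd_right _ _)).mul_left _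
  exact_mod_cast this

theorem exists_a {y D : ℝ} {n : ℕ} (hn : n ≠ 0) (hD : D < rgPart y n) :
    ∃ a, a ∣ n ∧ D < a ∧ (∀ p, p.Prime → p ∣ a → y < p) ∧
      ∀ p, p.Prime → p ∣ a → ((a / p : ℕ) : ℝ) ≤ D := by
  have hex : ∃ a : ℕ, a ∣ n ∧ D < a ∧ (∀ p : ℕ, p.Prime → p ∣ a → y < p) :=
    ⟨rgPart y n, ⟨smPart y n, by rw [mul_comm]; exact (sm_mul_rg y hn).symm⟩, hD,
      fun p hp h => prime_dvd_rg hp h⟩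
  obtain ⟨h1, h2, h3⟩ := Nat.find_spec hex
  refine ⟨Nat.find hex, h1, h2, h3, ?_⟩
  intro p hp hpa
  by_contra hlt
  rw [not_le] at hlt
  have hpos : 0 < Nat.find hex := Nat.pos_of_ne_zero (ne_zero_of_dvd_ne_zero hn h1)
  have hdd := Nat.div_dvd_of_dvd hpa
  exact Nat.find_min hex (Nat.div_lt_self hpos hp.one_lt)
    ⟨hdd.trans h1, hlt, fun q hq hqa => h3 q hq (hqa.trans hdd)⟩

theorem a_props {x l w y T : ℝ} {n a : ℕ} (hw : 1 ≤ w) (hwy : w ^ 6 ≤ y) (hy2 : 2 ≤ y)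
    (hG : Good x l w y T n) (ha : a ∣ n) (h3 : ∀ p, p.Prime → p ∣ a → y < p) :
    Squarefree a ∧ Nat.Coprime a (n / a) ∧ ¬ 2 ∣ a := by
  have hwy1 : w ≤ y := by
    have : w ^ 1 ≤ w ^ 6 := pow_le_pow_right₀ hw (by norm_num)
    rw [pow_one] at this; linarith
  have hno : ∀ p, p.Prime → p ∣ a → ¬ p ^ 2 ∣ n := by
    intro p hp hpa hd
    have := hG.sq p hd
    have := h3 p hp hpa
    linarith
  refine ⟨?_, ?_, ?_⟩
  · rw [Nat.squarefree_iff_prime_squarefree]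
    intro p hp hpp
    exact hno p hp ((dvd_mul_right _ _).trans hpp) (by rw [sq]; exact hpp.trans ha)
  · apply Nat.coprime_of_dvd
    intro p hp h1 h2
    apply hno p hp h1
    rw [sq, ← Nat.mul_div_cancel' ha]
    exact mul_dvd_mul h1 h2
  · intro h
    have := h3 2 Nat.prime_two h
    push_cast at this
    linarith

theorem card_primeFactors_le {a : ℕ} (ha : 0 < a) :
    (a.primeFactors.card : ℝ) ≤ 2 * Real.log a := by
  have h1 : 2 ^ a.primeFactors.card ≤ a := by
    calc 2 ^ a.primeFactors.card ≤ ∏ p ∈ a.primeFactors, p :=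
          Finset.pow_card_le_prod _ _ _ fun p hp => (Nat.prime_of_mem_primeFactors hp).two_le
      _ ≤ a := Nat.le_of_dvd ha (Nat.prod_primeFactors_dvd a)
  have h2 : ((2 : ℝ) ^ a.primeFactors.card) ≤ a := by exact_mod_cast h1
  have h3 := Real.log_le_log (by positivity) h2
  rw [Real.log_pow] at h3
  have := Real.log_two_gt_d9
  have h4 : (0 : ℝ) ≤ a.primeFactors.card := by positivity
  nlinarith

theorem s_bound {a : ℕ} {D l : ℝ} (ha : 0 < a) (hl : 1 ≤ l) (hal : Real.log a ≤ l)
    (hD : 0 ≤ D) (h4 : ∀ p, p.Prime → p ∣ a → ((a / p : ℕ) : ℝ) ≤ D) :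
    (s a : ℝ) ≤ 4 * l ^ 2 * D := by
  have h1 : (s a : ℝ) ≤ ∑ p ∈ a.primeFactors, (sigma1 (a / p) : ℝ) := by
    exact_mod_cast s_le_sum a
  have h2 : ∑ p ∈ a.primeFactors, (sigma1 (a / p) : ℝ) ≤ ∑ p ∈ a.primeFactors, D * (1 + l) := by
    apply Finset.sum_le_sum
    intro p hp
    rw [Nat.mem_primeFactors] at hp
    have hpos : 0 < a / p := Nat.div_pos (Nat.le_of_dvd ha hp.2.1) hp.1.pos
    refine (sigma1_le (a / p) hpos).trans ?_
    have hlog : Real.log ((a / p : ℕ) : ℝ) ≤ l := by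
      refine le_trans (Real.log_le_log (by exact_mod_cast hpos) ?_) hal
      exact_mod_cast Nat.div_le_self a p
    have hlog0 : 0 ≤ Real.log ((a / p : ℕ) : ℝ) := Real.log_natCast_nonneg _
    exact mul_le_mul (h4 p hp.1 hp.2.1) (by linarith) (by linarith) hD
  rw [Finset.sum_const, nsmul_eq_mul] at h2
  have h3 := card_primeFactors_le ha
  calc (s a : ℝ) ≤ _ := h1.trans h2
    _ ≤ (2 * l) * (D * (1 + l)) := by gcongr; linarith
    _ ≤ (2 * l) * (D * (l + l)) := by gcongr
    _ = _ := by ring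

theorem nonprime_le_sq {a : ℕ} {D : ℝ} (ha : 2 ≤ a) (hnp : ¬ a.Prime) (hD : 0 ≤ D)
    (h4 : ∀ p, p.Prime → p ∣ a → ((a / p : ℕ) : ℝ) ≤ D) : (a : ℝ) ≤ D ^ 2 := by
  obtain ⟨p, hp, m, rfl⟩ := Nat.exists_prime_and_dvd (show a ≠ 1 by omega)
  have hm1 : m ≠ 1 := by rintro rfl; rw [mul_one] at hnp; exact hnp hp
  have h1 := h4 p hp (dvd_mul_right _ _)
  rw [Nat.mul_div_cancel_left _ hp.pos] at h1
  obtain ⟨q, hq, k, rfl⟩ := Nat.exists_prime_and_dvd hm1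
  have h2 := h4 q hq ⟨p * k, by ring⟩
  rw [show p * (q * k) = q * (p * k) by ring, Nat.mul_div_cancel_left _ hq.pos] at h2
  have hk : 1 ≤ k := by
    rcases Nat.eq_zero_or_pos k with rfl | h
    · simp at ha
    · exact h
  have h3 : (p : ℝ) ≤ D := by
    refine le_trans ?_ h2
    exact_mod_cast Nat.le_mul_of_pos_right p hk
  rw [Nat.cast_mul, sq]
  gcongr

theorem s_prime {p : ℕ} (hp : p.Prime) : s p = 1 := by
  have := add_s p
  rw [sigma1_prime hp] at this
  omega

/-- Injectivity in the composite class. -/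
theorem class2_inj {a a' b d : ℕ} {r l T : ℝ} (hb : 0 < b) (hl : 100 ≤ l) (hT : l ^ 10 ≤ T)
    (hr4 : r ^ 4 = d) (hrT : T ^ 2 < r)
    (hc : Nat.Coprime a b) (hc' : Nat.Coprime a' b) (hd : d ∣ s (a * b)) (hd' : d ∣ s (a' * b))
    (hg : (Nat.gcd b (sigma1 b) : ℝ) ≤ T) (hsq : Squarefree a) (hsq' : Squarefree a')
    (h2 : ¬ 2 ∣ a) (h2' : ¬ 2 ∣ a') (hs : (s a : ℝ) ≤ 4 * l ^ 2 * (r * l))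
    (hs' : (s a' : ℝ) ≤ 4 * l ^ 2 * (r * l)) (haD : (a : ℝ) ≤ (r * l) ^ 2)
    (haD' : (a' : ℝ) ≤ (r * l) ^ 2) : a = a' := by
  have hdvd := two_solutions hc hc' hd hd'
  have hT0 : 0 < T := lt_of_lt_of_le (by positivity) hT
  have hr0 : 0 < r := lt_of_le_of_lt (by positivity) hrT
  have hgpos : 0 < Nat.gcd b (sigma1 b) := Nat.gcd_pos_of_pos_left _ hb
  have hl5 : 4 * l ^ 5 ≤ T := by
    refine le_trans ?_ hT
    have : (4 : ℝ) ≤ l ^ 5 := by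
      calc (4 : ℝ) ≤ 100 ^ 5 := by norm_num
        _ ≤ l ^ 5 := by gcongr
    calc 4 * l ^ 5 ≤ l ^ 5 * l ^ 5 := by gcongr
      _ = l ^ 10 := by ring
  have key : ∀ u v : ℝ, 0 ≤ v → u ≤ (r * l) ^ 2 → v ≤ 4 * l ^ 2 * (r * l) →
      u * v ≤ r ^ 3 * T := by
    intro u v hv hu1 hv1
    calc u * v ≤ (r * l) ^ 2 * (4 * l ^ 2 * (r * l)) := by gcongr
      _ = r ^ 3 * (4 * l ^ 5) := by ring
      _ ≤ _ := by gcongr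
  have k1 := key a (s a') (by positivity) haD hs'
  have k2 := key a' (s a) (by positivity) haD' hs
  have p1 : (0:ℝ) ≤ a * s a' := by positivity
  have p2 : (0:ℝ) ≤ a' * s a := by positivity
  have habs : |(a : ℝ) * s a' - a' * s a| ≤ r ^ 3 * T := abs_le.2 ⟨by linarith, by linarith⟩
  have hlt : |(a : ℝ) * s a' - a' * s a| * (Nat.gcd b (sigma1 b) : ℝ) < d := by
    calc _ ≤ (r ^ 3 * T) * T := by gcongr
      _ = r ^ 3 * T ^ 2 := by ring
      _ < r ^ 3 * r := by gcongr
      _ = d := by rw [← hr4]; ring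
  have hlt' : |((a : ℤ) * s a' - a' * s a) * (Nat.gcd b (sigma1 b) : ℤ)| < d := by
    rw [abs_mul, Nat.abs_cast]
    exact_mod_cast hlt
  have h0 := Int.eq_zero_of_abs_lt_dvd hdvd hlt'
  have h0' : (a : ℤ) * s a' - a' * s a = 0 := by
    rcases mul_eq_zero.1 h0 with h | h
    · exact h
    · exfalso; have : Nat.gcd b (sigma1 b) = 0 := by exact_mod_cast h
      omega
  have h1 : a * s a' = a' * s a := by
    have : (a : ℤ) * s a' = a' * s a := by linarith
    exact_mod_cast this
  apply sigma_ratio_inj (a + a') a a' le_rfl hsq hsq' h2 h2'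
  rw [← add_s a, ← add_s a']
  nlinarith

/-- Counting in the prime class for a fixed cofactor. -/
theorem class1_count {b d : ℕ} {x T : ℝ} (hb : 0 < b) (hd0 : 0 < d) (hx : 0 ≤ x) (Q : Finset ℕ)
    (hg : (Nat.gcd b (sigma1 b) : ℝ) ≤ T)
    (hQ : ∀ p ∈ Q, p.Prime ∧ Nat.Coprime p b ∧ d ∣ s (p * b) ∧ ((p * b : ℕ) : ℝ) ≤ x) :
    (Q.card : ℝ) ≤ 1 + x * T / d * (b : ℝ)⁻¹ := by
  set g := Nat.gcd b (sigma1 b) with hgdef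
  have hgpos : 0 < g := Nat.gcd_pos_of_pos_left _ hb
  have hk : 0 < Nat.gcd d g := Nat.gcd_pos_of_pos_left _ hd0
  set m := d / Nat.gcd d g with hm
  have hmd : Nat.gcd d g * m = d := Nat.mul_div_cancel' (Nat.gcd_dvd_left d g)
  have hm0 : 0 < m := by
    rcases Nat.eq_zero_or_pos m with h | h
    · rw [h] at hmd; omega
    · exact h
  have hbR : (0 : ℝ) < b := by exact_mod_cast hb
  have hmR : (0 : ℝ) < m := by exact_mod_cast hm0
  have hdR : (0 : ℝ) < d := by exact_mod_cast hd0
  have hcard : Q.card ≤ (Finset.range (⌊x / b⌋₊ / m + 1)).card := by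
    apply Finset.card_le_card_of_injOn (fun p => p / m)
    · intro p hp
      obtain ⟨_, _, _, h4⟩ := hQ p hp
      have : p ≤ ⌊x / b⌋₊ := by
        apply Nat.le_floor
        rw [le_div_iff₀ hbR]
        exact_mod_cast h4
      simp only [Finset.coe_range, Set.mem_Iio]
      exact Nat.lt_succ_of_le (Nat.div_le_div_right this)
    · intro p hp q hq hpq
      obtain ⟨p1, p2, p3, _⟩ := hQ p hp
      obtain ⟨q1, q2, q3, _⟩ := hQ q hq
      have hdvd := two_solutions p2 q2 p3 q3
      rw [s_prime p1, s_prime q1, ← hgdef] at hdvd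
      have hdvd' : (m : ℤ) ∣ (p : ℤ) - q := by
        have hcop : Nat.Coprime m (g / Nat.gcd d g) := Nat.coprime_div_gcd_div_gcd hk
        have hgg : Nat.gcd d g * (g / Nat.gcd d g) = g := Nat.mul_div_cancel' (Nat.gcd_dvd_right d g)
        have e : ((p : ℤ) * (1 : ℕ) - q * (1 : ℕ)) * g
            = (Nat.gcd d g : ℤ) * (((p : ℤ) - q) * (g / Nat.gcd d g : ℕ)) := by
          have : (g : ℤ) = (Nat.gcd d g : ℤ) * (g / Nat.gcd d g : ℕ) := by exact_mod_cast hgg.symm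
          calc ((p : ℤ) * (1 : ℕ) - q * (1 : ℕ)) * g = ((p : ℤ) - q) * g := by push_cast; ring
            _ = ((p : ℤ) - q) * ((Nat.gcd d g : ℤ) * (g / Nat.gcd d g : ℕ)) := by rw [← this]
            _ = _ := by ring
        rw [e] at hdvd
        have e2 : (d : ℤ) = (Nat.gcd d g : ℤ) * m := by exact_mod_cast hmd.symm
        rw [e2] at hdvd
        have := Int.dvd_of_mul_dvd_mul_left (by exact_mod_cast hk.ne') hdvd
        exact (Nat.isCoprime_iff_coprime.2 hcop).dvd_of_dvd_mul_right this
      have hmod : p % m = q % m := by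
        have : q ≡ p [MOD m] := (Nat.modEq_iff_dvd).2 hdvd'
        exact this.symm
      have hpq' : p / m = q / m := hpq
      rw [← Nat.div_add_mod p m, ← Nat.div_add_mod q m, hpq', hmod]
  rw [Finset.card_range] at hcard
  have h1 : (Q.card : ℝ) ≤ ((⌊x / b⌋₊ / m : ℕ) : ℝ) + 1 := by exact_mod_cast hcard
  have h2 : ((⌊x / b⌋₊ / m : ℕ) : ℝ) ≤ (x / b) / m := by
    refine Nat.cast_div_le.trans ?_
    gcongr
    exact Nat.floor_le (by positivity)
  have h3 : (d : ℝ) ≤ T * m := by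
    have : (d : ℝ) = (Nat.gcd d g : ℝ) * m := by exact_mod_cast hmd.symm
    rw [this]
    gcongr
    refine le_trans ?_ hg
    exact_mod_cast Nat.gcd_le_right d hgpos
  have h4 : (x / b) / m ≤ x * T / d * (b : ℝ)⁻¹ := by
    rw [div_div, div_mul_eq_mul_div, ← div_eq_mul_inv, div_div, div_le_div_iff₀ (by positivity) (by positivity)]
    calc x * (b * d) ≤ x * (b * (T * m)) := by gcongr
      _ = x * T * (b * m) := by ring
    
  linarith

theorem core {x l w y T r : ℝ} {d : ℕ} (hlog : Real.log x = l) (hl : 100 ≤ l) (hw : 1 ≤ w)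
    (hwy : w ^ 6 ≤ y) (hy2 : 2 ≤ y) (hT : l ^ 10 ≤ T) (hTx : T ^ 16 ≤ x) (hr : 0 < r)
    (hr4 : r ^ 4 = d) (hd : T ^ 8 < d) (S : Finset ℕ)
    (hS : ∀ n ∈ S, Good x l w y T n ∧ d ∣ s n) :
    (S.card : ℝ) ≤ 3 * x / (r * l) := by
  have hl0 : 0 < l := by linarith
  have hlT : l ≤ T := by
    refine le_trans ?_ hT
    calc l = l ^ 1 := by ring
      _ ≤ l ^ 10 := pow_le_pow_right₀ (by linarith) (by norm_num)
  have hT1 : 1 ≤ T := by linarith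
  have hT0 : 0 < T := by linarith
  have hTx1 : T ≤ x := by
    refine le_trans ?_ hTx
    calc T = T ^ 1 := by ring
      _ ≤ T ^ 16 := pow_le_pow_right₀ hT1 (by norm_num)
  have hx0 : 0 < x := by linarith
  have hx1 : 1 ≤ x := by linarith
  have hl2T : l ^ 2 * 4 ≤ T := by
    refine le_trans ?_ hT
    calc l ^ 2 * 4 ≤ l ^ 2 * l ^ 8 := by
          gcongr
          calc (4 : ℝ) ≤ 100 ^ 8 := by norm_num
            _ ≤ l ^ 8 := by gcongr
      _ = l ^ 10 := by ring
  have hrT : T ^ 2 < r := by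
    by_contra h
    rw [not_lt] at h
    have : r ^ 4 ≤ (T ^ 2) ^ 4 := by gcongr
    rw [hr4, ← pow_mul] at this
    norm_num at this
    linarith
  have hr1 : 1 ≤ r := by
    have : 1 ≤ T ^ 2 := one_le_pow₀ hT1
    linarith
  have hd0 : 0 < d := by
    have : (0 : ℝ) < d := lt_trans (by positivity) hd
    exact_mod_cast this
  set D := r * l with hD
  have hD0 : 0 < D := by positivity
  have hD1 : 1 ≤ D := by nlinarith
  have hn2 : ∀ n ∈ S, 2 ≤ n := by
    intro n hn
    have h1 := (hS n hn).1.lb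
    have h2 : 2 ≤ x / l := by
      rw [le_div_iff₀ hl0]
      nlinarith
    have : (1 : ℝ) < n := by linarith
    exact_mod_cast this
  have hex : ∀ n ∈ S, ∃ a, a ∣ n ∧ D < a ∧ (∀ p, p.Prime → p ∣ a → y < p) ∧
      ∀ p, p.Prime → p ∣ a → ((a / p : ℕ) : ℝ) ≤ D := by
    intro n hn
    have hn2' := hn2 n hn
    obtain ⟨hG, hdn⟩ := hS n hn
    apply exists_a (by omega)
    have hnR : (0 : ℝ) < n := by exact_mod_cast (show 0 < n by omega)
    have hsm : (n : ℝ) = smPart y n * rgPart y n := by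
      exact_mod_cast (sm_mul_rg y (show n ≠ 0 by omega)).symm
    have h1 : (n : ℝ) ≤ T * rgPart y n := by
      rw [hsm]
      have := hG.sm
      gcongr
    have h2 : (d : ℝ) ≤ x * T := by
      have e1 : d ≤ s n := Nat.le_of_dvd (s_pos hn2') hdn
      have e2 : s n ≤ sigma1 n := by have := add_s n; omega
      have e3 : (d : ℝ) ≤ sigma1 n := by exact_mod_cast e1.trans e2
      have e4 := sigma1_le n (by omega)
      have e5 : Real.log n ≤ l := by rw [← hlog]; exact Real.log_le_log hnR hG.ub
      have e6 := hG.ub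
      calc (d : ℝ) ≤ n * (1 + Real.log n) := e3.trans e4
        _ ≤ x * T := by
          have : 0 ≤ Real.log n := Real.log_natCast_nonneg n
          apply mul_le_mul e6 _ (by linarith) hx0.le
          nlinarith
    have h3 : r * l ^ 2 * T ≤ x := by
      by_contra h
      rw [not_le] at h
      have c1 : x ^ 4 < (r * l ^ 2 * T) ^ 4 := by gcongr
      have c2 : (r * l ^ 2 * T) ^ 4 ≤ x ^ 4 := by
        calc (r * l ^ 2 * T) ^ 4 = r ^ 4 * (l ^ 2) ^ 4 * T ^ 4 := by ring
          _ ≤ (x * T) * T ^ 4 * T ^ 4 := by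
            rw [hr4]
            gcongr
            nlinarith
          _ = x * T ^ 9 := by ring
          _ ≤ x * T ^ 16 := by gcongr; norm_num
          _ ≤ x * x := by gcongr
          _ = x ^ 2 := by ring
          _ ≤ x ^ 4 := pow_le_pow_right₀ hx1 (by norm_num)
      linarith
    have h4 := hG.lb
    rw [div_lt_iff₀ hl0] at h4
    by_contra h
    rw [not_lt] at h
    have : x < x := by
      calc x < n * l := h4
        _ ≤ (T * rgPart y n) * l := by gcongr
        _ ≤ (T * D) * l := by gcongr
        _ = r * l ^ 2 * T := by rw [hD]; ring
        _ ≤ x := h3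
    exact lt_irrefl _ this
  choose! A hA using hex
  have hn0 : ∀ n ∈ S, n ≠ 0 := fun n hn => by have := hn2 n hn; omega
  have hAmul : ∀ n ∈ S, A n * (n / A n) = n := fun n hn => Nat.mul_div_cancel' (hA n hn).1
  have hApos : ∀ n ∈ S, 0 < A n := fun n hn => by
    have := (hA n hn).2.1
    have : (0 : ℝ) < A n := by linarith
    exact_mod_cast this
  have hprop : ∀ n ∈ S, Squarefree (A n) ∧ Nat.Coprime (A n) (n / A n) ∧ ¬ 2 ∣ A n := fun n hn =>
    a_props hw hwy hy2 (hS n hn).1 (hA n hn).1 (hA n hn).2.2.1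
  have hbpos : ∀ n ∈ S, 0 < n / A n := fun n hn =>
    Nat.div_pos (Nat.le_of_dvd (Nat.pos_of_ne_zero (hn0 n hn)) (hA n hn).1) (hApos n hn)
  have hgcd : ∀ n ∈ S, (Nat.gcd (n / A n) (sigma1 (n / A n)) : ℝ) ≤ T := fun n hn =>
    gcd_le hwy (hn0 n hn) (hS n hn).1 (hAmul n hn).symm (hprop n hn).2.1
  have hAs : ∀ n ∈ S, (s (A n) : ℝ) ≤ 4 * l ^ 2 * D := by
    intro n hn
    apply s_bound (hApos n hn) (by linarith) _ hD0.le (hA n hn).2.2.2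
    rw [← hlog]
    apply Real.log_le_log (by exact_mod_cast hApos n hn)
    refine le_trans ?_ (hS n hn).1.ub
    exact_mod_cast Nat.le_of_dvd (Nat.pos_of_ne_zero (hn0 n hn)) (hA n hn).1
  set N := ⌊x / D⌋₊ with hN
  have hNle : (N : ℝ) ≤ x / D := Nat.floor_le (by positivity)
  have hmem : ∀ n ∈ S, n / A n ∈ Finset.Icc 1 N := by
    intro n hn
    rw [Finset.mem_Icc]
    refine ⟨hbpos n hn, Nat.le_floor ?_⟩
    rw [le_div_iff₀ hD0]
    have h1 : ((A n : ℕ) : ℝ) * ((n / A n : ℕ) : ℝ) = n := by exact_mod_cast hAmul n hn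
    have h2 := (hA n hn).2.1
    have h3 := (hS n hn).1.ub
    have h4 : (0 : ℝ) ≤ ((n / A n : ℕ) : ℝ) := by positivity
    nlinarith
  set S1 := S.filter (fun n => (A n).Prime) with hS1
  set S2 := S.filter (fun n => ¬ (A n).Prime) with hS2
  have hsplit : S1.card + S2.card = S.card := Finset.card_filter_add_card_filter_not _
  have hc2 : S2.card ≤ (Finset.Icc 1 N).card := by
    apply Finset.card_le_card_of_injOn (fun n => n / A n)
    · intro n hn
      exact hmem n (Finset.mem_filter.1 hn).1
    · intro n hn n' hn' hb
      obtain ⟨hn, hnp⟩ := Finset.mem_filter.1 hn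
      obtain ⟨hn', hnp'⟩ := Finset.mem_filter.1 hn'
      have hb' : n / A n = n' / A n' := hb
      have hA2 : ∀ n ∈ S, 2 ≤ A n := fun n hn => by
        have := (hA n hn).2.1
        have : (1 : ℝ) < A n := by linarith
        exact_mod_cast this
      have : A n = A n' := by
        apply class2_inj (b := n / A n) (d := d) (hbpos n hn) hl hT hr4 hrT (hprop n hn).2.1
          (by rw [hb']; exact (hprop n' hn').2.1)
          (by rw [hAmul n hn]; exact (hS n hn).2)
          (by rw [hb', hAmul n' hn']; exact (hS n' hn').2) (hgcd n hn)
          (hprop n hn).1 (hprop n' hn').1 (hprop n hn).2.2 (hprop n' hn').2.2 (hAs n hn)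
          (hAs n' hn') (nonprime_le_sq (hA2 n hn) hnp hD0.le (hA n hn).2.2.2)
          (nonprime_le_sq (hA2 n' hn') hnp' hD0.le (hA n' hn').2.2.2)
      rw [← hAmul n hn, ← hAmul n' hn', this, ← hb', this]
  have hc1 : (S1.card : ℝ) ≤ ∑ b ∈ Finset.Icc 1 N, (1 + x * T / d * (b : ℝ)⁻¹) := by
    have e : S1.card = ∑ b ∈ Finset.Icc 1 N, (S1.filter (fun n => n / A n = b)).card :=
      Finset.card_eq_sum_card_fiberwise (fun n hn => hmem n (Finset.mem_filter.1 hn).1)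
    rw [e]
    push_cast
    apply Finset.sum_le_sum
    intro b hb
    have hbp : 0 < b := (Finset.mem_Icc.1 hb).1
    rcases Finset.eq_empty_or_nonempty (S1.filter (fun n => n / A n = b)) with h0 | ⟨n0, hn0'⟩
    · rw [h0]; simp; positivity
    have hcardeq : (S1.filter (fun n => n / A n = b)).card
        = ((S1.filter (fun n => n / A n = b)).image A).card := by
      rw [Finset.card_image_of_injOn]
      intro n hn n' hn' hEq
      obtain ⟨hn, h1⟩ := Finset.mem_filter.1 hn
      obtain ⟨hn', h1'⟩ := Finset.mem_filter.1 hn'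
      have hn := (Finset.mem_filter.1 hn).1
      have hn' := (Finset.mem_filter.1 hn').1
      rw [← hAmul n hn, ← hAmul n' hn', h1, h1', hEq]
    rw [hcardeq]
    apply class1_count hbp hd0 hx0.le
    · obtain ⟨h1, h2⟩ := Finset.mem_filter.1 hn0'
      rw [← h2]
      exact hgcd n0 (Finset.mem_filter.1 h1).1
    · intro p hp
      obtain ⟨n, hn, rfl⟩ := Finset.mem_image.1 hp
      obtain ⟨h1, h2⟩ := Finset.mem_filter.1 hn
      obtain ⟨h3, h4⟩ := Finset.mem_filter.1 h1
      have h5 := hAmul n h3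
      have h6 := (hprop n h3).2.1
      rw [h2] at h5 h6
      refine ⟨h4, h6, ?_, ?_⟩
      · rw [h5]; exact (hS n h3).2
      · rw [h5]; exact (hS n h3).1.ub
  have hsum : ∑ b ∈ Finset.Icc 1 N, (1 + x * T / d * (b : ℝ)⁻¹) ≤ N + x * T / d * (1 + l) := by
    rw [Finset.sum_add_distrib, ← Finset.mul_sum]
    have e1 : ∑ b ∈ Finset.Icc 1 N, (b : ℝ)⁻¹ = (harmonic N : ℝ) := by
      rw [harmonic_eq_sum_Icc]; push_cast; rfl
    have e2 := harmonic_le_one_add_log N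
    have e3 : Real.log N ≤ l := by
      rcases Nat.eq_zero_or_pos N with h | h
      · rw [h]; simp; linarith
      · rw [← hlog]
        apply Real.log_le_log (by exact_mod_cast h)
        exact hNle.trans (div_le_self hx0.le hD1)
    rw [e1]
    have e4 : (harmonic N : ℝ) ≤ 1 + l := by linarith
    have e5 : ∑ b ∈ Finset.Icc 1 N, (1 : ℝ) = N := by simp
    rw [e5]
    gcongr
  have hc2' : (S2.card : ℝ) ≤ N := by
    rw [Nat.card_Icc] at hc2
    exact_mod_cast hc2
  have hfin : x * T / d * (1 + l) ≤ x / D := by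
    rw [← hr4, div_mul_eq_mul_div, div_le_div_iff₀ (by positivity) hD0, hD]
    have : T * (1 + l) * l ≤ r ^ 3 := by
      calc T * (1 + l) * l = T * ((1 + l) * l) := by ring
        _ ≤ T * T := by gcongr; nlinarith
        _ ≤ r := by nlinarith
        _ = r ^ 1 := by ring
        _ ≤ r ^ 3 := pow_le_pow_right₀ hr1 (by norm_num)
    calc x * T * (1 + l) * (r * l) = x * r * (T * (1 + l) * l) := by ring
      _ ≤ x * r * r ^ 3 := by gcongr
      _ = x * r ^ 4 := by ring
  have htot : (S.card : ℝ) = S1.card + S2.card := by exact_mod_cast hsplit.symm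
  have : 3 * x / D = 3 * (x / D) := by ring
  rw [this]
  linarith

theorem card_mult_le (N k : ℕ) {x : ℝ} (hN : (N : ℝ) ≤ x) :
    (((Finset.Icc 1 N).filter (fun n => k ∣ n)).card : ℝ) ≤ x / k := by
  have h : (Finset.Icc 1 N).filter (fun n => k ∣ n) = (Finset.Ioc 0 N).filter (fun n => k ∣ n) := by
    ext n; simp only [Finset.mem_filter, Finset.mem_Icc, Finset.mem_Ioc]
    rfl
  have h2 : ((Finset.Icc 1 N).filter (fun n => k ∣ n)).card = N / k := by
    rw [h]; convert Nat.Ioc_filter_dvd_card_eq_div N k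
  rw [h2]
  refine Nat.cast_div_le.trans ?_
  gcongr

theorem tail_sq (M N : ℕ) (hM : M ≠ 0) :
    ∑ i ∈ Finset.Ioc M N, ((i : ℝ) ^ 2)⁻¹ ≤ (M : ℝ)⁻¹ := by
  rcases le_total M N with h | h
  · have := sum_Ioc_inv_sq_le_sub (α := ℝ) hM h
    have h2 : (0 : ℝ) ≤ (N : ℝ)⁻¹ := by positivity
    linarith
  · rw [Finset.Ioc_eq_empty (by omega)]; simp

theorem floor_inv {w : ℝ} (hw : 1 ≤ w) : ((⌊w⌋₊ : ℕ) : ℝ)⁻¹ ≤ 2 / w := by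
  have h1 : 1 ≤ ⌊w⌋₊ := Nat.one_le_floor_iff w |>.2 hw
  have h1' : (1 : ℝ) ≤ (⌊w⌋₊ : ℝ) := by exact_mod_cast h1
  have h2 := Nat.lt_floor_add_one w
  rw [inv_eq_one_div, div_le_div_iff₀ (by linarith) (by linarith)]
  linarith

theorem count_sq {x w : ℝ} (N : ℕ) (hN : (N : ℝ) ≤ x) (hw : 1 ≤ w) :
    (((Finset.Icc 1 N).filter (fun n => ∃ m : ℕ, m ^ 2 ∣ n ∧ w < m)).card : ℝ) ≤ x * (2 / w) := by
  have hx : 0 ≤ x := le_trans (by positivity) hN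
  have hsub : (Finset.Icc 1 N).filter (fun n => ∃ m : ℕ, m ^ 2 ∣ n ∧ w < m) ⊆
      (Finset.Ioc ⌊w⌋₊ N).biUnion (fun m => (Finset.Icc 1 N).filter (fun n => m ^ 2 ∣ n)) := by
    intro n hn
    rw [Finset.mem_filter] at hn
    obtain ⟨hn, m, hm, hwm⟩ := hn
    rw [Finset.mem_biUnion]
    refine ⟨m, ?_, Finset.mem_filter.2 ⟨hn, hm⟩⟩
    rw [Finset.mem_Icc] at hn
    rw [Finset.mem_Ioc]
    refine ⟨(Nat.floor_lt (by linarith)).2 hwm, ?_⟩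
    have := Nat.le_of_dvd (by omega) hm
    nlinarith
  have h1 := (Finset.card_le_card hsub).trans Finset.card_biUnion_le
  have h2 : (((Finset.Icc 1 N).filter (fun n => ∃ m : ℕ, m ^ 2 ∣ n ∧ w < m)).card : ℝ) ≤
      ∑ m ∈ Finset.Ioc ⌊w⌋₊ N, (((Finset.Icc 1 N).filter (fun n => m ^ 2 ∣ n)).card : ℝ) := by
    exact_mod_cast h1
  refine h2.trans ?_
  calc _ ≤ ∑ m ∈ Finset.Ioc ⌊w⌋₊ N, x * ((m : ℝ) ^ 2)⁻¹ := by
        apply Finset.sum_le_sum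
        intro m _
        have := card_mult_le N (m ^ 2) hN
        rw [← div_eq_mul_inv]
        exact_mod_cast this
    _ = x * ∑ m ∈ Finset.Ioc ⌊w⌋₊ N, ((m : ℝ) ^ 2)⁻¹ := by rw [Finset.mul_sum]
    _ ≤ x * (2 / w) := by
        gcongr
        refine (tail_sq _ _ ?_).trans (floor_inv hw)
        have : 1 ≤ ⌊w⌋₊ := Nat.one_le_floor_iff w |>.2 hw
        omega

theorem count_pq {x y l : ℝ} (N : ℕ) (hN : (N : ℝ) ≤ x) (hy : 1 ≤ y) (hx : 1 ≤ x)
    (hl : Real.log x = l) :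
    (((Finset.Icc 1 N).filter (fun n => ∃ p q : ℕ, p.Prime ∧ q.Prime ∧ y < p ∧ p ∣ n ∧ q ∣ n ∧
      p ∣ q + 1)).card : ℝ) ≤ x * (4 * (1 + l) / y) := by
  set F := (Finset.Icc 1 N).filter (fun n => ∃ p q : ℕ, p.Prime ∧ q.Prime ∧ y < p ∧ p ∣ n ∧ q ∣ n ∧
      p ∣ q + 1) with hF
  have hl0 : 0 ≤ l := by rw [← hl]; exact Real.log_nonneg hx
  have hsub : F ⊆ (Finset.Ioc ⌊y⌋₊ N ×ˢ Finset.Icc 1 N).biUnion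
      (fun z => (Finset.Icc 1 N).filter (fun n => z.1 * (z.2 * z.1 - 1) ∣ n)) := by
    intro n hn
    rw [hF, Finset.mem_filter] at hn
    obtain ⟨hn, p, q, hp, hq, hyp, hpn, hqn, k, hk⟩ := hn
    have hn' := Finset.mem_Icc.1 hn
    rw [Finset.mem_biUnion]
    have hpq : p ≠ q := by
      rintro rfl
      have : p ∣ 1 := (Nat.dvd_add_right (dvd_refl p)).1 ⟨k, hk⟩
      exact hp.one_lt.ne' (Nat.dvd_one.1 this)
    have hpN := Nat.le_of_dvd (by omega) hpn
    have hqN := Nat.le_of_dvd (by omega) hqn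
    have hk1 : 1 ≤ k := by
      rcases Nat.eq_zero_or_pos k with rfl | h
      · simp at hk
      · exact h
    refine ⟨(p, k), ?_, Finset.mem_filter.2 ⟨hn, ?_⟩⟩
    · rw [Finset.mem_product, Finset.mem_Ioc, Finset.mem_Icc]
      refine ⟨⟨(Nat.floor_lt (by linarith)).2 hyp, by simp only; omega⟩, hk1, ?_⟩
      have := hp.two_le
      have := hq.two_le
      simp only
      nlinarith
    · have : k * p - 1 = q := by rw [mul_comm k p, ← hk]; simp
      simp only [this]
      exact Nat.Coprime.mul_dvd_of_dvd_of_dvd ((Nat.coprime_primes hp hq).2 hpq) hpn hqn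
  have h1 := (Finset.card_le_card hsub).trans Finset.card_biUnion_le
  have h2 : (F.card : ℝ) ≤ ∑ z ∈ Finset.Ioc ⌊y⌋₊ N ×ˢ Finset.Icc 1 N,
      (((Finset.Icc 1 N).filter (fun n => z.1 * (z.2 * z.1 - 1) ∣ n)).card : ℝ) := by
    exact_mod_cast h1
  refine h2.trans ?_
  have hfl : 1 ≤ ⌊y⌋₊ := Nat.one_le_floor_iff y |>.2 hy
  calc _ ≤ ∑ z ∈ Finset.Ioc ⌊y⌋₊ N ×ˢ Finset.Icc 1 N,
        2 * x * (((z.1 : ℝ) ^ 2)⁻¹ * (z.2 : ℝ)⁻¹) := by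
        apply Finset.sum_le_sum
        rintro ⟨p, k⟩ hz
        rw [Finset.mem_product, Finset.mem_Ioc, Finset.mem_Icc] at hz
        simp only at hz ⊢
        have hp2 : 2 ≤ p := by omega
        have hkp : 2 ≤ k * p := by nlinarith
        refine (card_mult_le N (p * (k * p - 1)) hN).trans ?_
        have hpR : (2 : ℝ) ≤ p := by exact_mod_cast hp2
        have hkR : (1 : ℝ) ≤ k := by exact_mod_cast hz.2.1
        have hc : ((p * (k * p - 1) : ℕ) : ℝ) = p * (k * p - 1) := by
          rw [Nat.cast_mul, Nat.cast_sub (by omega)]; push_cast; ring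
        rw [hc, ← mul_inv, ← div_eq_mul_inv]
        have hkpR : (2 : ℝ) ≤ k * p := by exact_mod_cast hkp
        rw [div_le_div_iff₀ (by nlinarith) (by positivity)]
        have : (p : ℝ) ^ 2 * k ≤ 2 * (p * (k * p - 1)) := by nlinarith
        nlinarith
    _ = 2 * x * ((∑ p ∈ Finset.Ioc ⌊y⌋₊ N, ((p : ℝ) ^ 2)⁻¹) * ∑ k ∈ Finset.Icc 1 N, (k : ℝ)⁻¹) := by
        rw [← Finset.mul_sum, Finset.sum_mul_sum, Finset.sum_product]
    _ ≤ 2 * x * ((2 / y) * (1 + l)) := by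
        have e1 : ∑ b ∈ Finset.Icc 1 N, (b : ℝ)⁻¹ = (harmonic N : ℝ) := by
          rw [harmonic_eq_sum_Icc]; push_cast; rfl
        have e2 := harmonic_le_one_add_log N
        have e3 : Real.log N ≤ l := by
          rcases Nat.eq_zero_or_pos N with h | h
          · rw [h]; simpa using hl0
          · rw [← hl]
            exact Real.log_le_log (by exact_mod_cast h) hN
        rw [e1]
        have e4 : (harmonic N : ℝ) ≤ 1 + l := by linarith
        have e5 := (tail_sq ⌊y⌋₊ N (by omega)).trans (floor_inv hy)
        have e6 : (0:ℝ) ≤ harmonic N := by rw [← e1]; positivity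
        gcongr
    _ = _ := by ring

theorem sum_factorization (N p : ℕ) :
    ∑ n ∈ Finset.Icc 1 N, n.factorization p = (N.factorial).factorization p := by
  induction N with
  | zero => simp
  | succ N ih =>
    rw [Finset.sum_Icc_succ_top (by omega), ih, Nat.factorial_succ,
      Nat.factorization_mul (by omega) (Nat.factorial_ne_zero N)]
    simp [add_comm]

theorem log_smPart_le {y : ℝ} (n : ℕ) : Real.log (smPart y n) ≤
    ∑ p ∈ (Finset.Icc 1 ⌊y⌋₊).filter Nat.Prime, (n.factorization p : ℝ) * Real.log p := by
  unfold smPart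
  rw [Nat.cast_prod, Real.log_prod]
  · have : ∀ p ∈ n.primeFactors.filter (fun p : ℕ => (p : ℝ) ≤ y),
        Real.log ((p ^ n.factorization p : ℕ) : ℝ) = (n.factorization p : ℝ) * Real.log p := by
      intro p _
      push_cast
      rw [Real.log_pow]
    rw [Finset.sum_congr rfl this]
    apply Finset.sum_le_sum_of_subset_of_nonneg
    · intro p hp
      rw [Finset.mem_filter, Nat.mem_primeFactors] at hp
      rw [Finset.mem_filter, Finset.mem_Icc]
      exact ⟨⟨hp.1.1.pos, Nat.le_floor hp.2⟩, hp.1.1⟩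
    · intro p _ _
      have := Real.log_natCast_nonneg p
      positivity
  · intro p hp
    rw [Finset.mem_filter, Nat.mem_primeFactors] at hp
    have := hp.1.1.pos
    positivity

theorem sum_log_sm {x y : ℝ} (N : ℕ) (hN : (N : ℝ) ≤ x) (hy : 1 ≤ y) :
    ∑ n ∈ Finset.Icc 1 N, Real.log (smPart y n) ≤ x * (2 * Real.log y * (1 + Real.log y)) := by
  have hx : 0 ≤ x := le_trans (by positivity) hN
  have hly : 0 ≤ Real.log y := Real.log_nonneg hy
  calc _ ≤ ∑ n ∈ Finset.Icc 1 N, ∑ p ∈ (Finset.Icc 1 ⌊y⌋₊).filter Nat.Prime,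
        (n.factorization p : ℝ) * Real.log p := Finset.sum_le_sum fun n _ => log_smPart_le n
    _ = ∑ p ∈ (Finset.Icc 1 ⌊y⌋₊).filter Nat.Prime,
        ((N.factorial).factorization p : ℝ) * Real.log p := by
        rw [Finset.sum_comm]
        apply Finset.sum_congr rfl
        intro p _
        rw [← Finset.sum_mul, ← sum_factorization]
        push_cast; rfl
    _ ≤ ∑ p ∈ (Finset.Icc 1 ⌊y⌋₊).filter Nat.Prime, x * (2 * Real.log y) * (p : ℝ)⁻¹ := by
        apply Finset.sum_le_sum
        intro p hp
        rw [Finset.mem_filter, Finset.mem_Icc] at hp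
        have hp2 : (2 : ℝ) ≤ p := by exact_mod_cast hp.2.two_le
        have h1 : ((N.factorial).factorization p : ℝ) ≤ x / ((p : ℝ) - 1) := by
          have := Nat.factorization_factorial_le_div_pred hp.2 N
          have h : ((N.factorial).factorization p : ℝ) ≤ ((N / (p - 1) : ℕ) : ℝ) := by
            exact_mod_cast this
          refine h.trans (Nat.cast_div_le.trans ?_)
          rw [Nat.cast_sub hp.2.pos]
          push_cast
          have : (0 : ℝ) < (p : ℝ) - 1 := by linarith
          gcongr
        have h2 : x / ((p : ℝ) - 1) ≤ x * 2 * (p : ℝ)⁻¹ := by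
          rw [← div_eq_mul_inv, div_le_div_iff₀ (by linarith) (by linarith)]
          nlinarith
        have h3 : Real.log p ≤ Real.log y := by
          apply Real.log_le_log (by linarith)
          exact (Nat.le_floor_iff (by linarith)).1 hp.1.2
        have h4 := Real.log_natCast_nonneg p
        calc _ ≤ (x * 2 * (p : ℝ)⁻¹) * Real.log y := by
              apply mul_le_mul (h1.trans h2) h3 h4; positivity
          _ = _ := by ring
    _ ≤ ∑ p ∈ (Finset.Icc 1 ⌊y⌋₊), x * (2 * Real.log y) * (p : ℝ)⁻¹ := by
        apply Finset.sum_le_sum_of_subset_of_nonneg (Finset.filter_subset _ _)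
        intros; positivity
    _ = x * (2 * Real.log y) * (harmonic ⌊y⌋₊ : ℝ) := by
        rw [← Finset.mul_sum, harmonic_eq_sum_Icc]; push_cast; rfl
    _ ≤ x * (2 * Real.log y) * (1 + Real.log y) := by
        gcongr
        refine (harmonic_le_one_add_log _).trans ?_
        gcongr
        · have : 1 ≤ ⌊y⌋₊ := Nat.one_le_floor_iff y |>.2 hy
          exact_mod_cast this
        · exact Nat.floor_le (by linarith)
    _ = _ := by ring

theorem count_sm {x y t : ℝ} (N : ℕ) (hN : (N : ℝ) ≤ x) (hy : 1 ≤ y) (ht : 0 < t) :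
    (((Finset.Icc 1 N).filter (fun n => Real.exp t < smPart y n)).card : ℝ) ≤
      x * (2 * Real.log y * (1 + Real.log y) / t) := by
  set F := (Finset.Icc 1 N).filter (fun n => Real.exp t < smPart y n) with hF
  have h1 : (F.card : ℝ) * t ≤ ∑ n ∈ F, Real.log (smPart y n) := by
    rw [← nsmul_eq_mul]
    apply Finset.card_nsmul_le_sum
    intro n hn
    rw [hF, Finset.mem_filter] at hn
    have := Real.log_le_log (Real.exp_pos t) hn.2.le
    rwa [Real.log_exp] at this
  have h2 : ∑ n ∈ F, Real.log (smPart y n) ≤ ∑ n ∈ Finset.Icc 1 N, Real.log (smPart y n) := by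
    apply Finset.sum_le_sum_of_subset_of_nonneg (Finset.filter_subset _ _)
    intros; exact Real.log_natCast_nonneg _
  have h3 := sum_log_sm N hN hy
  rw [← mul_div_assoc, le_div_iff₀ ht]
  linarith

theorem count_bad {x l w y t : ℝ} (hx : 1 ≤ x) (hl : Real.log x = l) (hl1 : 1 ≤ l) (hw : 1 ≤ w)
    (hy : 1 ≤ y) (ht : 0 < t) :
    (((Finset.Icc 1 ⌊x⌋₊).filter (fun n => ¬ Good x l w y (Real.exp t) n)).card : ℝ) ≤
      x * (1 / l + 2 / w + 4 * (1 + l) / y + 2 * Real.log y * (1 + Real.log y) / t) := by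
  set N := ⌊x⌋₊ with hNdef
  have hN : (N : ℝ) ≤ x := Nat.floor_le (by linarith)
  have hsub : (Finset.Icc 1 N).filter (fun n => ¬ Good x l w y (Real.exp t) n) ⊆
      (Finset.Icc 1 ⌊x / l⌋₊ ∪ (Finset.Icc 1 N).filter (fun n => ∃ m : ℕ, m ^ 2 ∣ n ∧ w < m)) ∪
      ((Finset.Icc 1 N).filter (fun n => ∃ p q : ℕ, p.Prime ∧ q.Prime ∧ y < p ∧ p ∣ n ∧ q ∣ n ∧
      p ∣ q + 1) ∪ (Finset.Icc 1 N).filter (fun n => Real.exp t < smPart y n)) := by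
    intro n hn
    rw [Finset.mem_filter] at hn
    obtain ⟨hn, hG⟩ := hn
    by_contra hcon
    simp only [Finset.mem_union, Finset.mem_filter, hn, true_and, not_or] at hcon
    obtain ⟨⟨h1, h2⟩, h3, h4⟩ := hcon
    have hn' := Finset.mem_Icc.1 hn
    apply hG
    refine ⟨?_, ?_, ?_, ?_, ?_⟩
    · by_contra h
      rw [not_lt] at h
      exact h1 (Finset.mem_Icc.2 ⟨hn'.1, Nat.le_floor h⟩)
    · exact le_trans (by exact_mod_cast hn'.2) hN
    · intro m hm
      by_contra h
      exact h2 ⟨m, hm, not_le.1 h⟩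
    · intro p q hp hq hy' hpn hqn hd
      exact h3 ⟨p, q, hp, hq, hy', hpn, hqn, hd⟩
    · exact not_lt.1 h4
  have h1 := (Finset.card_le_card hsub).trans ((Finset.card_union_le _ _).trans
    (add_le_add (Finset.card_union_le _ _) (Finset.card_union_le _ _)))
  have h2 := (Nat.cast_le (α := ℝ)).2 h1
  simp only [Nat.cast_add] at h2
  have c1 : ((Finset.Icc 1 ⌊x / l⌋₊).card : ℝ) ≤ x * (1 / l) := by
    rw [Nat.card_Icc, Nat.add_sub_cancel, mul_one_div]
    exact Nat.floor_le (by positivity)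
  have c2 := count_sq N hN hw
  have c3 := count_pq N hN hy hx hl
  have c4 := count_sm N hN hy ht
  calc _ ≤ _ := h2
    _ ≤ _ := add_le_add (add_le_add c1 c2) (add_le_add c3 c4)
    _ = _ := by ring

theorem bad_tendsto : Tendsto (fun l : ℝ => 1 / l + 2 / l ^ ((1 : ℝ) / 3) + 4 * (1 + l) / l ^ 2
    + 2 * Real.log (l ^ 2) * (1 + Real.log (l ^ 2)) / (l / (16 * Real.log (Real.log l))))
    atTop (nhds 0) := by
  have t1 : Tendsto (fun l : ℝ => 1 / l) atTop (nhds 0) := by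
    simpa using tendsto_inv_atTop_zero (𝕜 := ℝ)
  have t2 : Tendsto (fun l : ℝ => 2 / l ^ ((1 : ℝ) / 3)) atTop (nhds 0) :=
    (tendsto_rpow_atTop (by norm_num)).const_div_atTop 2
  have t3 : Tendsto (fun l : ℝ => 4 * (1 + l) / l ^ 2) atTop (nhds 0) := by
    have h : Tendsto (fun l : ℝ => 4 * (1 / l) * (1 / l) + 4 * (1 / l)) atTop
        (nhds (4 * 0 * 0 + 4 * 0)) := ((t1.const_mul 4).mul t1).add (t1.const_mul 4)
    simp only [mul_zero, add_zero] at h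
    refine h.congr' ?_
    filter_upwards [eventually_gt_atTop 0] with l hl
    field_simp
  have hlog3 : Tendsto (fun l : ℝ => Real.log l ^ 3 / l) atTop (nhds 0) := by
    have := (Real.isLittleO_pow_log_id_atTop (n := 3)).tendsto_div_nhds_zero
    simpa using this
  have t4 : Tendsto (fun l : ℝ => 2 * Real.log (l ^ 2) * (1 + Real.log (l ^ 2)) /
      (l / (16 * Real.log (Real.log l)))) atTop (nhds 0) := by
    have hup : Tendsto (fun l : ℝ => 192 * (Real.log l ^ 3 / l)) atTop (nhds 0) := by
      simpa using hlog3.const_mul 192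
    have ev1 : ∀ᶠ l : ℝ in atTop, 1 ≤ Real.log l := Real.tendsto_log_atTop.eventually_ge_atTop 1
    refine tendsto_of_tendsto_of_tendsto_of_le_of_le' tendsto_const_nhds hup ?_ ?_
    · filter_upwards [ev1, eventually_gt_atTop 0] with l h1 h0
      have := Real.log_nonneg h1
      rw [Real.log_pow]
      positivity
    · filter_upwards [ev1, eventually_gt_atTop 0] with l h1 h0
      have h2 := Real.log_nonneg h1
      have h3 : Real.log (Real.log l) ≤ Real.log l := Real.log_le_self (by linarith)
      rw [Real.log_pow]
      push_cast
      rw [div_div_eq_mul_div, ← mul_div_assoc]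
      apply div_le_div_of_nonneg_right _ h0.le
      calc 2 * (2 * Real.log l) * (1 + 2 * Real.log l) * (16 * Real.log (Real.log l))
          ≤ 2 * (2 * Real.log l) * (Real.log l + 2 * Real.log l) * (16 * Real.log l) := by gcongr
        _ = _ := by ring
  simpa using ((t1.add t2).add t3).add t4

theorem ev_conditions : ∀ᶠ l : ℝ in atTop, 100 ≤ l ∧ 1 ≤ Real.log (Real.log l) ∧
    l ^ 10 ≤ Real.exp (l / (16 * Real.log (Real.log l))) := by
  have e1 : ∀ᶠ l : ℝ in atTop, 1 ≤ Real.log (Real.log l) :=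
    (Real.tendsto_log_atTop.comp Real.tendsto_log_atTop).eventually_ge_atTop 1
  have hlog2 : Tendsto (fun l : ℝ => Real.log l ^ 2 / l) atTop (nhds 0) := by
    have := (Real.isLittleO_pow_log_id_atTop (n := 2)).tendsto_div_nhds_zero
    simpa using this
  have e2 : ∀ᶠ l : ℝ in atTop, Real.log l ^ 2 / l < 1 / 160 :=
    hlog2.eventually_lt_const (by norm_num)
  have e3 : ∀ᶠ l : ℝ in atTop, 1 ≤ Real.log l := Real.tendsto_log_atTop.eventually_ge_atTop 1
  filter_upwards [e1, e2, e3, eventually_ge_atTop 100] with l h1 h2 h3 h4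
  refine ⟨h4, h1, ?_⟩
  have hl0 : 0 < l := by linarith
  have h5 : Real.log (Real.log l) ≤ Real.log l := Real.log_le_self (by linarith)
  rw [div_lt_div_iff₀ hl0 (by norm_num)] at h2
  have h6 : l ^ 10 = Real.exp (10 * Real.log l) := by
    rw [mul_comm, Real.exp_mul, Real.exp_log hl0]
    norm_cast
  rw [h6]
  apply Real.exp_le_exp.2
  rw [le_div_iff₀ (by linarith)]
  nlinarith

theorem div_s_count_bound_large_d :
    ∃ C : ℝ, 0 < C ∧ ∃ x₀ : ℝ, ∃ E : ℝ → Finset ℕ,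
      (∀ x : ℝ, x₀ ≤ x → ∀ n ∈ E x, 1 ≤ n ∧ (n : ℝ) ≤ x) ∧
      (fun x : ℝ => ((E x).card : ℝ)) =o[atTop] (fun x : ℝ => x) ∧
      ∀ x : ℝ, x₀ ≤ x → ∀ d : ℕ, 0 < d →
        x ^ (1 / (2 * Real.log (Real.log (Real.log x)))) < (d : ℝ) →
        (∀ p : ℕ, p.Prime → p ∣ d → Real.log (Real.log x) < (p : ℝ)) →
        (((Finset.Icc 1 ⌊x⌋₊).filter (fun n => n ∉ E x ∧ d ∣ s n)).card : ℝ)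
          ≤ C * x / ((d : ℝ) ^ ((1 : ℝ) / 4) * Real.log x) := by
  obtain ⟨x₁, hx₁⟩ := Filter.eventually_atTop.1
    ((Real.tendsto_log_atTop.eventually ev_conditions).and (eventually_ge_atTop (1 : ℝ)))
  refine ⟨3, by norm_num, x₁, fun x => (Finset.Icc 1 ⌊x⌋₊).filter (fun n => ¬ Good x (Real.log x)
    (Real.log x ^ ((1 : ℝ) / 3)) (Real.log x ^ 2)
    (Real.exp (Real.log x / (16 * Real.log (Real.log (Real.log x))))) n), ?_, ?_, ?_⟩
  · intro x hx n hn
    have hx1 := (hx₁ x hx).2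
    have := Finset.mem_Icc.1 (Finset.mem_filter.1 hn).1
    exact ⟨this.1, (Nat.le_floor_iff (by linarith)).1 this.2⟩
  · rw [Asymptotics.isLittleO_iff]
    intro c hc
    have hF := (bad_tendsto.comp Real.tendsto_log_atTop).eventually_lt_const hc
    filter_upwards [hF, eventually_ge_atTop x₁] with x hFx hx
    obtain ⟨⟨h100, hlll, _⟩, hx1⟩ := hx₁ x hx
    simp only [Function.comp] at hFx
    rw [Real.norm_natCast, Real.norm_of_nonneg (by linarith)]
    refine (count_bad hx1 rfl (by linarith) (Real.one_le_rpow (by linarith) (by norm_num))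
      (one_le_pow₀ (by linarith)) (by positivity)).trans ?_
    rw [mul_comm]
    gcongr
  · intro x hx d hd0 hd _
    obtain ⟨⟨h100, hlll, hT⟩, hx1⟩ := hx₁ x hx
    set l := Real.log x with hl
    have hx0 : 0 < x := by linarith
    have hl0 : 0 < l := by linarith
    have hdR : (0 : ℝ) < d := by exact_mod_cast hd0
    apply core (w := l ^ ((1 : ℝ) / 3)) (y := l ^ 2) (d := d)
      (T := Real.exp (l / (16 * Real.log (Real.log l)))) rfl h100
      (Real.one_le_rpow (by linarith) (by norm_num)) _ (by nlinarith) hT _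
      (Real.rpow_pos_of_pos hdR _) _ _ _ _
    · rw [← Real.rpow_natCast, ← Real.rpow_mul hl0.le, ← Real.rpow_natCast]
      norm_num
    · rw [← Real.exp_nat_mul]
      conv_rhs => rw [← Real.exp_log hx0]
      apply Real.exp_le_exp.2
      have : ((16 : ℕ) : ℝ) * (l / (16 * Real.log (Real.log l))) = l / Real.log (Real.log l) := by
        push_cast; field_simp
      rw [this]
      exact div_le_self hl0.le hlll
    · rw [← Real.rpow_natCast, ← Real.rpow_mul hdR.le]
      norm_num
    · rw [← Real.exp_nat_mul]
      refine lt_of_eq_of_lt ?_ hd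
      rw [Real.rpow_def_of_pos hx0, ← hl]
      congr 1
      push_cast; field_simp; norm_num
    · intro n hn
      rw [Finset.mem_filter, Finset.mem_filter] at hn
      obtain ⟨h1, h2, h3⟩ := hn
      refine ⟨?_, h3⟩
      by_contra hG
      exact h2 ⟨h1, hG⟩
end

section
/- Fix ε > 0. Then as x → ∞, the number of integers n with 1 ≤ n ≤ x for which there exists a positive integer d ≤ (log log x)^{1−ε} with d ∤ σ(n) is o(x). (That is, almost always σ(n) is divisible by every positive integer d ≤ (log log x)^{1−ε}.) -/
open scoped Classical
open Filter Finset

theorem sds_hasSum_congr {f g : ℕ → ℂ} {a : ℂ} (h : ∀ i, f i = g i) :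
    HasSum f a ↔ HasSum g a := by
  rw [show f = g from funext h]

theorem sds_tv_bound (a : ℕ → ℂ) (f v : ℕ → ℝ) (D : ℝ)
    (hD : ∀ n, ‖∑ i ∈ range n, a i‖ ≤ D) (hf : Tendsto f atTop (nhds 0))
    (hv : ∀ i, |f i - f (i + 1)| ≤ v i) (hs : Summable v) {S : ℂ}
    (hS : HasSum (fun i => a i * (f i : ℂ)) S) : ‖S‖ ≤ D * ∑' i, v i := by
  have hD0 : 0 ≤ D := le_trans (norm_nonneg _) (hD 0)
  have hv0 : ∀ i, 0 ≤ v i := fun i => le_trans (abs_nonneg _) (hv i)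
  have h1 : ∀ n, ‖∑ i ∈ range (n + 1), a i * (f i : ℂ)‖ ≤ D * |f n| + D * ∑' i, v i := by
    intro n
    have h2 : ∑ i ∈ range (n + 1), a i * (f i : ℂ)
        = (f n : ℂ) * ∑ i ∈ range (n + 1), a i
          + ∑ i ∈ range n, ((f i - f (i + 1) : ℝ) : ℂ) * ∑ j ∈ range (i + 1), a j := by
      induction n with
      | zero => simp [mul_comm]
      | succ n ih =>
        rw [Finset.sum_range_succ, ih, Finset.sum_range_succ (fun i => a i) (n + 1),
          Finset.sum_range_succ
            (fun i => ((f i - f (i + 1) : ℝ) : ℂ) * ∑ j ∈ range (i + 1), a j) n]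
        push_cast; ring
    rw [h2]
    refine (norm_add_le _ _).trans (add_le_add ?_ ?_)
    · rw [norm_mul, Complex.norm_real, Real.norm_eq_abs, mul_comm]
      gcongr; exact hD _
    · refine (norm_sum_le _ _).trans ?_
      have : ∑ i ∈ range n, v i ≤ ∑' i, v i := hs.sum_le_tsum _ (fun i _ => hv0 i)
      refine le_trans ?_ (mul_le_mul_of_nonneg_left this hD0)
      rw [Finset.mul_sum]
      refine Finset.sum_le_sum fun i _ => ?_
      rw [norm_mul, Complex.norm_real, Real.norm_eq_abs, mul_comm]
      exact mul_le_mul (hD _) (hv i) (abs_nonneg _) hD0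
  have h3 : Tendsto (fun n => ‖∑ i ∈ range (n + 1), a i * (f i : ℂ)‖) atTop (nhds ‖S‖) :=
    ((hS.tendsto_sum_nat).comp (tendsto_add_atTop_nat 1)).norm
  have h4 : Tendsto (fun n => D * |f n| + D * ∑' i, v i) atTop
      (nhds (D * |(0:ℝ)| + D * ∑' i, v i)) :=
    (hf.abs.const_mul D).add_const _
  have := le_of_tendsto_of_tendsto' h3 h4 h1
  simpa using this

theorem sds_char_partial {d : ℕ} [NeZero d] (χ : DirichletCharacter ℂ d) (hχ : χ ≠ 1) (n : ℕ) :
    ‖∑ i ∈ range n, χ ((i + 1 : ℕ) : ZMod d)‖ ≤ d := by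
  have hper : ∑ i ∈ range d, χ ((i + 1 : ℕ) : ZMod d) = 0 := by
    have h1 : ∑ i ∈ range d, χ ((i : ℕ) : ZMod d) = 0 := by
      have h2 := MulChar.sum_eq_zero_of_ne_one hχ
      rw [← h2]
      obtain ⟨m, rfl⟩ : ∃ m, d = m + 1 := ⟨d - 1, by have := NeZero.pos d; omega⟩
      rw [Finset.sum_range]
      refine Finset.sum_congr rfl fun i _ => ?_
      congr 1
      exact Fin.cast_val_eq_self i
    have h3 := Finset.sum_range_succ (fun i : ℕ => χ ((i : ℕ) : ZMod d)) d
    have h4 := Finset.sum_range_succ' (fun i : ℕ => χ ((i : ℕ) : ZMod d)) d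
    rw [h3] at h4
    simp only [ZMod.natCast_self, Nat.cast_zero] at h4
    rw [h1] at h4
    exact (add_right_cancel h4).symm
  induction n using Nat.strong_induction_on with
  | _ n ih =>
    by_cases h : n < d
    · refine (norm_sum_le _ _).trans ?_
      refine (Finset.sum_le_sum (fun i _ => χ.norm_le_one _)).trans ?_
      simp; exact h.le
    · have hd := NeZero.pos d
      obtain ⟨m, rfl⟩ : ∃ m, n = d + m := ⟨n - d, by omega⟩
      rw [Finset.sum_range_add, hper, zero_add]
      have := ih m (by omega)
      convert this using 4 with i
      push_cast; simp

theorem sds_LS_hasSum {d : ℕ} (χ : DirichletCharacter ℂ d) {σ : ℝ} (hσ : 1 < σ) :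
    HasSum (fun i : ℕ => χ ((i + 1 : ℕ) : ZMod d) * ((((i : ℝ) + 1) ^ (-σ) : ℝ) : ℂ))
      (LSeries (fun n => χ n) (σ : ℂ)) := by
  have hs : LSeriesSummable (fun n => χ n) (σ : ℂ) :=
    LSeriesSummable_of_bounded_of_one_lt_re (m := 1) (fun n _ => χ.norm_le_one n) (by simpa using hσ)
  have h := hs.hasSum
  have h2 := (hasSum_nat_add_iff' 1).mpr h
  simp only [Finset.range_one, Finset.sum_singleton, LSeries.term_zero, sub_zero] at h2
  refine (sds_hasSum_congr fun i => ?_).mpr h2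
  rw [LSeries.term_of_ne_zero (by omega), Complex.ofReal_cpow (by positivity)]
  push_cast
  rw [Complex.cpow_neg, div_eq_mul_inv]

theorem sds_rpow_step {x α : ℝ} (hx : 1 ≤ x) (hα : 0 ≤ α) :
    0 ≤ x ^ (-α) - (x + 1) ^ (-α) ∧ x ^ (-α) - (x + 1) ^ (-α) ≤ α * x ^ (-α) / x := by
  have hx0 : 0 < x := by linarith
  constructor
  · have := Real.rpow_le_rpow_of_nonpos hx0 (by linarith : x ≤ x + 1) (by linarith : -α ≤ 0)
    linarith
  · have h1 : x + 1 = x * (1 + 1 / x) := by field_simp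
    have h2 : (1 + 1 / x) ^ (-α) ≥ 1 - α / x := by
      have hp : 0 < 1 + 1 / x := by positivity
      rw [Real.rpow_def_of_pos hp]
      have h3 := Real.add_one_le_exp (Real.log (1 + 1 / x) * -α)
      have h4 := Real.log_le_sub_one_of_pos hp
      have h5 : Real.log (1 + 1 / x) * α ≤ (1 / x) * α := by
        apply mul_le_mul_of_nonneg_right _ hα; linarith
      have h6 : (1 / x) * α = α / x := by ring
      linarith
    rw [h1, Real.mul_rpow hx0.le (by positivity)]
    have h7 : 0 < x ^ (-α) := Real.rpow_pos_of_pos hx0 _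
    have h8 := mul_le_mul_of_nonneg_left h2 h7.le
    have : α * x ^ (-α) / x = x ^ (-α) * (α / x) := by ring
    rw [this]; linarith

theorem sds_pow_diff {σ τ x : ℝ} (h1 : 1 ≤ σ) (h2 : σ ≤ τ) (h3 : τ ≤ 2) (hx : 1 ≤ x) :
    |(x ^ (-σ) - x ^ (-τ)) - ((x + 1) ^ (-σ) - (x + 1) ^ (-τ))|
      ≤ (τ - σ) * (7 * x ^ (-(3/2) : ℝ)) := by
  have hx0 : 0 < x := by linarith
  have hx1 : 0 < x + 1 := by linarith
  set δ := τ - σ with hδ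
  have hδ0 : 0 ≤ δ := by linarith
  have e1 : x ^ (-τ) = x ^ (-σ) * x ^ (-δ) := by
    rw [← Real.rpow_add hx0]; congr 1; ring
  have e2 : (x + 1) ^ (-τ) = (x + 1) ^ (-σ) * (x + 1) ^ (-δ) := by
    rw [← Real.rpow_add hx1]; congr 1; ring
  rw [e1, e2]
  obtain ⟨a1, a2⟩ := sds_rpow_step hx (by linarith : 0 ≤ σ)
  obtain ⟨b1, b2⟩ := sds_rpow_step hx hδ0
  have hxs : x ^ (-σ) ≤ x ^ (-1 : ℝ) := Real.rpow_le_rpow_of_exponent_le hx (by linarith)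
  have hxd : x ^ (-δ) ≤ 1 := Real.rpow_le_one_of_one_le_of_nonpos hx (by linarith)
  have hw : 1 - (x + 1) ^ (-δ) ≤ δ * (3 * x ^ (1/2 : ℝ)) := by
    rw [Real.rpow_def_of_pos hx1]
    have h4 := Real.add_one_le_exp (Real.log (x + 1) * -δ)
    have h5 : Real.log (x + 1) ≤ (x + 1) ^ (1/2 : ℝ) / (1/2) :=
      Real.log_le_rpow_div hx1.le (by norm_num)
    have h6 : (x + 1) ^ (1/2 : ℝ) ≤ (3/2) * x ^ (1/2 : ℝ) := by
      rw [← Real.sqrt_eq_rpow, ← Real.sqrt_eq_rpow]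
      apply Real.sqrt_le_iff.mpr
      refine ⟨by positivity, ?_⟩
      rw [mul_pow, Real.sq_sqrt hx0.le]; nlinarith
    have h7 : Real.log (x + 1) ≤ 3 * x ^ (1/2 : ℝ) := by linarith
    have := mul_le_mul_of_nonneg_left h7 hδ0
    linarith
  have hw0 : 0 ≤ 1 - (x + 1) ^ (-δ) := by
    have : (x + 1) ^ (-δ) ≤ 1 := Real.rpow_le_one_of_one_le_of_nonpos (by linarith) (by linarith)
    linarith
  have hy : x ^ (-1 : ℝ) / x = x ^ (-2 : ℝ) := by
    rw [← Real.rpow_sub_one hx0.ne']; norm_num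
  have hA : x ^ (-σ) * (x ^ (-δ) - (x + 1) ^ (-δ)) ≤ δ * x ^ (-(3/2) : ℝ) := by
    have : x ^ (-2 : ℝ) ≤ x ^ (-(3/2) : ℝ) := Real.rpow_le_rpow_of_exponent_le hx (by norm_num)
    calc x ^ (-σ) * (x ^ (-δ) - (x + 1) ^ (-δ)) ≤ x ^ (-1 : ℝ) * (δ * 1 / x) := by
          apply mul_le_mul hxs _ b1 (by positivity)
          refine b2.trans ?_
          gcongr
      _ = δ * x ^ (-2 : ℝ) := by rw [← hy]; ring
      _ ≤ _ := by gcongr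
  have hB : (x ^ (-σ) - (x + 1) ^ (-σ)) * (1 - (x + 1) ^ (-δ)) ≤ 6 * δ * x ^ (-(3/2) : ℝ) := by
    have hc : x ^ (-2 : ℝ) * x ^ (1/2 : ℝ) = x ^ (-(3/2) : ℝ) := by
      rw [← Real.rpow_add hx0]; norm_num
    calc _ ≤ (2 * x ^ (-1 : ℝ) / x) * (δ * (3 * x ^ (1/2 : ℝ))) := by
          apply mul_le_mul _ hw hw0 (by positivity)
          refine a2.trans ?_
          gcongr; linarith
      _ = 6 * δ * ((x ^ (-1 : ℝ) / x) * x ^ (1/2 : ℝ)) := by ring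
      _ = _ := by rw [hy, hc]
  have hA0 : 0 ≤ x ^ (-σ) * (x ^ (-δ) - (x + 1) ^ (-δ)) := by positivity
  have hB0 : 0 ≤ (x ^ (-σ) - (x + 1) ^ (-σ)) * (1 - (x + 1) ^ (-δ)) := mul_nonneg a1 hw0
  rw [abs_le]
  constructor <;> nlinarith

/-- the Lipschitz constant -/
noncomputable def sdsC : ℝ := ∑' n : ℕ, 7 * ((n : ℝ) + 1) ^ (-(3/2) : ℝ)

theorem sds_summable_C : Summable (fun n : ℕ => 7 * ((n : ℝ) + 1) ^ (-(3/2) : ℝ)) := by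
  have h : Summable (fun n : ℕ => (n : ℝ) ^ (-(3/2) : ℝ)) :=
    Real.summable_nat_rpow.mpr (by norm_num)
  have := ((summable_nat_add_iff 1).mpr h).mul_left 7
  simpa using this

theorem sds_one_le_C : 1 ≤ sdsC := by
  have := sds_summable_C.sum_le_tsum (range 1) (fun i _ => by positivity)
  simp at this
  unfold sdsC
  linarith

theorem sds_tendsto_rpow {σ : ℝ} (h : 0 < σ) :
    Tendsto (fun i : ℕ => ((i : ℝ) + 1) ^ (-σ)) atTop (nhds 0) := by
  have := (tendsto_rpow_neg_atTop h).comp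
    ((tendsto_natCast_atTop_atTop (R := ℝ)).comp (tendsto_add_atTop_nat 1))
  simpa [Function.comp_def] using this

theorem sds_telescope {f : ℕ → ℝ} (h : ∀ i, f (i + 1) ≤ f i) (hf : Tendsto f atTop (nhds 0)) :
    HasSum (fun i => f i - f (i + 1)) (f 0) := by
  rw [hasSum_iff_tendsto_nat_of_nonneg (fun i => by linarith [h i])]
  simp_rw [Finset.sum_range_sub']
  simpa using hf.const_sub (f 0)

theorem sds_L_upper {d : ℕ} [NeZero d] (χ : DirichletCharacter ℂ d) (hχ : χ ≠ 1) {σ : ℝ}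
    (hσ : 1 < σ) : ‖LSeries (fun n => χ n) (σ : ℂ)‖ ≤ d := by
  have hm : ∀ i : ℕ, (((i + 1 : ℕ) : ℝ) + 1) ^ (-σ) ≤ ((i : ℝ) + 1) ^ (-σ) := fun i => by
    have := (sds_rpow_step (x := (i : ℝ) + 1) (by linarith [i.cast_nonneg (α := ℝ)])
      (by linarith : 0 ≤ σ)).1
    push_cast; linarith
  have ht := sds_telescope hm (sds_tendsto_rpow (by linarith))
  have := sds_tv_bound _ _ _ d (sds_char_partial χ hχ) (sds_tendsto_rpow (by linarith))
    (fun i => (abs_of_nonneg (by linarith [hm i])).le) ht.summable (sds_LS_hasSum χ hσ)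
  rw [ht.tsum_eq] at this
  simpa using this

theorem sds_L_lip {d : ℕ} [NeZero d] (χ : DirichletCharacter ℂ d) (hχ : χ ≠ 1) {σ τ : ℝ}
    (hσ : 1 < σ) (hτ : σ ≤ τ) (h2 : τ ≤ 2) :
    ‖LSeries (fun n => χ n) (σ : ℂ) - LSeries (fun n => χ n) (τ : ℂ)‖
      ≤ d * ((τ - σ) * sdsC) := by
  have hS := (sds_LS_hasSum χ hσ).sub (sds_LS_hasSum χ (hσ.trans_le hτ))
  have hf := (sds_tendsto_rpow (by linarith : 0 < σ)).sub (sds_tendsto_rpow (by linarith : 0 < τ))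
  rw [sub_zero] at hf
  have := sds_tv_bound _ _ (fun n : ℕ => (τ - σ) * (7 * ((n : ℝ) + 1) ^ (-(3/2) : ℝ))) d
    (sds_char_partial χ hχ) hf (fun i => by
      have := sds_pow_diff hσ.le hτ h2 (x := (i : ℝ) + 1) (by linarith [i.cast_nonneg (α := ℝ)])
      push_cast; exact this) (sds_summable_C.mul_left _)
    ((sds_hasSum_congr fun i => by push_cast; ring).mpr hS)
  rwa [tsum_mul_left] at this

theorem sds_geom_amgm {t : ℝ} (h0 : 0 < t) (h1 : t < 1) (n : ℕ) :
    (n : ℝ) * (n + 1) * t ^ n ≤ (∑ i ∈ range n, t ^ i) * (∑ i ∈ range (n + 1), t ^ i) := by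
  obtain ⟨u, hu0, hu⟩ : ∃ u : ℝ, 0 < u ∧ t = u ^ 2 :=
    ⟨Real.sqrt t, Real.sqrt_pos.mpr h0, (Real.sq_sqrt h0.le).symm⟩
  have hu1 : u < 1 := by nlinarith
  have key : ∀ m : ℕ, ((m + 1 : ℕ) : ℝ) * u ^ m ≤ ∑ i ∈ range (m + 1), t ^ i := by
    intro m
    have h2 : 2 * ∑ i ∈ range (m + 1), t ^ i
        = ∑ i ∈ range (m + 1), (t ^ i + t ^ (m - i)) := by
      rw [Finset.sum_add_distrib]
      have := Finset.sum_range_reflect (fun i => t ^ i) (m + 1)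
      simp only [Nat.add_sub_cancel] at this
      rw [this]; ring
    have h3 : ∑ i ∈ range (m + 1), 2 * u ^ m ≤ ∑ i ∈ range (m + 1), (t ^ i + t ^ (m - i)) := by
      refine Finset.sum_le_sum fun i hi => ?_
      have him : i ≤ m := by simpa [Nat.lt_succ_iff] using hi
      have h4 : u ^ m = u ^ i * u ^ (m - i) := by rw [← pow_add]; congr 1; omega
      rw [hu, ← pow_mul, ← pow_mul, mul_comm 2 i, mul_comm 2 (m - i), pow_mul, pow_mul, h4]
      nlinarith [sq_nonneg (u ^ i - u ^ (m - i))]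
    rw [Finset.sum_const, Finset.card_range, nsmul_eq_mul, ← h2] at h3
    nlinarith
  cases n with
  | zero => simp
  | succ m =>
    have k1 := key m
    have k2 := key (m + 1)
    have k3 := mul_le_mul k1 k2 (by positivity) (Finset.sum_nonneg fun i _ => by positivity)
    refine le_trans ?_ k3
    have : t ^ (m + 1) ≤ u ^ m * u ^ (m + 1) := by
      rw [hu, ← pow_mul, ← pow_add]
      exact pow_le_pow_of_le_one hu0.le hu1.le (by omega)
    push_cast
    have hp : (0:ℝ) ≤ ((m:ℝ) + 1) * ((m:ℝ) + 1 + 1) := by positivity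
    nlinarith [mul_le_mul_of_nonneg_left this hp]

/-- auxiliary sequence in the argument of Monsky -/
noncomputable def sdsB (t : ℝ) (i : ℕ) : ℝ :=
  1 / (((i : ℝ) + 1) * (1 - t)) - t ^ (i + 1) / (1 - t ^ (i + 1))

theorem sdsB_anti {t : ℝ} (h0 : 0 < t) (h1 : t < 1) (i : ℕ) : sdsB t (i + 1) ≤ sdsB t i := by
  unfold sdsB
  set S := ∑ j ∈ range (i + 1), t ^ j with hS
  have hSpos : 0 < S := by
    rw [hS, Finset.sum_range_succ']; have : 0 ≤ ∑ k ∈ range i, t ^ (k + 1) :=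
      Finset.sum_nonneg fun _ _ => by positivity
    simp; linarith
  have hS2 : ∑ j ∈ range (i + 1 + 1), t ^ j = S + t ^ (i + 1) := Finset.sum_range_succ _ _
  have e1 : 1 - t ^ (i + 1) = (1 - t) * S := by
    rw [hS]; have := geom_sum_mul t (i + 1); linarith
  have e2 : 1 - t ^ (i + 1 + 1) = (1 - t) * (S + t ^ (i + 1)) := by
    rw [← hS2]; have := geom_sum_mul t (i + 1 + 1); linarith
  have am := sds_geom_amgm h0 h1 (i + 1)
  rw [hS2] at am
  have e3 : t ^ (i + 1) = 1 - (1 - t) * S := by linarith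
  rw [e1, e2]
  have hT : 0 < t ^ (i + 1) := by positivity
  have h1t : 0 < 1 - t := by linarith
  have d1 : t ^ (i + 1) / ((1 - t) * S) - t ^ (i + 1 + 1) / ((1 - t) * (S + t ^ (i + 1)))
      = t ^ (i + 1) / ((1 - t) * (S * (S + t ^ (i + 1)))) := by
    rw [pow_succ t (i + 1)]
    field_simp
    rw [e3]; ring
  have d2 : 1 / (((i : ℝ) + 1) * (1 - t)) - 1 / (((i + 1 : ℕ) + 1 : ℝ) * (1 - t))
      = 1 / ((1 - t) * (((i : ℝ) + 1) * (i + 1 + 1))) := by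
    push_cast
    field_simp
    ring
  have d3 : t ^ (i + 1) / ((1 - t) * (S * (S + t ^ (i + 1))))
      ≤ 1 / ((1 - t) * (((i : ℝ) + 1) * (i + 1 + 1))) := by
    rw [div_le_div_iff₀ (by positivity) (by positivity)]
    push_cast at am
    nlinarith
  linarith

theorem sdsB_zero {t : ℝ} (h1 : t < 1) : sdsB t 0 = 1 := by
  unfold sdsB
  have h1t : 1 - t ≠ 0 := by linarith
  simp
  field_simp

theorem sdsB_tendsto {t : ℝ} (h0 : 0 < t) (h1 : t < 1) :
    Tendsto (sdsB t) atTop (nhds 0) := by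
  unfold sdsB
  have a1 : Tendsto (fun i : ℕ => 1 / (((i : ℝ) + 1) * (1 - t))) atTop (nhds 0) := by
    have := (tendsto_one_div_add_atTop_nhds_zero_nat (𝕜 := ℝ)).div_const (1 - t)
    simpa [div_eq_mul_inv, mul_comm] using this
  have a2 : Tendsto (fun i : ℕ => t ^ (i + 1)) atTop (nhds 0) :=
    (tendsto_pow_atTop_nhds_zero_of_lt_one h0.le h1).comp (tendsto_add_atTop_nat 1)
  have a3 := a2.div (a2.const_sub 1) (by norm_num)
  simpa using a1.sub a3

theorem sds_zetaMul_sq {d : ℕ} {χ : DirichletCharacter ℂ d} (hχ : χ ^ 2 = 1) {m : ℕ}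
    (hm : m ≠ 0) : 1 ≤ (χ.zetaMul (m ^ 2)).re := by
  have hm2 : m ^ 2 ≠ 0 := by positivity
  have key : ∀ p k : ℕ, p.Prime → ∃ r : ℝ, 1 ≤ r ∧ χ.zetaMul (p ^ (2 * k)) = (r : ℂ) := by
    intro p k hp
    have h0 : χ.zetaMul (p ^ (2 * k)) = ∑ i ∈ range (2 * k + 1), χ (p : ZMod d) ^ i := by
      rw [DirichletCharacter.zetaMul, ArithmeticFunction.coe_zeta_mul_apply,
        Nat.sum_divisors_prime_pow hp]
      refine Finset.sum_congr rfl fun i _ => ?_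
      simp [toArithmeticFunction, hp.ne_zero]
    rw [h0]
    rcases MulChar.isQuadratic_iff_sq_eq_one.mpr hχ p with h | h | h
    · refine ⟨1, le_rfl, ?_⟩
      rw [h, Finset.sum_range_succ']; simp
    · refine ⟨2 * k + 1, by linarith [k.cast_nonneg (α := ℝ)], ?_⟩
      rw [h]; simp
    · refine ⟨1, le_rfl, ?_⟩
      rw [h, neg_one_geom_sum]
      have : ¬ Even (2 * k + 1) := by simp
      simp [this]
  have hprod := χ.isMultiplicative_zetaMul.multiplicative_factorization _ hm2
  rw [hprod, Finsupp.prod]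
  have : ∀ s : Finset ℕ, (∀ p ∈ s, p.Prime) →
      ∃ r : ℝ, 1 ≤ r ∧ ∏ p ∈ s, χ.zetaMul (p ^ ((m ^ 2).factorization p)) = (r : ℂ) := by
    intro s
    induction s using Finset.induction_on with
    | empty => intro _; exact ⟨1, le_rfl, by simp⟩
    | insert p s hps ih =>
      intro h
      obtain ⟨r, hr, hr2⟩ := ih fun q hq => h q (Finset.mem_insert_of_mem hq)
      obtain ⟨r', hr', hr2'⟩ := key p (m.factorization p) (h p (Finset.mem_insert_self _ _))
      refine ⟨r' * r, one_le_mul_of_one_le_of_one_le hr' hr, ?_⟩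
      rw [Finset.prod_insert hps, hr2, Nat.factorization_pow]
      simp only [Finsupp.smul_apply, smul_eq_mul]
      rw [hr2']; push_cast; rfl
  obtain ⟨r, hr, hr2⟩ := this (m ^ 2).factorization.support
    (fun p hp => Nat.prime_of_mem_primeFactors hp)
  rw [hr2]; simpa using hr

theorem sds_lambert {d : ℕ} {χ : DirichletCharacter ℂ d} {t : ℝ} (h0 : 0 < t) (h1 : t < 1) :
    ∃ F : ℂ, HasSum (fun i : ℕ => χ ((i + 1 : ℕ) : ZMod d) *
        ((t ^ (i + 1) / (1 - t ^ (i + 1)) : ℝ) : ℂ)) F ∧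
      HasSum (fun N : ℕ+ => χ.zetaMul (N : ℕ) * (t : ℂ) ^ (N : ℕ)) F := by
  let G : ℕ+ × ℕ+ → ℂ := fun c => χ ((c.1 : ℕ) : ZMod d) * (t : ℂ) ^ ((c.1 : ℕ) * (c.2 : ℕ))
  have hG : Summable G := by
    have hr : ‖t‖ < 1 := by rw [Real.norm_eq_abs, abs_of_pos h0]; exact h1
    have h2 := summable_prod_mul_pow 0 hr
    refine Summable.of_norm_bounded h2 fun c => ?_
    simp only [G, norm_mul, norm_pow, Complex.norm_real, Real.norm_eq_abs, abs_of_pos h0, pow_zero]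
    gcongr
    exact χ.norm_le_one _
  refine ⟨∑' c, G c, ?_, ?_⟩
  · have h3 : HasSum (fun n : ℕ+ => χ ((n : ℕ) : ZMod d) *
        ((t ^ (n : ℕ) / (1 - t ^ (n : ℕ)) : ℝ) : ℂ)) (∑' c, G c) := by
      refine hG.hasSum.prod_fiberwise fun n => ?_
      have hq : ‖(t : ℂ) ^ (n : ℕ)‖ < 1 := by
        rw [norm_pow, Complex.norm_real, Real.norm_eq_abs, abs_of_pos h0]
        exact pow_lt_one₀ h0.le h1 n.ne_zero
      have h4 := ((hasSum_geometric_of_norm_lt_one hq).mul_left ((t : ℂ) ^ (n : ℕ))).mul_left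
        (χ ((n : ℕ) : ZMod d))
      rw [← Equiv.pnatEquivNat.symm.hasSum_iff]
      have e : χ ((n : ℕ) : ZMod d) * ((t ^ (n : ℕ) / (1 - t ^ (n : ℕ)) : ℝ) : ℂ)
          = χ ((n : ℕ) : ZMod d) * ((t : ℂ) ^ (n : ℕ) * (1 - (t : ℂ) ^ (n : ℕ))⁻¹) := by
        push_cast; rw [div_eq_mul_inv]
      rw [e]
      refine (sds_hasSum_congr fun i => ?_).mpr h4
      simp only [G, Function.comp_apply, Equiv.pnatEquivNat_symm_apply, Nat.succPNat_coe]
      rw [← pow_mul, ← pow_add]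
      congr 2
      simp only [Nat.succ_eq_add_one]; ring
    rw [← Equiv.pnatEquivNat.symm.hasSum_iff] at h3
    refine (sds_hasSum_congr fun i => ?_).mpr h3
    simp [Function.comp_apply, Equiv.pnatEquivNat_symm_apply, Nat.succPNat_coe]
  · have h5 := (sigmaAntidiagonalEquivProd.hasSum_iff).mpr hG.hasSum
    refine h5.sigma fun N => ?_
    have h6 : χ.zetaMul (N : ℕ) * (t : ℂ) ^ (N : ℕ) =
        ∑ x : Nat.divisorsAntidiagonal N, (G ∘ sigmaAntidiagonalEquivProd) ⟨N, x⟩ := by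
      have e1 : ∀ x : Nat.divisorsAntidiagonal N, (G ∘ sigmaAntidiagonalEquivProd) ⟨N, x⟩
          = χ ((x.1.1 : ℕ) : ZMod d) * (t : ℂ) ^ (N : ℕ) := by
        intro x
        have h7 := (Nat.mem_divisorsAntidiagonal.mp x.2).1
        simp only [G, Function.comp_apply, sigmaAntidiagonalEquivProd, Equiv.coe_fn_mk,
          divisorsAntidiagonalFactors, PNat.mk_coe, h7]
      rw [Finset.sum_congr rfl fun x _ => e1 x, ← Finset.sum_mul]
      congr 1
      rw [Finset.univ_eq_attach,
        (N : ℕ).divisorsAntidiagonal.sum_attach (fun x : ℕ × ℕ => χ ((x.1 : ℕ) : ZMod d)),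
        Nat.sum_divisorsAntidiagonal (fun x _ => χ ((x : ℕ) : ZMod d)),
        DirichletCharacter.zetaMul, ArithmeticFunction.coe_zeta_mul_apply]
      refine Finset.sum_congr rfl fun i hi => ?_
      have : i ≠ 0 := (Nat.pos_of_mem_divisors hi).ne'
      simp [toArithmeticFunction, this]
    rw [h6]
    exact hasSum_fintype _

theorem sds_real_lower {d : ℕ} [NeZero d] (χ : DirichletCharacter ℂ d) (hχ : χ ≠ 1)
    (hχ2 : χ ^ 2 = 1) {σ : ℝ} (hσ : 1 < σ) (hσ2 : (σ - 1) * (64 * sdsC * d ^ 2) ≤ 1) :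
    1 / (64 * (d : ℝ)) ≤ ‖LSeries (fun n => χ n) (σ : ℂ)‖ := by
  have hd : (1 : ℝ) ≤ d := by exact_mod_cast NeZero.pos d
  have hC := sds_one_le_C
  have hσ3 : σ ≤ 2 := by
    have : (1:ℝ) ≤ 64 * sdsC * d ^ 2 := by nlinarith [one_le_pow₀ hd (n := 2)]
    nlinarith
  set t : ℝ := 1 - 1 / (32 * (d : ℝ) ^ 2) with ht
  have hd2 : (1 : ℝ) ≤ (d : ℝ) ^ 2 := one_le_pow₀ hd
  have hsm : 1 / (32 * (d : ℝ) ^ 2) ≤ 1 / 32 := by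
    apply one_div_le_one_div_of_le (by norm_num); linarith
  have hpos : 0 < 1 / (32 * (d : ℝ) ^ 2) := by positivity
  have h0 : 0 < t := by linarith
  have h1 : t < 1 := by linarith
  have h1t : 1 - t = 1 / (32 * (d : ℝ) ^ 2) := by rw [ht]; ring
  obtain ⟨F, hF1, hF2⟩ := sds_lambert (χ := χ) h0 h1
  have hFre : 2 * (d : ℝ) ≤ F.re := by
    have h2 := Complex.hasSum_re hF2
    have hterm : ∀ N : ℕ+, (χ.zetaMul (N : ℕ) * (t : ℂ) ^ (N : ℕ)).re
        = (χ.zetaMul (N : ℕ)).re * t ^ (N : ℕ) := by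
      intro N
      rw [← Complex.ofReal_pow, Complex.re_mul_ofReal]
    have hnn : ∀ N : ℕ, 0 ≤ (χ.zetaMul N).re := fun N =>
      (Complex.le_def.mp (DirichletCharacter.zetaMul_nonneg hχ2 N)).1
    simp_rw [hterm] at h2
    let sq : ℕ → ℕ+ := fun i => ⟨(i + 1) ^ 2, by positivity⟩
    have hinj : Function.Injective sq := by
      intro a b hab
      have : (a + 1) ^ 2 = (b + 1) ^ 2 := congrArg Subtype.val hab
      have := Nat.pow_left_injective (n := 2) (by norm_num) this
      simpa using this
    have h3 := sum_le_hasSum ((range (4 * d)).image sq)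
      (fun N _ => mul_nonneg (hnn N) (by positivity)) h2
    refine le_trans ?_ h3
    rw [Finset.sum_image fun a _ b _ h => hinj h]
    have h4 : ∑ i ∈ range (4 * d), (1 / 2 : ℝ) ≤
        ∑ i ∈ range (4 * d), (χ.zetaMul ((sq i : ℕ+) : ℕ)).re * t ^ ((sq i : ℕ+) : ℕ) := by
      refine Finset.sum_le_sum fun i hi => ?_
      have e : ((sq i : ℕ+) : ℕ) = (i + 1) ^ 2 := rfl
      rw [e]
      have h5 := sds_zetaMul_sq hχ2 (m := i + 1) (by omega)
      have h6 : (1 / 2 : ℝ) ≤ t ^ ((i + 1) ^ 2) := by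
        have hb := one_add_mul_le_pow (a := -(1 / (32 * (d : ℝ) ^ 2))) (by linarith) ((i + 1) ^ 2)
        have e2 : 1 + -(1 / (32 * (d : ℝ) ^ 2)) = t := by rw [ht]; ring
        rw [e2] at hb
        refine le_trans ?_ hb
        have hi' : (i : ℝ) + 1 ≤ 4 * d := by
          have := Finset.mem_range.mp hi
          exact_mod_cast this
        have : ((i : ℝ) + 1) ^ 2 ≤ 16 * (d : ℝ) ^ 2 := by
          have := pow_le_pow_left₀ (by positivity) hi' 2
          nlinarith
        push_cast
        have : ((i : ℝ) + 1) ^ 2 * (1 / (32 * (d : ℝ) ^ 2)) ≤ 1 / 2 := by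
          rw [mul_one_div, div_le_div_iff₀ (by positivity) (by norm_num)]; linarith
        linarith
      calc (1/2 : ℝ) ≤ t ^ ((i + 1) ^ 2) := h6
        _ = 1 * t ^ ((i + 1) ^ 2) := (one_mul _).symm
        _ ≤ _ := by gcongr
    refine le_trans ?_ h4
    simp; linarith
  -- comparison
  have hS := ((sds_LS_hasSum χ hσ).mul_left (((1 - t)⁻¹ : ℝ) : ℂ)).sub hF1
  have hBt := sds_telescope (sdsB_anti h0 h1) (sdsB_tendsto h0 h1)
  have hfun : ∀ i : ℕ, (1 - t)⁻¹ * ((i : ℝ) + 1) ^ (-σ) - t ^ (i + 1) / (1 - t ^ (i + 1))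
      = -(1 - t)⁻¹ * (((i : ℝ) + 1) ^ (-1 : ℝ) - ((i : ℝ) + 1) ^ (-σ)) + sdsB t i := by
    intro i
    have : ((i : ℝ) + 1) ^ (-1 : ℝ) = ((i : ℝ) + 1)⁻¹ := Real.rpow_neg_one _
    rw [this, sdsB, one_div, mul_inv]; ring
  have hf : Tendsto (fun i : ℕ => (1 - t)⁻¹ * ((i : ℝ) + 1) ^ (-σ)
      - t ^ (i + 1) / (1 - t ^ (i + 1))) atTop (nhds 0) := by
    simp_rw [hfun]
    have := (((sds_tendsto_rpow (by norm_num : (0:ℝ) < 1)).sub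
      (sds_tendsto_rpow (by linarith : 0 < σ))).const_mul (-(1 - t)⁻¹)).add (sdsB_tendsto h0 h1)
    simpa using this
  have hinv : 0 < (1 - t)⁻¹ := by rw [h1t]; positivity
  have hbound := sds_tv_bound (fun i : ℕ => χ ((i + 1 : ℕ) : ZMod d)) _
    (fun i => (1 - t)⁻¹ * ((σ - 1) * (7 * ((i : ℝ) + 1) ^ (-(3/2) : ℝ)))
      + (sdsB t i - sdsB t (i + 1))) d (sds_char_partial χ hχ) hf (fun i => by
      rw [hfun, hfun]
      have h7 := sds_pow_diff le_rfl hσ.le hσ3 (x := (i : ℝ) + 1)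
        (by linarith [i.cast_nonneg (α := ℝ)])
      have h8 := mul_le_mul_of_nonneg_left h7 hinv.le
      have h9 := sdsB_anti h0 h1 i
      rw [← abs_of_pos hinv, ← abs_mul, abs_of_pos hinv] at h8
      push_cast at h8 ⊢
      rw [abs_le] at h8 ⊢
      constructor <;> linarith [h8.1, h8.2])
    (((sds_summable_C.mul_left _).mul_left _).add hBt.summable)
    ((sds_hasSum_congr fun i => by push_cast; ring).mpr hS)
  rw [((sds_summable_C.mul_left _).mul_left _).tsum_add hBt.summable, tsum_mul_left, tsum_mul_left,
    hBt.tsum_eq, sdsB_zero h1] at hbound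
  change _ ≤ (d : ℝ) * ((1 - t)⁻¹ * ((σ - 1) * sdsC) + 1) at hbound
  set Λ := LSeries (fun n => χ n) (σ : ℂ) with hΛ
  have h10 : F.re - (1 - t)⁻¹ * ‖Λ‖ ≤ ‖(((1 - t)⁻¹ : ℝ) : ℂ) * Λ - F‖ := by
    have := norm_sub_norm_le F ((((1 - t)⁻¹ : ℝ) : ℂ) * Λ)
    rw [norm_mul, Complex.norm_real, Real.norm_eq_abs, abs_of_pos hinv, norm_sub_rev] at this
    linarith [Complex.re_le_norm F]
  have h11 : 2 * (d : ℝ) - (1 - t)⁻¹ * ‖Λ‖ ≤ (d : ℝ) * ((1 - t)⁻¹ * ((σ - 1) * sdsC) + 1) := by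
    linarith
  rw [h1t, one_div, inv_inv] at h11
  rw [div_le_iff₀ (by positivity)]
  have h12 : (d : ℝ) * 1 ≤ d * (32 * d * ‖Λ‖ + 32 * d ^ 2 * ((σ - 1) * sdsC)) := by nlinarith
  have h13 := le_of_mul_le_mul_left h12 (by linarith)
  nlinarith

theorem sds_rpow_step2 {x δ : ℝ} (hx : 1 ≤ x) (hδ : 0 ≤ δ) :
    δ * (x + 1) ^ (-(1 + δ)) ≤ x ^ (-δ) - (x + 1) ^ (-δ) := by
  have hx0 : 0 < x := by linarith
  have hx1 : 0 < x + 1 := by linarith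
  have h1 : x = (x + 1) * (x / (x + 1)) := by field_simp
  have hq : 0 < x / (x + 1) := by positivity
  have h2 : 1 + δ / (x + 1) ≤ (x / (x + 1)) ^ (-δ) := by
    rw [Real.rpow_def_of_pos hq]
    have h3 := Real.add_one_le_exp (Real.log (x / (x + 1)) * -δ)
    have h4 := Real.log_le_sub_one_of_pos hq
    have h5 : x / (x + 1) - 1 = - (1 / (x + 1)) := by field_simp; ring
    rw [h5] at h4
    have h6 := mul_le_mul_of_nonneg_right h4 hδ
    have h7 : δ / (x + 1) = 1 / (x + 1) * δ := by ring
    rw [h7]; linarith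
  have e1 : x ^ (-δ) = (x + 1) ^ (-δ) * (x / (x + 1)) ^ (-δ) := by
    rw [← Real.mul_rpow hx1.le hq.le, ← h1]
  have e2 : (x + 1) ^ (-(1 + δ)) = (x + 1) ^ (-δ) / (x + 1) := by
    rw [← Real.rpow_sub_one hx1.ne']; congr 1; ring
  rw [e1, e2]
  have h8 : 0 < (x + 1) ^ (-δ) := Real.rpow_pos_of_pos hx1 _
  have h9 := mul_le_mul_of_nonneg_left h2 h8.le
  have : δ * ((x + 1) ^ (-δ) / (x + 1)) = (x + 1) ^ (-δ) * (δ / (x + 1)) := by ring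
  rw [this]; linarith

theorem sds_summable_shift (Z : ℕ) {δ : ℝ} (hδ : 0 < δ) :
    Summable (fun i : ℕ => ((Z : ℝ) + i + 1) ^ (-(1 + δ))) := by
  have h : Summable (fun n : ℕ => (n : ℝ) ^ (-(1 + δ))) :=
    Real.summable_nat_rpow.mpr (by linarith)
  have := (summable_nat_add_iff (Z + 1)).mpr h
  refine this.congr fun i => ?_
  push_cast; congr 1; ring

theorem sds_tail (Z : ℕ) (hZ : 1 ≤ Z) {δ : ℝ} (hδ : 0 < δ) :
    ∑' i : ℕ, ((Z : ℝ) + i + 1) ^ (-(1 + δ)) ≤ (Z : ℝ) ^ (-δ) / δ := by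
  have hZ' : (1 : ℝ) ≤ Z := by exact_mod_cast hZ
  have hstep : ∀ i : ℕ, δ * ((Z : ℝ) + i + 1) ^ (-(1 + δ))
      ≤ ((Z : ℝ) + i) ^ (-δ) - ((Z : ℝ) + i + 1) ^ (-δ) := fun i =>
    sds_rpow_step2 (by linarith [i.cast_nonneg (α := ℝ)]) hδ.le
  have hlim : Tendsto (fun i : ℕ => ((Z : ℝ) + i) ^ (-δ)) atTop (nhds 0) := by
    have := (tendsto_rpow_neg_atTop hδ).comp
      (tendsto_atTop_add_const_left _ (Z : ℝ) (tendsto_natCast_atTop_atTop (R := ℝ)))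
    simpa [Function.comp_def] using this
  have htel := sds_telescope (f := fun i : ℕ => ((Z : ℝ) + i) ^ (-δ)) (fun i => by
    have := hstep i
    have h2 : 0 ≤ δ * ((Z : ℝ) + i + 1) ^ (-(1 + δ)) := by positivity
    push_cast; rw [← add_assoc]; linarith) hlim
  rw [le_div_iff₀ hδ, mul_comm, ← tsum_mul_left]
  have := ((sds_summable_shift Z hδ).mul_left δ).tsum_le_tsum (fun i => by
    have := hstep i
    push_cast; rw [← add_assoc]; exact this) htel.summable
  rw [htel.tsum_eq] at this
  simpa using this

theorem sds_zeta_upper {δ : ℝ} (hδ : 0 < δ) (hδ1 : δ ≤ 1) :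
    ∑' i : ℕ, ((i : ℝ) + 1) ^ (-(1 + δ)) ≤ 2 / δ := by
  have hs := sds_summable_shift 0 hδ
  simp only [Nat.cast_zero, zero_add] at hs
  rw [hs.tsum_eq_zero_add]
  have h1 := sds_tail 1 le_rfl hδ
  simp only [Nat.cast_one, Real.one_rpow, Nat.cast_zero, zero_add] at h1 ⊢
  have h2 : ∑' b : ℕ, (((b + 1 : ℕ) : ℝ) + 1) ^ (-(1 + δ)) ≤ 1 / δ := by
    refine le_trans (le_of_eq ?_) h1
    refine tsum_congr fun b => ?_
    push_cast; rw [add_comm (b : ℝ) 1]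
  have : 1 ≤ 1 / δ := by rw [le_div_iff₀ hδ]; linarith
  have e : 2 / δ = 1 / δ + 1 / δ := by ring
  rw [e]; linarith

theorem sds_zeta_lower {δ : ℝ} (hδ : 0 < δ) :
    1 / δ ≤ ∑' i : ℕ, ((i : ℝ) + 1) ^ (-(1 + δ)) := by
  have hs := sds_summable_shift 0 hδ
  simp only [Nat.cast_zero, zero_add] at hs
  have hstep : ∀ i : ℕ, 0 ≤ ((i : ℝ) + 1) ^ (-δ) - ((i : ℝ) + 1 + 1) ^ (-δ) ∧
      ((i : ℝ) + 1) ^ (-δ) - ((i : ℝ) + 1 + 1) ^ (-δ) ≤ δ * ((i : ℝ) + 1) ^ (-(1 + δ)) := by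
    intro i
    have h := sds_rpow_step (x := (i : ℝ) + 1) (by linarith [i.cast_nonneg (α := ℝ)]) hδ.le
    refine ⟨h.1, h.2.trans (le_of_eq ?_)⟩
    rw [mul_div_assoc, ← Real.rpow_sub_one (by positivity)]; congr 2; ring
  have htel := sds_telescope (f := fun i : ℕ => ((i : ℝ) + 1) ^ (-δ))
    (fun i => by have := (hstep i).1; push_cast; linarith) (sds_tendsto_rpow hδ)
  have := htel.summable.tsum_le_tsum (fun i => by
    have := (hstep i).2; push_cast; exact this) (hs.mul_left δ)
  rw [htel.tsum_eq, tsum_mul_left] at this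
  rw [div_le_iff₀ hδ, mul_comm]
  simpa using this

theorem sds_triv_upper {d : ℕ} (χ : DirichletCharacter ℂ d) {δ : ℝ} (hδ : 0 < δ)
    (hδ1 : δ ≤ 1) : ‖LSeries (fun n => χ n) ((1 + δ : ℝ) : ℂ)‖ ≤ 2 / δ := by
  have hs := sds_summable_shift 0 hδ
  simp only [Nat.cast_zero, zero_add] at hs
  refine le_trans ?_ (sds_zeta_upper hδ hδ1)
  rw [← (sds_LS_hasSum χ (by linarith : 1 < 1 + δ)).tsum_eq]
  refine tsum_of_norm_bounded hs.hasSum fun i => ?_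
  rw [norm_mul, Complex.norm_real, Real.norm_eq_abs, abs_of_nonneg (by positivity)]
  exact mul_le_of_le_one_left (by positivity) (χ.norm_le_one _)

theorem sds_triv_lower {d : ℕ} [NeZero d] {δ : ℝ} (hδ : 0 < δ) (hδ1 : δ ≤ 1) :
    1 / (δ * d ^ 2) ≤ ‖LSeries (fun n => (1 : DirichletCharacter ℂ d) n) ((1 + δ : ℝ) : ℂ)‖ := by
  have hd0 : (1 : ℝ) ≤ d := by exact_mod_cast NeZero.pos d
  refine le_trans ?_ (Complex.re_le_norm _)
  have h1 := Complex.hasSum_re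
    (sds_LS_hasSum (1 : DirichletCharacter ℂ d) (by linarith : 1 < 1 + δ))
  have hterm : ∀ i : ℕ, ((1 : DirichletCharacter ℂ d) ((i + 1 : ℕ) : ZMod d) *
      ((((i : ℝ) + 1) ^ (-(1 + δ)) : ℝ) : ℂ)).re
      = if IsUnit ((i + 1 : ℕ) : ZMod d) then ((i : ℝ) + 1) ^ (-(1 + δ)) else 0 := by
    intro i
    rw [Complex.re_mul_ofReal]
    split_ifs with h
    · rw [MulChar.one_apply h]; simp
    · rw [MulChar.map_nonunit _ h]; simp
  simp_rw [hterm] at h1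
  have hinj : Function.Injective (fun m : ℕ => d * m) := fun a b h =>
    Nat.eq_of_mul_eq_mul_left (NeZero.pos d) h
  have h2 := tsum_comp_le_tsum_of_inj h1.summable (fun i => by split_ifs <;> positivity) hinj
  rw [h1.tsum_eq] at h2
  refine le_trans ?_ h2
  have hs := sds_summable_shift 0 hδ
  simp only [Nat.cast_zero, zero_add] at hs
  have h3 : ∑' m : ℕ, (d : ℝ) ^ (-(1 + δ)) * ((m : ℝ) + 1) ^ (-(1 + δ)) ≤
      ∑' m : ℕ, ((fun i : ℕ => if IsUnit ((i + 1 : ℕ) : ZMod d)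
        then ((i : ℝ) + 1) ^ (-(1 + δ)) else 0) ∘ (fun m : ℕ => d * m)) m := by
    refine (hs.mul_left _).tsum_le_tsum (fun m => ?_) (h1.summable.comp_injective hinj)
    have hu : IsUnit ((d * m + 1 : ℕ) : ZMod d) := by simp
    simp only [Function.comp_apply, hu, if_true]
    rw [← Real.mul_rpow (by positivity) (by positivity)]
    apply Real.rpow_le_rpow_of_nonpos (by positivity) _ (by linarith)
    push_cast; nlinarith
  refine le_trans ?_ h3
  rw [tsum_mul_left]
  have h4 := sds_zeta_lower hδ
  have h5 : ((d : ℝ) ^ 2)⁻¹ ≤ (d : ℝ) ^ (-(1 + δ)) := by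
    rw [← Real.rpow_natCast, ← Real.rpow_neg (by positivity)]
    apply Real.rpow_le_rpow_of_exponent_le hd0
    push_cast; linarith
  calc 1 / (δ * (d : ℝ) ^ 2) = ((d : ℝ) ^ 2)⁻¹ * (1 / δ) := by field_simp
    _ ≤ _ := by gcongr

theorem sds_complex_lower {d : ℕ} [NeZero d] (χ : DirichletCharacter ℂ d) (hχ : χ ≠ 1)
    (hχ2 : χ ^ 2 ≠ 1) {δ : ℝ} (hδ : 0 < δ) (hδ2 : δ * (128 * sdsC ^ 4 * d ^ 5) ≤ 1) :
    1 / (128 * sdsC ^ 3 * (d : ℝ) ^ 4) ≤ ‖LSeries (fun n => χ n) ((1 + δ : ℝ) : ℂ)‖ := by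
  have hd : (1 : ℝ) ≤ d := by exact_mod_cast NeZero.pos d
  have hC := sds_one_le_C
  set C := sdsC with hCdef
  have hC0 : 0 < C := by linarith
  have hd0 : (0:ℝ) < d := by linarith
  set η : ℝ := 1 / (128 * C ^ 4 * d ^ 5) with hη
  have hη0 : 0 < η := by positivity
  have hηe : η * (128 * C ^ 4 * d ^ 5) = 1 := by rw [hη]; field_simp
  have hbig : 1 ≤ 128 * C ^ 4 * (d : ℝ) ^ 5 := by
    have := one_le_mul_of_one_le_of_one_le (one_le_pow₀ hC (n := 4)) (one_le_pow₀ hd (n := 5))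
    linarith
  have hη1 : η ≤ 1 := by
    rw [hη, div_le_one (by positivity)]; exact hbig
  have hδη : δ ≤ η := by
    rw [hη, le_div_iff₀ (by positivity)]; exact hδ2
  have h341 := χ.norm_LSeries_product_ge_one hη0 0
  simp only [Complex.ofReal_zero, mul_zero, add_zero] at h341
  have ecast : (1 + (η : ℂ)) = ((1 + η : ℝ) : ℂ) := by push_cast; rfl
  rw [ecast, norm_mul, norm_mul, norm_pow, norm_pow] at h341
  have b1 := sds_triv_upper (1 : DirichletCharacter ℂ d) hη0 hη1
  have b2 := sds_L_upper (χ ^ 2) hχ2 (by linarith : 1 < 1 + η)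
  have b3 := sds_L_lip χ hχ (by linarith : 1 < 1 + δ) (by linarith : 1 + δ ≤ 1 + η) (by linarith)
  set A := ‖LSeries (fun n => χ n) ((1 + η : ℝ) : ℂ)‖ with hA
  have hA0 : 0 ≤ A := norm_nonneg _
  have h5 : 1 ≤ (2 / η) ^ 3 * A ^ 4 * d := by
    refine le_trans h341 ?_
    gcongr
  have h6 : 2 * C * d * η ≤ A := by
    by_contra hcon
    push Not at hcon
    have h7 : A ^ 4 < (2 * C * d * η) ^ 4 := pow_lt_pow_left₀ hcon hA0 (by norm_num)
    have h8 : (2 / η) ^ 3 * A ^ 4 * d < (2 / η) ^ 3 * (2 * C * d * η) ^ 4 * d := by gcongr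
    have h9 : (2 / η) ^ 3 * (2 * C * d * η) ^ 4 * d = η * (128 * C ^ 4 * d ^ 5) := by
      field_simp; ring
    linarith
  have h10 : A - ‖LSeries (fun n => χ n) ((1 + δ : ℝ) : ℂ)‖ ≤ d * (η * C) := by
    have h11 := norm_sub_norm_le (LSeries (fun n => χ n) ((1 + η : ℝ) : ℂ))
      (LSeries (fun n => χ n) ((1 + δ : ℝ) : ℂ))
    rw [norm_sub_rev] at h11
    have h12 : (d : ℝ) * ((1 + η - (1 + δ)) * C) ≤ d * (η * C) := by gcongr; linarith
    linarith
  have h13 : 1 / (128 * C ^ 3 * (d : ℝ) ^ 4) = C * d * η := by rw [hη]; field_simp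
  rw [h13]; linarith

theorem sds_abs_log {d : ℕ} [NeZero d] (χ : DirichletCharacter ℂ d) (hχ : χ ≠ 1)
    {δ : ℝ} (hδ : 0 < δ) (hδ2 : δ * (128 * sdsC ^ 4 * d ^ 5) ≤ 1) :
    |Real.log ‖LSeries (fun n => χ n) ((1 + δ : ℝ) : ℂ)‖|
      ≤ Real.log (128 * sdsC ^ 3) + 4 * Real.log d := by
  have hd : (1 : ℝ) ≤ d := by exact_mod_cast NeZero.pos d
  have hC := sds_one_le_C
  have hC3 : 1 ≤ sdsC ^ 3 := one_le_pow₀ hC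
  have hup := sds_L_upper χ hχ (by linarith : 1 < 1 + δ)
  have hlow : 1 / (128 * sdsC ^ 3 * (d : ℝ) ^ 4) ≤ ‖LSeries (fun n => χ n) ((1 + δ : ℝ) : ℂ)‖ := by
    by_cases h2 : χ ^ 2 = 1
    · refine le_trans ?_ (sds_real_lower χ hχ h2 (by linarith : 1 < 1 + δ) ?_)
      · apply one_div_le_one_div_of_le (by positivity)
        have : (d : ℝ) ≤ d ^ 4 := le_self_pow₀ hd (by norm_num)
        have h3 : (d:ℝ) ^ 4 ≤ sdsC ^ 3 * d ^ 4 := le_mul_of_one_le_left (by positivity) hC3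
        have h4 : 0 ≤ sdsC ^ 3 * (d:ℝ) ^ 4 := by positivity
        linarith
      · refine le_trans ?_ hδ2
        have e1 : sdsC ≤ sdsC ^ 4 := le_self_pow₀ hC (by norm_num)
        have e2 : (d : ℝ) ^ 2 ≤ d ^ 5 := pow_le_pow_right₀ hd (by norm_num)
        rw [add_sub_cancel_left]
        gcongr
        norm_num
    · exact sds_complex_lower χ hχ h2 hδ hδ2
  have hpos : 0 < 1 / (128 * sdsC ^ 3 * (d : ℝ) ^ 4) := by positivity
  have hl1 := Real.log_le_log hpos hlow
  have hl2 := Real.log_le_log (hpos.trans_le hlow) hup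
  have hK : 0 ≤ Real.log (128 * sdsC ^ 3) := Real.log_nonneg (by linarith)
  have hld : 0 ≤ Real.log d := Real.log_nonneg hd
  rw [one_div, Real.log_inv, Real.log_mul (by positivity) (by positivity), Real.log_pow] at hl1
  simp only [Nat.cast_ofNat] at hl1
  rw [abs_le]
  constructor <;> linarith

/-- sum of inverse squares of primes -/
noncomputable def sdsE : ℝ := ∑' p : Nat.Primes, (p : ℝ) ^ (-2 : ℝ)

theorem sds_log_L {d : ℕ} [NeZero d] (χ : DirichletCharacter ℂ d) {δ : ℝ} (hδ : 0 < δ) :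
    Summable (fun p : Nat.Primes => (χ p).re * (p : ℝ) ^ (-(1 + δ))) ∧
    |Real.log ‖LSeries (fun n => χ n) ((1 + δ : ℝ) : ℂ)‖
      - ∑' p : Nat.Primes, (χ p).re * (p : ℝ) ^ (-(1 + δ))| ≤ sdsE := by
  have hs : 1 < ((1 + δ : ℝ) : ℂ).re := by simpa using hδ
  have hE : Summable (fun p : Nat.Primes => (p : ℝ) ^ (-2 : ℝ)) :=
    Nat.Primes.summable_rpow.mpr (by norm_num)
  have hP : Summable (fun p : Nat.Primes => (p : ℝ) ^ (-(1 + δ))) :=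
    Nat.Primes.summable_rpow.mpr (by linarith)
  have hS : Summable (fun p : Nat.Primes => (χ p).re * (p : ℝ) ^ (-(1 + δ))) := by
    refine Summable.of_norm_bounded hP fun p => ?_
    rw [norm_mul, Real.norm_eq_abs, Real.norm_eq_abs,
      abs_of_nonneg (by positivity : (0:ℝ) ≤ (p : ℝ) ^ (-(1 + δ)))]
    exact mul_le_of_le_one_left (by positivity) ((Complex.abs_re_le_norm _).trans (χ.norm_le_one _))
  refine ⟨hS, ?_⟩
  have hL := DirichletCharacter.summable_neg_log_one_sub_mul_prime_cpow χ hs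
  have hexp := DirichletCharacter.LSeries_eulerProduct_exp_log χ hs
  rw [← hexp, Complex.norm_exp, Real.log_exp, Complex.re_tsum hL]
  have hLre := (Complex.hasSum_re hL.hasSum).summable
  rw [← hLre.tsum_sub hS, ← Real.norm_eq_abs]
  refine tsum_of_norm_bounded hE.hasSum fun p => ?_
  have hp2 : (2 : ℝ) ≤ p := by exact_mod_cast p.prop.two_le
  have hp0 : (0 : ℝ) < p := by linarith
  have hz : χ p * (p : ℂ) ^ (-((1 + δ : ℝ) : ℂ)) = χ p * (((p : ℝ) ^ (-(1 + δ)) : ℝ) : ℂ) := by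
    congr 1
    rw [Complex.ofReal_cpow hp0.le]; push_cast; rfl
  rw [hz]
  set z : ℂ := χ p * (((p : ℝ) ^ (-(1 + δ)) : ℝ) : ℂ) with hzdef
  have hre : (χ p).re * (p : ℝ) ^ (-(1 + δ)) = z.re := by
    rw [hzdef, Complex.re_mul_ofReal]
  rw [hre]
  have hzn : ‖z‖ ≤ (p : ℝ) ^ (-1 : ℝ) := by
    rw [hzdef, norm_mul, Complex.norm_real, Real.norm_eq_abs, abs_of_nonneg (by positivity)]
    refine (mul_le_of_le_one_left (by positivity) (χ.norm_le_one _)).trans ?_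
    exact Real.rpow_le_rpow_of_exponent_le (by linarith) (by linarith)
  have hzh : ‖z‖ ≤ 1 / 2 := by
    refine hzn.trans ?_
    rw [Real.rpow_neg_one, one_div]
    exact inv_anti₀ (by norm_num) hp2
  have hb := Complex.norm_log_one_add_sub_self_le (z := -z) (by rw [norm_neg]; linarith)
  rw [norm_neg] at hb
  have h1 : ‖z‖ ^ 2 * (1 - ‖z‖)⁻¹ / 2 ≤ ‖z‖ ^ 2 := by
    have : (1 - ‖z‖)⁻¹ ≤ 2 := by
      rw [inv_le_comm₀ (by linarith) (by norm_num)]; linarith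
    nlinarith [sq_nonneg ‖z‖]
  have h2 : ‖z‖ ^ 2 ≤ (p : ℝ) ^ (-2 : ℝ) := by
    have := pow_le_pow_left₀ (norm_nonneg z) hzn 2
    refine this.trans (le_of_eq ?_)
    rw [← Real.rpow_natCast, ← Real.rpow_mul hp0.le]; norm_num
  refine le_trans ?_ (hb.trans (h1.trans h2))
  have e : (-Complex.log (1 - z)).re - z.re = -(Complex.log (1 + -z) - -z).re := by
    simp [sub_eq_add_neg]
    ring
  rw [e, norm_neg, Real.norm_eq_abs]
  exact Complex.abs_re_le_norm _

theorem sds_orth {d : ℕ} [NeZero d] (p : ℕ) :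
    ∑ χ : DirichletCharacter ℂ d, (χ (-1)).re * (χ p).re
      = if d ∣ p + 1 then (d.totient : ℝ) else 0 := by
  have h1 : ∀ χ : DirichletCharacter ℂ d, (χ (-1)).re * (χ p).re = (χ (-(p : ZMod d))).re := by
    intro χ
    have h2 : χ (-(p : ZMod d)) = χ (-1) * χ p := by rw [← map_mul]; simp
    have h3 : χ (-1) = 1 ∨ χ (-1) = -1 := by
      have : χ (-1) * χ (-1) = 1 := by rw [← map_mul]; simp
      exact mul_self_eq_one_iff.mp this
    rw [h2]
    rcases h3 with h | h <;> rw [h] <;> simp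
  rw [Finset.sum_congr rfl fun χ _ => h1 χ, ← Complex.re_sum,
    DirichletCharacter.sum_characters_eq]
  have h4 : (-(p : ZMod d) = 1) ↔ d ∣ p + 1 := by
    rw [← ZMod.natCast_eq_zero_iff]
    push_cast
    constructor
    · intro h; rw [← h]; ring
    · intro h; rw [← sub_eq_zero]; linear_combination -h
  by_cases h : d ∣ p + 1
  · rw [if_pos h, if_pos (h4.mpr h)]; simp
  · rw [if_neg h, if_neg (fun h' => h (h4.mp h'))]; simp

theorem sds_key_aux {d : ℕ} [NeZero d] {δ : ℝ} (hδ : 0 < δ)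
    (hδ2 : δ * (128 * sdsC ^ 4 * d ^ 5) ≤ 1) :
    Real.log (1 / δ) / d - (Real.log (128 * sdsC ^ 3) + sdsE) - 6 * Real.log d
      ≤ ∑' p : Nat.Primes, if d ∣ (p : ℕ) + 1 then (p : ℝ) ^ (-(1 + δ)) else 0 := by
  have hd : (1 : ℝ) ≤ d := by exact_mod_cast NeZero.pos d
  have hC := sds_one_le_C
  have hδ1 : δ ≤ 1 := by
    have := one_le_mul_of_one_le_of_one_le (one_le_pow₀ hC (n := 4)) (one_le_pow₀ hd (n := 5))
    nlinarith
  set P := ∑' p : Nat.Primes, if d ∣ (p : ℕ) + 1 then (p : ℝ) ^ (-(1 + δ)) else 0 with hP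
  set B := Real.log (128 * sdsC ^ 3) + 4 * Real.log d with hB
  have hB0 : 0 ≤ B := by
    have h3 : 1 ≤ sdsC ^ 3 := one_le_pow₀ hC
    have : 0 ≤ Real.log (128 * sdsC ^ 3) := Real.log_nonneg (by linarith)
    have : 0 ≤ Real.log d := Real.log_nonneg hd
    positivity
  have hE0 : 0 ≤ sdsE := tsum_nonneg fun p => by positivity
  set T : DirichletCharacter ℂ d → ℝ :=
    fun χ => ∑' p : Nat.Primes, (χ p).re * (p : ℝ) ^ (-(1 + δ)) with hT
  have hsum : ∑ χ : DirichletCharacter ℂ d, (χ (-1)).re * T χ = d.totient * P := by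
    simp_rw [hT, ← tsum_mul_left]
    rw [← Summable.tsum_finsetSum fun χ _ => (sds_log_L χ hδ).1.mul_left _, hP, ← tsum_mul_left]
    refine tsum_congr fun p => ?_
    simp_rw [← mul_assoc]
    rw [← Finset.sum_mul, sds_orth]
    split_ifs <;> simp
  have hpm : ∀ χ : DirichletCharacter ℂ d, |(χ (-1)).re| ≤ 1 := fun χ =>
    (Complex.abs_re_le_norm _).trans (χ.norm_le_one _)
  have hrest : ∀ χ ∈ (Finset.univ : Finset (DirichletCharacter ℂ d)).erase 1,
      -(B + sdsE) ≤ (χ (-1)).re * T χ := by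
    intro χ hχ
    have h1 := sds_abs_log χ (Finset.ne_of_mem_erase hχ) hδ hδ2
    have h2 := (sds_log_L χ hδ).2
    have h3 : |T χ| ≤ B + sdsE := by
      rw [abs_le] at h1 h2 ⊢
      constructor <;> linarith [h1.1, h1.2, h2.1, h2.2]
    have h4 : |(χ (-1)).re * T χ| ≤ B + sdsE := by
      rw [abs_mul]
      exact (mul_le_of_le_one_left (abs_nonneg _) (hpm χ)).trans h3
    exact (abs_le.mp h4).1
  have hone : Real.log (1 / δ) - 2 * Real.log d - sdsE
      ≤ ((1 : DirichletCharacter ℂ d) (-1)).re * T 1 := by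
    have h1 : ((1 : DirichletCharacter ℂ d) (-1)) = 1 :=
      MulChar.one_apply (by exact isUnit_one.neg)
    rw [h1, Complex.one_re, one_mul]
    have h2 := (sds_log_L (1 : DirichletCharacter ℂ d) hδ).2
    have h3 := Real.log_le_log (by positivity) (sds_triv_lower (d := d) hδ hδ1)
    have h4 : Real.log (1 / (δ * d ^ 2)) = Real.log (1 / δ) - 2 * Real.log d := by
      rw [one_div, one_div, Real.log_inv, Real.log_inv, Real.log_mul (by positivity) (by positivity),
        Real.log_pow]
      push_cast; ring
    rw [h4] at h3
    linarith [(abs_le.mp h2).2]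
  have hcard : (Finset.univ : Finset (DirichletCharacter ℂ d)).card = d.totient := by
    rw [Finset.card_univ, ← Nat.card_eq_fintype_card]
    exact DirichletCharacter.card_eq_totient_of_hasEnoughRootsOfUnity ℂ d
  have hφ : (1 : ℝ) ≤ d.totient := by exact_mod_cast Nat.totient_pos.mpr (NeZero.pos d)
  have hφd : (d.totient : ℝ) ≤ d := by exact_mod_cast Nat.totient_le d
  have htot : Real.log (1 / δ) - 2 * Real.log d - sdsE - (d.totient - 1) * (B + sdsE)
      ≤ d.totient * P := by
    rw [← hsum, ← Finset.add_sum_erase _ _ (Finset.mem_univ (1 : DirichletCharacter ℂ d))]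
    have h5 := Finset.sum_le_sum hrest
    rw [Finset.sum_const, Finset.card_erase_of_mem (Finset.mem_univ _), hcard, nsmul_eq_mul,
      Nat.cast_sub (Nat.totient_pos.mpr (NeZero.pos d))] at h5
    push_cast at h5
    linarith
  have hlog : 0 ≤ Real.log (1 / δ) := Real.log_nonneg (by rw [le_div_iff₀ hδ]; linarith)
  have hld : 0 ≤ Real.log d := Real.log_nonneg hd
  have h6 : Real.log (1 / δ) / d ≤ Real.log (1 / δ) / d.totient := by gcongr
  have h7 : Real.log (1 / δ) / d.totient ≤ P + (B + sdsE) + 2 * Real.log d := by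
    rw [div_le_iff₀ (by linarith)]
    nlinarith
  linarith

theorem sds_key : ∃ K0 K1 : ℝ, 0 < K1 ∧ ∀ d : ℕ, 0 < d → ∀ δ : ℝ, 0 < δ → δ * (K1 * d ^ 5) ≤ 1 →
    Real.log (1 / δ) / d - K0 - 6 * Real.log d
      ≤ ∑' p : Nat.Primes, if d ∣ (p : ℕ) + 1 then (p : ℝ) ^ (-(1 + δ)) else 0 := by
  have hC := sds_one_le_C
  refine ⟨Real.log (128 * sdsC ^ 3) + sdsE, 128 * sdsC ^ 4, by positivity, ?_⟩
  intro d hd δ hδ h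
  haveI : NeZero d := ⟨hd.ne'⟩
  exact sds_key_aux hδ h

lemma sds_trunc (d Z W : ℕ) (δ : ℝ) (hδ : 0 < δ) (hZ : 1 ≤ Z) :
    (∑' p : Nat.Primes, if d ∣ (p : ℕ) + 1 then (p : ℝ) ^ (-(1 + δ)) else 0)
    ≤ ∑ p ∈ (Finset.Icc 1 Z).filter (fun p => p.Prime ∧ W < p ∧ d ∣ p + 1), (1 / (p:ℝ))
      + (1 + Real.log W) + (Z:ℝ) ^ (-δ) / δ := by
  set g : ℕ → ℝ := fun n => if n.Prime ∧ d ∣ n + 1 then (n:ℝ) ^ (-(1 + δ)) else 0 with hg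
  have hg0 : ∀ n, 0 ≤ g n := by
    intro n; simp only [hg]; split_ifs
    · positivity
    · exact le_rfl
  have hgle : ∀ n, g n ≤ (n:ℝ) ^ (-(1 + δ)) := by
    intro n; simp only [hg]; split_ifs
    · exact le_rfl
    · positivity
  have hsum : Summable g := by
    refine Summable.of_nonneg_of_le hg0 hgle ?_
    rw [Real.summable_nat_rpow]; linarith
  have h1 : (∑' p : Nat.Primes, if d ∣ (p : ℕ) + 1 then (p : ℝ) ^ (-(1 + δ)) else 0) = ∑' p : Nat.Primes, g p := by
    apply tsum_congr
    intro p
    simp [hg, p.2]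
  rw [h1]
  have h2 : ∑' p : Nat.Primes, g p ≤ ∑' n, g n :=
    tsum_comp_le_tsum_of_inj hsum hg0 (i := fun p : Nat.Primes => (p:ℕ)) Subtype.val_injective
  have h3 := hsum.sum_add_tsum_nat_add (Z+1)
  have h4 : ∑' i, g (i + (Z+1)) ≤ (Z:ℝ) ^ (-δ) / δ := by
    refine le_trans ?_ (sds_tail Z hZ hδ)
    refine Summable.tsum_le_tsum ?_ ((summable_nat_add_iff (Z+1)).2 hsum) (sds_summable_shift Z hδ)
    intro i
    refine (hgle _).trans (le_of_eq ?_)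
    push_cast; ring_nf
  have h5 : ∑ n ∈ Finset.range (Z+1), g n ≤
      ∑ p ∈ (Finset.Icc 1 Z).filter (fun p => p.Prime ∧ W < p ∧ d ∣ p + 1), (1 / (p:ℝ))
      + ∑ n ∈ Finset.Icc 1 W, (1 / (n:ℝ)) := by
    have key : ∀ n, 1 ≤ n → g n ≤ 1 / (n:ℝ) := by
      intro n hn
      refine (hgle n).trans ?_
      have : (1:ℝ) ≤ n := by exact_mod_cast hn
      rw [one_div, ← Real.rpow_neg_one]
      exact Real.rpow_le_rpow_of_exponent_le this (by linarith)
    have hsub : ∑ n ∈ Finset.range (Z+1), g n ≤ ∑ n ∈ (Finset.Icc 1 Z).filter (fun p => p.Prime ∧ W < p ∧ d ∣ p + 1) ∪ Finset.Icc 1 W, g n := by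
      rw [← Finset.sum_filter_ne_zero]
      apply Finset.sum_le_sum_of_subset_of_nonneg
      · intro n hn
        simp only [Finset.mem_filter, Finset.mem_range] at hn
        have hp : n.Prime ∧ d ∣ n + 1 := by
          by_contra h
          exact hn.2 (by simp only [hg]; rw [if_neg h])
        have := hp.1.one_lt
        simp only [Finset.mem_union, Finset.mem_filter, Finset.mem_Icc]
        by_cases hw : W < n
        · left; exact ⟨⟨by omega, by omega⟩, hp.1, hw, hp.2⟩
        · right; omega
      · intros; exact hg0 _
    refine hsub.trans ?_
    have hui := Finset.sum_union_inter (s₁ := (Finset.Icc 1 Z).filter (fun p => p.Prime ∧ W < p ∧ d ∣ p + 1)) (s₂ := Finset.Icc 1 W) (f := g)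
    have hin : 0 ≤ ∑ n ∈ (Finset.Icc 1 Z).filter (fun p => p.Prime ∧ W < p ∧ d ∣ p + 1) ∩ Finset.Icc 1 W, g n := Finset.sum_nonneg (fun _ _ => hg0 _)
    have ha : ∑ n ∈ (Finset.Icc 1 Z).filter (fun p => p.Prime ∧ W < p ∧ d ∣ p + 1), g n ≤ ∑ n ∈ (Finset.Icc 1 Z).filter (fun p => p.Prime ∧ W < p ∧ d ∣ p + 1), (1/(n:ℝ)) := by
      apply Finset.sum_le_sum
      intro n hn
      simp only [Finset.mem_filter, Finset.mem_Icc] at hn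
      exact key n hn.1.1
    have hb : ∑ n ∈ Finset.Icc 1 W, g n ≤ ∑ n ∈ Finset.Icc 1 W, (1/(n:ℝ)) := by
      apply Finset.sum_le_sum
      intro n hn
      simp only [Finset.mem_Icc] at hn
      exact key n hn.1
    linarith
  have h6 : ∑ n ∈ Finset.Icc 1 W, (1 / (n:ℝ)) ≤ 1 + Real.log W := by
    have := harmonic_le_one_add_log W
    rw [harmonic_eq_sum_Icc] at this
    push_cast at this
    simpa [one_div] using this
  linarith

noncomputable def sdsP (d : ℕ) (L : ℝ) : Finset ℕ :=
  (Finset.Icc 1 ⌈Real.exp (Real.exp (L/2))⌉₊).filter (fun p => p.Prime ∧ ⌊L⌋₊ < p ∧ d ∣ p + 1)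

lemma sds_lower (ε : ℝ) (hε : 0 < ε) (hε1 : ε < 1) :
    ∀ᶠ L : ℝ in atTop, ∀ d : ℕ, 0 < d → (d:ℝ) ≤ L ^ (1 - ε) →
      L ^ (ε/2) ≤ ∑ p ∈ sdsP d L, (1 / (p:ℝ)) := by
  obtain ⟨K0, K1, hK1, hkey⟩ := sds_key
  have e1 : ∀ᶠ L : ℝ in atTop, Real.log L ≤ L ^ (ε/2) := by
    have := (isLittleO_log_rpow_atTop (show 0 < ε/2 by linarith)).bound (show (0:ℝ) < 1 by norm_num)
    filter_upwards [this, eventually_ge_atTop 1] with L h hL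
    rw [one_mul, Real.norm_of_nonneg (Real.log_nonneg hL), Real.norm_of_nonneg (by positivity)] at h
    exact h
  have e2 : ∀ᶠ L : ℝ in atTop, 40 + |K0| ≤ L ^ (ε/2) :=
    (tendsto_rpow_atTop (show 0 < ε/2 by linarith)).eventually_ge_atTop _
  have e3 : ∀ᶠ L : ℝ in atTop, Real.exp (-(L/4)) * (K1 * L^5) ≤ 1 := by
    have h := (Real.tendsto_pow_mul_exp_neg_atTop_nhds_zero 5).comp (tendsto_id.atTop_div_const (show (0:ℝ) < 4 by norm_num))
    have h' := h.const_mul (K1 * 4^5)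
    rw [mul_zero] at h'
    filter_upwards [h'.eventually_le_const (show (0:ℝ) < 1 by norm_num)] with L hL
    simp only [Function.comp, id] at hL
    refine le_trans (le_of_eq ?_) hL
    ring
  filter_upwards [e1, e2, e3, eventually_ge_atTop 1] with L h1 h2 h3 hL d hd hdL
  have hd1 : (1:ℝ) ≤ d := by exact_mod_cast hd
  have hLp : 0 < L := by linarith
  have hdL' : (d:ℝ) ≤ L := hdL.trans (by
    calc L ^ (1-ε) ≤ L ^ (1:ℝ) := Real.rpow_le_rpow_of_exponent_le hL (by linarith)
      _ = L := Real.rpow_one L)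
  have hk := hkey d hd (Real.exp (-(L/4))) (Real.exp_pos _) (by
    refine le_trans ?_ h3
    gcongr)
  have ht := sds_trunc d ⌈Real.exp (Real.exp (L/2))⌉₊ ⌊L⌋₊ (Real.exp (-(L/4))) (Real.exp_pos _) (by
    exact Nat.one_le_iff_ne_zero.2 (Nat.ceil_pos.2 (Real.exp_pos _)).ne')
  have hlog : Real.log (1 / Real.exp (-(L/4))) = L/4 := by
    rw [one_div, ← Real.exp_neg, Real.log_exp]; ring
  rw [hlog] at hk
  have htail : ((⌈Real.exp (Real.exp (L/2))⌉₊ : ℕ) : ℝ) ^ (-Real.exp (-(L/4))) / Real.exp (-(L/4)) ≤ 1 := by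
    rw [div_le_one (Real.exp_pos _)]
    calc ((⌈Real.exp (Real.exp (L/2))⌉₊ : ℕ) : ℝ) ^ (-Real.exp (-(L/4)))
        ≤ (Real.exp (Real.exp (L/2))) ^ (-Real.exp (-(L/4))) :=
          Real.rpow_le_rpow_of_nonpos (Real.exp_pos _) (Nat.le_ceil _) (by
            have := Real.exp_pos (-(L/4)); linarith)
      _ = Real.exp (-Real.exp (L/4)) := by
          rw [← Real.exp_mul]
          congr 1
          rw [mul_neg, ← Real.exp_add]
          congr 2
          ring
      _ ≤ Real.exp (-(L/4)) := by
          apply Real.exp_le_exp.2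
          have := Real.add_one_le_exp (L/4)
          linarith
  have hlogd : Real.log d ≤ Real.log L := Real.log_le_log (by linarith) hdL'
  have hlogW : Real.log (⌊L⌋₊ : ℕ) ≤ Real.log L := by
    apply Real.log_le_log
    · exact_mod_cast Nat.floor_pos.2 hL
    · exact Nat.floor_le hLp.le
  have hmain : L ^ (ε/2) * L ^ (ε/2) / 4 ≤ L/4/d := by
    rw [le_div_iff₀ (by linarith), ← Real.rpow_add hLp]
    calc L ^ (ε/2+ε/2) / 4 * d ≤ L ^ (ε/2+ε/2) / 4 * L ^ (1-ε) := by gcongr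
      _ = (L ^ (ε/2+ε/2) * L ^ (1-ε)) / 4 := by ring
      _ = L/4 := by
        rw [← Real.rpow_add hLp]
        have : ε/2+ε/2+(1-ε) = 1 := by ring
        rw [this, Real.rpow_one]
  unfold sdsP
  have := le_abs_self K0
  have := abs_nonneg K0
  nlinarith

lemma sds_bonf (S : Finset ℕ) (k : ℕ) :
    (if S = ∅ then (1:ℤ) else 0) ≤ ∑ T ∈ S.powerset, if T.card ≤ 2*k then (-1:ℤ)^T.card else 0 := by
  rw [Finset.sum_powerset_apply_card (fun m => if m ≤ 2*k then (-1:ℤ)^m else 0)]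
  have h : ∑ m ∈ Finset.range (S.card + 1), S.card.choose m • (if m ≤ 2*k then (-1:ℤ)^m else 0)
      = ∑ m ∈ Finset.range (2*k+1), ((-1)^m * S.card.choose m : ℤ) := by
    have a : ∑ m ∈ Finset.range (S.card + 1), S.card.choose m • (if m ≤ 2*k then (-1:ℤ)^m else 0)
      = ∑ m ∈ Finset.range (S.card + 1 + (2*k+1)), S.card.choose m • (if m ≤ 2*k then (-1:ℤ)^m else 0) := by
      apply Finset.sum_subset
      · intro m hm; simp only [Finset.mem_range] at *; omega
      · intro m _ hm
        simp only [Finset.mem_range] at hm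
        rw [Nat.choose_eq_zero_of_lt (by omega), zero_smul]
    have b : ∑ m ∈ Finset.range (2*k+1), ((-1)^m * S.card.choose m : ℤ)
      = ∑ m ∈ Finset.range (S.card + 1 + (2*k+1)), S.card.choose m • (if m ≤ 2*k then (-1:ℤ)^m else 0) := by
      symm
      rw [← Finset.sum_subset (s₁ := Finset.range (2*k+1))]
      · apply Finset.sum_congr rfl
        intro m hm
        simp only [Finset.mem_range] at hm
        rw [if_pos (by omega), nsmul_eq_mul, mul_comm]
      · intro m hm; simp only [Finset.mem_range] at *; omega
      · intro m _ hm
        simp only [Finset.mem_range] at hm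
        rw [if_neg (by omega), smul_zero]
    rw [a, b]
  rw [h]
  by_cases hS : S = ∅
  · subst hS
    rw [if_pos rfl]
    rw [Finset.sum_range_succ']
    simp
  · rw [if_neg hS]
    obtain ⟨c, hc⟩ : ∃ c, S.card = c + 1 := ⟨S.card - 1, by
      have := Finset.card_pos.2 (Finset.nonempty_iff_ne_empty.2 hS); omega⟩
    rw [hc, Int.alternating_sum_range_choose_eq_choose]
    rw [pow_mul]; simp

lemma sds_brun1 (P : Finset ℕ) (hP : ∀ p ∈ P, p.Prime) (N k : ℕ) :
    ((((Finset.Icc 1 N).filter (fun n => ∀ p ∈ P, ¬ p ∣ n)).card : ℕ) : ℝ) ≤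
     ∑ T ∈ P.powerset, if T.card ≤ 2*k then ((-1:ℝ)^T.card * (N / (∏ p ∈ T, p) : ℕ)) else 0 := by
  have hZ : (((Finset.Icc 1 N).filter (fun n => ∀ p ∈ P, ¬ p ∣ n)).card : ℤ) ≤
     ∑ T ∈ P.powerset, if T.card ≤ 2*k then ((-1:ℤ)^T.card * (N / (∏ p ∈ T, p) : ℕ)) else 0 := by
    calc (((Finset.Icc 1 N).filter (fun n => ∀ p ∈ P, ¬ p ∣ n)).card : ℤ)
        = ∑ n ∈ Finset.Icc 1 N, if (P.filter (fun p => p ∣ n)) = ∅ then (1:ℤ) else 0 := by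
          rw [Finset.card_filter]
          push_cast
          apply Finset.sum_congr rfl
          intro n _
          simp [Finset.filter_eq_empty_iff]
      _ ≤ ∑ n ∈ Finset.Icc 1 N, ∑ T ∈ (P.filter (fun p => p ∣ n)).powerset, (if T.card ≤ 2*k then (-1:ℤ)^T.card else 0) :=
          Finset.sum_le_sum (fun n _ => sds_bonf _ k)
      _ = ∑ n ∈ Finset.Icc 1 N, ∑ T ∈ P.powerset, (if (∏ p ∈ T, p) ∣ n then (if T.card ≤ 2*k then (-1:ℤ)^T.card else 0) else 0) := by
          apply Finset.sum_congr rfl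
          intro n _
          rw [← Finset.sum_filter (p := fun T : Finset ℕ => (∏ p ∈ T, p) ∣ n)]
          apply Finset.sum_congr _ (fun _ _ => rfl)
          ext T
          simp only [Finset.mem_powerset, Finset.mem_filter]
          constructor
          · intro h
            refine ⟨h.trans (Finset.filter_subset _ _), ?_⟩
            apply Finset.prod_primes_dvd
            · intro p hp; exact (hP p (Finset.mem_filter.1 (h hp)).1).prime
            · intro p hp; exact (Finset.mem_filter.1 (h hp)).2
          · rintro ⟨h1, h2⟩ p hp
            exact Finset.mem_filter.2 ⟨h1 hp, (Finset.dvd_prod_of_mem _ hp).trans h2⟩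
      _ = _ := by
          rw [Finset.sum_comm]
          apply Finset.sum_congr rfl
          intro T _
          rw [← Finset.sum_filter, Finset.sum_const, nsmul_eq_mul]
          have := Nat.Ioc_filter_dvd_card_eq_div N (∏ p ∈ T, p)
          have h2 : Finset.Ioc 0 N = Finset.Icc 1 N := rfl
          rw [h2] at this
          rw [this]
          split_ifs <;> ring
  have := (Int.cast_le (R := ℝ)).2 hZ
  rw [Int.cast_sum] at this
  refine le_trans (le_of_eq ?_) (this.trans (le_of_eq ?_))
  · simp
  · apply Finset.sum_congr rfl
    intro T _
    split_ifs
    · rw [Int.cast_mul, Int.cast_pow, Int.cast_neg, Int.cast_one, Int.cast_natCast]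
    · simp

lemma sds_brun (P : Finset ℕ) (hP : ∀ p ∈ P, p.Prime) (N k : ℕ) (R : ℝ) (hR : 1 ≤ R)
    (hPR : (P.card : ℝ) ≤ R) :
    ((((Finset.Icc 1 N).filter (fun n => ∀ p ∈ P, ¬ p ∣ n)).card : ℕ) : ℝ) ≤
     N * (Real.exp (-∑ p ∈ P, (1/(p:ℝ))) + Real.exp (Real.exp 1 * ∑ p ∈ P, (1/(p:ℝ)) - 2*k))
      + Real.exp 1 * R ^ (2*k) := by
  refine (sds_brun1 P hP N k).trans ?_
  have hR0 : 0 < R := by linarith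
  -- pointwise bound
  have hpt : ∀ T ∈ P.powerset, (if T.card ≤ 2*k then ((-1:ℝ)^T.card * (N / (∏ p ∈ T, p) : ℕ)) else 0)
      ≤ N * ∏ p ∈ T, (-(1/(p:ℝ))) + N * (Real.exp (-(2*k)) * ∏ p ∈ T, (Real.exp 1 / p)) + R^(2*k) * ∏ p ∈ T, (1/R) := by
    intro T hT
    rw [Finset.mem_powerset] at hT
    have e1 : ∏ p ∈ T, (-(1/(p:ℝ))) = (-1)^T.card * (1 / (∏ p ∈ T, p : ℕ)) := by
      rw [Finset.prod_neg]; simp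
    have e2 : ∏ p ∈ T, (Real.exp 1 / p) = Real.exp (T.card) * (1 / (∏ p ∈ T, p : ℕ)) := by
      rw [Finset.prod_div_distrib, Finset.prod_const, ← Real.exp_nat_mul]
      push_cast; rw [mul_one]; ring
    rw [e1, e2, Finset.prod_const]
    set D := ∏ p ∈ T, p with hD
    have hDpos : 0 < D := Finset.prod_pos (fun p hp => (hP p (hT hp)).pos)
    have hDr : (0:ℝ) < D := by exact_mod_cast hDpos
    have f1 : ((N / D : ℕ) : ℝ) ≤ N * (1/D) := by
      rw [mul_one_div]; exact Nat.cast_div_le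
    have f2 : N * (1/D) - 1 ≤ ((N / D : ℕ) : ℝ) := by
      have : N < D * (N/D + 1) := Nat.lt_mul_div_succ N hDpos
      have h' : (N:ℝ) < D * ((N/D : ℕ) + 1) := by exact_mod_cast this
      rw [mul_one_div, sub_le_iff_le_add, div_le_iff₀ hDr]
      linarith
    have hge : 0 ≤ N * (1/(D:ℝ)) := by positivity
    split_ifs with hc
    · have g1 : 1 ≤ R^(2*k) * (1/R)^T.card := by
        rw [one_div, inv_pow, ← div_eq_mul_inv, one_le_div (by positivity)]
        exact pow_le_pow_right₀ hR hc
      have g2 : 0 ≤ N * (Real.exp (-(2*k)) * (Real.exp (T.card) * (1/(D:ℝ)))) := by positivity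
      rcases neg_one_pow_eq_or ℝ T.card with h | h <;> rw [h] <;> nlinarith
    · have g1 : 0 ≤ R^(2*k) * (1/R)^T.card := by positivity
      have g3 : 1 ≤ Real.exp (-(2*k)) * Real.exp (T.card) := by
        rw [← Real.exp_add]
        apply Real.one_le_exp
        have : ((2*k:ℕ):ℝ) ≤ T.card := by exact_mod_cast (by omega)
        push_cast at this; linarith
      have g2 : N * (1/(D:ℝ)) ≤ N * (Real.exp (-(2*k)) * (Real.exp (T.card) * (1/(D:ℝ)))) := by
        calc N * (1/(D:ℝ)) = 1 * (N * (1/(D:ℝ))) := by ring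
          _ ≤ (Real.exp (-(2*k)) * Real.exp (T.card)) * (N * (1/(D:ℝ))) := by gcongr
          _ = _ := by ring
      rcases neg_one_pow_eq_or ℝ T.card with h | h <;> rw [h] <;> nlinarith
  refine (Finset.sum_le_sum hpt).trans ?_
  rw [Finset.sum_add_distrib, Finset.sum_add_distrib, ← Finset.mul_sum, ← Finset.mul_sum, ← Finset.mul_sum,
    ← Finset.mul_sum, ← Finset.prod_one_add, ← Finset.prod_one_add, ← Finset.prod_one_add]
  have b1 : ∏ p ∈ P, (1 + -(1/(p:ℝ))) ≤ Real.exp (-∑ p ∈ P, (1/(p:ℝ))) := by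
    rw [← Finset.sum_neg_distrib, Real.exp_sum]
    apply Finset.prod_le_prod
    · intro p hp
      have : (1:ℝ) ≤ p := by exact_mod_cast (hP p hp).one_lt.le
      have : 1/(p:ℝ) ≤ 1 := by rw [div_le_one (by linarith)]; exact this
      linarith
    · intro p hp
      have := Real.add_one_le_exp (-(1/(p:ℝ)))
      linarith
  have b2 : ∏ p ∈ P, (1 + Real.exp 1 / (p:ℝ)) ≤ Real.exp (Real.exp 1 * ∑ p ∈ P, (1/(p:ℝ))) := by
    rw [Finset.mul_sum, Real.exp_sum]
    apply Finset.prod_le_prod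
    · intro p hp; positivity
    · intro p hp
      have := Real.add_one_le_exp (Real.exp 1 * (1/(p:ℝ)))
      rw [mul_one_div] at *
      linarith
  have b3 : ∏ p ∈ P, (1 + 1/R) ≤ Real.exp 1 := by
    calc ∏ p ∈ P, (1 + 1/R) ≤ ∏ p ∈ P, Real.exp (1/R) := by
          apply Finset.prod_le_prod
          · intro p hp; positivity
          · intro p hp
            have := Real.add_one_le_exp (1/R)
            linarith
      _ = Real.exp (P.card * (1/R)) := by rw [Finset.prod_const, ← Real.exp_nat_mul]
      _ ≤ Real.exp 1 := by
          apply Real.exp_le_exp.2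
          rw [mul_one_div, div_le_one hR0]; exact hPR
  have b2' : Real.exp (-(2*k)) * ∏ p ∈ P, (1 + Real.exp 1 / (p:ℝ)) ≤ Real.exp (Real.exp 1 * ∑ p ∈ P, (1/(p:ℝ)) - 2*k) := by
    rw [sub_eq_add_neg, Real.exp_add, mul_comm]
    gcongr
  have c1 := mul_le_mul_of_nonneg_left b1 (Nat.cast_nonneg (α := ℝ) N)
  have c2 := mul_le_mul_of_nonneg_left b2' (Nat.cast_nonneg (α := ℝ) N)
  have c3 := mul_le_mul_of_nonneg_left b3 (show 0 ≤ R^(2*k) by positivity)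
  linarith

lemma sds_subset (P : Finset ℕ) (hP : ∀ p ∈ P, p.Prime) (A : ℝ) (hA : 0 ≤ A)
    (h : A ≤ ∑ p ∈ P, (1/(p:ℝ))) :
    ∃ Q ⊆ P, A ≤ ∑ p ∈ Q, (1/(p:ℝ)) ∧ ∑ p ∈ Q, (1/(p:ℝ)) ≤ A + 1 := by
  induction P using Finset.induction_on with
  | empty => exact ⟨∅, by simp, by simpa using h, by simp; linarith⟩
  | insert a t ha ih =>
    by_cases ht : A ≤ ∑ p ∈ t, (1/(p:ℝ))
    · obtain ⟨Q, h1, h2⟩ := ih (fun p hp => hP p (Finset.mem_insert_of_mem hp)) ht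
      exact ⟨Q, h1.trans (Finset.subset_insert _ _), h2⟩
    · refine ⟨_, Finset.Subset.refl _, h, ?_⟩
      rw [Finset.sum_insert ha]
      have : (1:ℝ) ≤ a := by exact_mod_cast (hP a (Finset.mem_insert_self _ _)).one_lt.le
      have : 1/(a:ℝ) ≤ 1 := by rw [div_le_one (by linarith)]; exact this
      linarith

lemma sds_sift (P : Finset ℕ) (hP : ∀ p ∈ P, p.Prime) (N : ℕ) (A R : ℝ) (hA : 0 ≤ A) (hR : 1 ≤ R)
    (hPR : (P.card : ℝ) ≤ R) (h : A ≤ ∑ p ∈ P, (1/(p:ℝ))) :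
    ((((Finset.Icc 1 N).filter (fun n => ∀ p ∈ P, ¬ p ∣ n)).card : ℕ) : ℝ) ≤
     N * (2 * Real.exp (-A)) + Real.exp 1 * R ^ (4*A+6) := by
  obtain ⟨Q, hQ, hQ1, hQ2⟩ := sds_subset P hP A hA h
  have hb := sds_brun Q (fun p hp => hP p (hQ hp)) N ⌈2*(A+1)⌉₊ R hR
    (le_trans (by exact_mod_cast Finset.card_le_card hQ) hPR)
  have hk1 : 2*(A+1) ≤ (⌈2*(A+1)⌉₊ : ℝ) := Nat.le_ceil _
  have hk2 : (⌈2*(A+1)⌉₊ : ℝ) < 2*(A+1) + 1 := Nat.ceil_lt_add_one (by linarith)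
  have hmono : ((((Finset.Icc 1 N).filter (fun n => ∀ p ∈ P, ¬ p ∣ n)).card : ℕ) : ℝ) ≤
     ((((Finset.Icc 1 N).filter (fun n => ∀ p ∈ Q, ¬ p ∣ n)).card : ℕ) : ℝ) := by
    norm_cast
    apply Finset.card_le_card
    intro n hn
    rw [Finset.mem_filter] at *
    exact ⟨hn.1, fun p hp => hn.2 p (hQ hp)⟩
  refine hmono.trans (hb.trans ?_)
  have he : Real.exp 1 < 2.7182818286 := Real.exp_one_lt_d9
  have a1 : Real.exp (-∑ p ∈ Q, (1/(p:ℝ))) ≤ Real.exp (-A) := Real.exp_le_exp.2 (by linarith)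
  have a2 : Real.exp (Real.exp 1 * ∑ p ∈ Q, (1/(p:ℝ)) - 2*⌈2*(A+1)⌉₊) ≤ Real.exp (-A) := by
    apply Real.exp_le_exp.2
    have : Real.exp 1 * ∑ p ∈ Q, (1/(p:ℝ)) ≤ 2.8 * (A+1) := by
      apply mul_le_mul (by linarith) hQ2 (by linarith) (by norm_num)
    linarith
  have a3 : R ^ (2*⌈2*(A+1)⌉₊) ≤ R ^ (4*A+6) := by
    rw [← Real.rpow_natCast]
    apply Real.rpow_le_rpow_of_exponent_le hR
    push_cast; linarith
  have hN : (0:ℝ) ≤ N := Nat.cast_nonneg N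
  have he0 := Real.exp_pos 1
  gcongr
  linarith

lemma sds_sq (N W : ℕ) (hW : 1 ≤ W) :
    ((((Finset.Icc 1 N).filter (fun n => ∃ m, W < m ∧ m^2 ∣ n)).card : ℕ) : ℝ) ≤ N * (1 / (W:ℝ)) := by
  have hsub : (Finset.Icc 1 N).filter (fun n => ∃ m, W < m ∧ m^2 ∣ n) ⊆
      (Finset.Ioc W (W+N)).biUnion (fun m => (Finset.Ioc 0 N).filter (fun n => m^2 ∣ n)) := by
    intro n hn
    simp only [Finset.mem_filter, Finset.mem_Icc, Finset.mem_biUnion, Finset.mem_Ioc] at *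
    obtain ⟨⟨h1, h2⟩, m, hm, hmn⟩ := hn
    have := Nat.le_of_dvd (by omega) hmn
    have : m ≤ m^2 := Nat.le_self_pow (by norm_num) m
    exact ⟨m, ⟨hm, by omega⟩, ⟨by omega, h2⟩, hmn⟩
  calc ((((Finset.Icc 1 N).filter (fun n => ∃ m, W < m ∧ m^2 ∣ n)).card : ℕ) : ℝ)
      ≤ ∑ m ∈ Finset.Ioc W (W+N), (((Finset.Ioc 0 N).filter (fun n => m^2 ∣ n)).card : ℝ) := by
        exact_mod_cast (Finset.card_le_card hsub).trans Finset.card_biUnion_le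
    _ ≤ ∑ m ∈ Finset.Ioc W (W+N), (N:ℝ) * ((m:ℝ)^2)⁻¹ := by
        apply Finset.sum_le_sum
        intro m _
        have := Nat.Ioc_filter_dvd_card_eq_div N (m^2)
        rw [this]
        have h := Nat.cast_div_le (α := ℝ) (m := N) (n := m^2)
        push_cast at h
        rw [← div_eq_mul_inv]
        exact h
    _ ≤ N * (1 / (W:ℝ)) := by
        rw [← Finset.mul_sum]
        have h := sum_Ioc_inv_sq_le_sub (α := ℝ) (k := W) (n := W+N) (by omega) (by omega)
        have : (0:ℝ) ≤ ((W+N : ℕ):ℝ)⁻¹ := by positivity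
        rw [one_div]
        gcongr
        linarith

lemma sds_sigma (n p d : ℕ) (hp : p.Prime) (hpn : p ∣ n) (hsq : ¬ p^2 ∣ n) (hd : d ∣ p + 1) :
    d ∣ sigma1 n := by
  obtain ⟨m, rfl⟩ := hpn
  have hpm : ¬ p ∣ m := by
    intro h
    apply hsq
    rw [pow_two]
    exact Nat.mul_dvd_mul_left p h
  have hc : p.Coprime m := (Nat.Prime.coprime_iff_not_dvd hp).2 hpm
  unfold sigma1
  rw [ArithmeticFunction.isMultiplicative_sigma.map_mul_of_coprime hc]
  have : ArithmeticFunction.sigma 1 p = p + 1 := by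
    rw [ArithmeticFunction.sigma_one_apply, hp.divisors, Finset.sum_pair hp.one_lt.ne]
    ring
  rw [this]
  exact hd.mul_right _

lemma sds_count (ε L x : ℝ) (hε : 0 < ε) (hε1 : ε < 1) (hL : 200 ≤ L) (hx : x = Real.exp (Real.exp L))
    (hlow : ∀ d : ℕ, 0 < d → (d:ℝ) ≤ L ^ (1 - ε) → L ^ (ε/2) ≤ ∑ p ∈ sdsP d L, (1 / (p:ℝ))) :
    (((Finset.Icc 1 ⌊x⌋₊).filter
        (fun n => ∃ d : ℕ, 0 < d ∧ (d : ℝ) ≤ L ^ (1 - ε) ∧ ¬ d ∣ sigma1 n)).card : ℝ)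
      ≤ x * (2 / L + 2 * L * Real.exp (-(L ^ (ε/2))) + Real.exp 1 * (L * Real.exp (-(L/2)))) := by
  set N := ⌊x⌋₊ with hN
  set W := ⌊L⌋₊ with hW
  set Y := ⌊L ^ (1 - ε)⌋₊ with hY
  set A := L ^ (ε/2) with hA
  set R : ℝ := ((⌈Real.exp (Real.exp (L/2))⌉₊ : ℕ) : ℝ) with hR
  have hL0 : 0 < L := by linarith
  have hx0 : 0 < x := by rw [hx]; exact Real.exp_pos _
  have hNx : (N:ℝ) ≤ x := Nat.floor_le hx0.le
  have hpowle : ∀ a : ℝ, a ≤ 1 → L ^ a ≤ L := fun a ha => by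
    calc L ^ a ≤ L ^ (1:ℝ) := Real.rpow_le_rpow_of_exponent_le (by linarith) ha
      _ = L := Real.rpow_one L
  have hYL : (Y:ℝ) ≤ L := (Nat.floor_le (by positivity)).trans (hpowle _ (by linarith))
  have hA0 : 0 ≤ A := by positivity
  have hAL : A ≤ L := hpowle _ (by linarith)
  have hW1 : 1 ≤ W := Nat.floor_pos.2 (by linarith)
  have hWL : L / 2 ≤ W := by
    have := Nat.lt_floor_add_one L
    linarith
  have hR1 : 1 ≤ R := by
    have : 0 < ⌈Real.exp (Real.exp (L/2))⌉₊ := Nat.ceil_pos.2 (Real.exp_pos _)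
    rw [hR]; exact_mod_cast this
  have hsub : (Finset.Icc 1 N).filter
        (fun n => ∃ d : ℕ, 0 < d ∧ (d : ℝ) ≤ L ^ (1 - ε) ∧ ¬ d ∣ sigma1 n) ⊆
      (Finset.Icc 1 N).filter (fun n => ∃ m, W < m ∧ m^2 ∣ n) ∪
      (Finset.Icc 1 Y).biUnion (fun d => (Finset.Icc 1 N).filter (fun n => ∀ p ∈ sdsP d L, ¬ p ∣ n)) := by
    intro n hn
    rw [Finset.mem_filter] at hn
    obtain ⟨hn1, d, hd0, hdY, hd⟩ := hn
    rw [Finset.mem_union]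
    by_contra hcon
    push Not at hcon
    obtain ⟨hc1, hc2⟩ := hcon
    simp only [Finset.mem_filter, Finset.mem_biUnion, not_and, not_exists] at hc1 hc2
    have hdI : d ∈ Finset.Icc 1 Y := Finset.mem_Icc.2 ⟨hd0, Nat.le_floor hdY⟩
    have h2 := hc2 d hdI hn1
    push Not at h2
    obtain ⟨p, hp, hpn⟩ := h2
    have hp' := hp
    unfold sdsP at hp'
    rw [Finset.mem_filter] at hp'
    exact hd (sds_sigma n p d hp'.2.1 hpn (hc1 hn1 p hp'.2.2.1) hp'.2.2.2)
  have hcard : (((Finset.Icc 1 N).filter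
        (fun n => ∃ d : ℕ, 0 < d ∧ (d : ℝ) ≤ L ^ (1 - ε) ∧ ¬ d ∣ sigma1 n)).card : ℝ) ≤
      (((Finset.Icc 1 N).filter (fun n => ∃ m, W < m ∧ m^2 ∣ n)).card : ℝ) +
      ∑ d ∈ Finset.Icc 1 Y, (((Finset.Icc 1 N).filter (fun n => ∀ p ∈ sdsP d L, ¬ p ∣ n)).card : ℝ) := by
    exact_mod_cast (Finset.card_le_card hsub).trans ((Finset.card_union_le _ _).trans
      (Nat.add_le_add_left Finset.card_biUnion_le _))
  have hsift : ∀ d ∈ Finset.Icc 1 Y, (((Finset.Icc 1 N).filter (fun n => ∀ p ∈ sdsP d L, ¬ p ∣ n)).card : ℝ)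
      ≤ N * (2 * Real.exp (-A)) + Real.exp 1 * R ^ (4*A+6) := by
    intro d hd
    rw [Finset.mem_Icc] at hd
    apply sds_sift (sdsP d L) _ N A R hA0 hR1
    · rw [hR]
      have : (sdsP d L).card ≤ ⌈Real.exp (Real.exp (L/2))⌉₊ := by
        unfold sdsP
        refine (Finset.card_filter_le _ _).trans ?_
        simp
      exact_mod_cast this
    · exact hlow d hd.1 ((Nat.le_floor_iff (by positivity)).1 hd.2)
    · intro p hp
      unfold sdsP at hp
      exact (Finset.mem_filter.1 hp).2.1
  have hRx : R ^ (4*A+6) ≤ x * Real.exp (-(L/2)) := by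
    have hu1 : 1 + L/2 + (L/2)^2/2 ≤ Real.exp (L/2) := Real.quadratic_le_exp_of_nonneg (by linarith)
    have hu2 : Real.exp L = Real.exp (L/2) * Real.exp (L/2) := by
      rw [← Real.exp_add]; ring_nf
    have hRe : R ≤ Real.exp (Real.exp (L/2) + 1) := by
      have h1 : R ≤ Real.exp (Real.exp (L/2)) + 1 := (Nat.ceil_lt_add_one (Real.exp_pos _).le).le
      have h2 : 1 ≤ Real.exp (Real.exp (L/2)) := Real.one_le_exp (Real.exp_pos _).le
      have h3 : 2 ≤ Real.exp 1 := by have := Real.add_one_le_exp (1:ℝ); linarith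
      rw [Real.exp_add]
      nlinarith
    calc R ^ (4*A+6) ≤ R ^ (4*L+6) := Real.rpow_le_rpow_of_exponent_le hR1 (by linarith)
      _ ≤ (Real.exp (Real.exp (L/2) + 1)) ^ (4*L+6) := Real.rpow_le_rpow (by linarith) hRe (by linarith)
      _ = Real.exp ((Real.exp (L/2) + 1) * (4*L+6)) := by rw [← Real.exp_mul]
      _ ≤ Real.exp (Real.exp L + (-(L/2))) := by
          apply Real.exp_le_exp.2
          rw [hu2]
          set u := Real.exp (L/2)
          have hu3 : 8*L + 13 ≤ u := by nlinarith
          nlinarith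
      _ = x * Real.exp (-(L/2)) := by rw [Real.exp_add, hx]
  have hsum := Finset.sum_le_sum hsift
  rw [Finset.sum_const, Nat.card_Icc, nsmul_eq_mul, Nat.add_sub_cancel] at hsum
  have hsq := sds_sq N W hW1
  have hsq2 : N * (1 / (W:ℝ)) ≤ x * (2/L) := by
    have : 1 / (W:ℝ) ≤ 2 / L := by
      rw [div_le_div_iff₀ (by exact_mod_cast hW1) hL0]; linarith
    gcongr
  have hfin : (Y:ℝ) * (N * (2 * Real.exp (-A)) + Real.exp 1 * R ^ (4*A+6)) ≤
      L * (x * (2 * Real.exp (-A)) + Real.exp 1 * (x * Real.exp (-(L/2)))) := by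
    have : 0 ≤ R ^ (4*A+6) := by positivity
    gcongr
  calc _ ≤ _ := hcard
    _ ≤ x * (2/L) + L * (x * (2 * Real.exp (-A)) + Real.exp 1 * (x * Real.exp (-(L/2)))) := by linarith
    _ = _ := by ring

lemma sds_tendsto (η : ℝ) (hη : 0 < η) : Tendsto (fun L : ℝ =>
    2 / L + 2 * L * Real.exp (-(L ^ η)) + Real.exp 1 * (L * Real.exp (-(L/2)))) atTop (nhds 0) := by
  have t1 : Tendsto (fun L : ℝ => 2 / L) atTop (nhds 0) := tendsto_const_nhds.div_atTop tendsto_id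
  have t2 : Tendsto (fun L : ℝ => 2 * L * Real.exp (-(L ^ η))) atTop (nhds 0) := by
    have h := ((tendsto_rpow_mul_exp_neg_mul_atTop_nhds_zero (1/η) 1 one_pos).comp
      (tendsto_rpow_atTop hη)).const_mul 2
    rw [mul_zero] at h
    refine h.congr' ?_
    filter_upwards [eventually_gt_atTop 0] with L hL
    simp only [Function.comp]
    rw [← Real.rpow_mul hL.le, mul_one_div, div_self hη.ne', Real.rpow_one, neg_one_mul]
    ring
  have t3 : Tendsto (fun L : ℝ => Real.exp 1 * (L * Real.exp (-(L/2)))) atTop (nhds 0) := by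
    have h := (tendsto_rpow_mul_exp_neg_mul_atTop_nhds_zero 1 (1/2) (by norm_num)).const_mul (Real.exp 1)
    rw [mul_zero] at h
    refine h.congr' ?_
    filter_upwards with L
    rw [Real.rpow_one]
    congr 3
    ring
  simpa using (t1.add t2).add t3

theorem sigma_div_by_all_small_d (ε : ℝ) (hε : 0 < ε) :
    (fun x : ℝ => (((Finset.Icc 1 ⌊x⌋₊).filter
        (fun n => ∃ d : ℕ, 0 < d ∧ (d : ℝ) ≤ (Real.log (Real.log x)) ^ (1 - ε) ∧
          ¬ d ∣ sigma1 n)).card : ℝ))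
      =o[atTop] (fun x : ℝ => x) := by
  have hmin : 0 < min ε (1/2) := lt_min hε (by norm_num)
  have hmin1 : min ε (1/2) < 1 := (min_le_right _ _).trans_lt (by norm_num)
  have hll : Tendsto (fun x : ℝ => Real.log (Real.log x)) atTop atTop :=
    Real.tendsto_log_atTop.comp Real.tendsto_log_atTop
  rw [Asymptotics.isLittleO_iff]
  intro c hc
  have e1 := hll.eventually (sds_lower (min ε (1/2)) hmin hmin1)
  have e2 := hll.eventually ((sds_tendsto (min ε (1/2) / 2) (by linarith)).eventually_le_const hc)
  have e3 := hll.eventually (eventually_ge_atTop 200)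
  filter_upwards [e1, e2, e3, eventually_gt_atTop 1] with x h1 h2 h3 hx1
  have hlx : 0 < Real.log x := Real.log_pos hx1
  have hx : x = Real.exp (Real.exp (Real.log (Real.log x))) := by
    rw [Real.exp_log hlx, Real.exp_log (by linarith)]
  have hcnt := sds_count (min ε (1/2)) (Real.log (Real.log x)) x hmin hmin1 h3 hx h1
  rw [Real.norm_of_nonneg (Nat.cast_nonneg _), Real.norm_of_nonneg (by linarith)]
  refine le_trans ?_ (hcnt.trans ?_)
  · norm_cast
    apply Finset.card_le_card
    intro n hn
    rw [Finset.mem_filter] at *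
    obtain ⟨hn1, d, hd0, hd, hd'⟩ := hn
    refine ⟨hn1, d, hd0, hd.trans ?_, hd'⟩
    apply Real.rpow_le_rpow_of_exponent_le (by linarith)
    have := min_le_left ε (1/2)
    linarith
  · rw [mul_comm]
    exact mul_le_mul_of_nonneg_right h2 (by linarith)
end

section
/- As x → ∞, the number of integers n with 1 ≤ n ≤ x for which gcd(n, σ(n)) has a prime divisor exceeding log log x is o(x). (That is, almost always the greatest common divisor of n and σ(n) has no prime divisor exceeding log log x.) -/
open scoped Classical
open Filter Finset

lemma aux_fact_dvd (a M K : ℕ) : K.factorial ∣ M ^ K * ∏ k ∈ Finset.range K, (a + k * M) := by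
  rw [Nat.dvd_iff_prime_pow_dvd_dvd]
  intro r v hr hv
  by_cases hM : r ∣ M
  · have hvK : v ≤ K := by
      have h1 := (hr.pow_dvd_iff_le_factorization (Nat.factorial_ne_zero K)).1 hv
      have h2 := Nat.factorization_factorial_le_div_pred hr K
      exact h1.trans (h2.trans (Nat.div_le_self _ _))
    exact Dvd.dvd.mul_right ((pow_dvd_pow r hvK).trans (pow_dvd_pow_of_dvd hM K)) _
  · apply Dvd.dvd.mul_left
    have hcop : Nat.Coprime M (r ^ v) := (((Nat.Prime.coprime_iff_not_dvd hr).2 hM).symm).pow_right v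
    rcases Nat.eq_zero_or_pos v with rfl | hv0
    · simp
    obtain ⟨b, -, hb⟩ := Nat.exists_mul_mod_eq_one_of_coprime hcop (Nat.one_lt_pow hv0.ne' hr.one_lt)
    have hb' : M * b ≡ 1 [MOD r ^ v] := by
      rw [Nat.ModEq, hb, Nat.mod_eq_of_lt (Nat.one_lt_pow hv0.ne' hr.one_lt)]
    have h1 : r ^ v ∣ M ^ K * ∏ k ∈ Finset.range K, (a * b + k) := by
      apply Dvd.dvd.mul_left
      rw [← Nat.ascFactorial_eq_prod_range]
      exact hv.trans (Nat.factorial_dvd_ascFactorial _ _)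
    have h2 : M ^ K * ∏ k ∈ Finset.range K, (a * b + k) =
        ∏ k ∈ Finset.range K, (a * (M * b) + k * M) := by
      rw [← Finset.card_range K, ← Finset.prod_const, Finset.card_range, ← Finset.prod_mul_distrib]
      exact Finset.prod_congr rfl fun k _ => by ring
    have h3 : ∏ k ∈ Finset.range K, (a * (M * b) + k * M) ≡
        ∏ k ∈ Finset.range K, (a + k * M) [MOD r ^ v] := by
      apply Nat.ModEq.prod
      intro k _
      have := (hb'.mul_left a).add_right (k * M)
      simpa using this
    rw [h2] at h1
    exact (h3.dvd_iff dvd_rfl).1 h1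

lemma aux_class (a M K : ℕ) (ha : 0 < a) (haM : a < M) (Q : Finset ℕ)
    (hp : ∀ q ∈ Q, q.Prime) (hK : ∀ q ∈ Q, K < q) (hKM : ∀ q ∈ Q, q < K * M)
    (hmod : ∀ q ∈ Q, q % M = a) : ∏ q ∈ Q, q ≤ M ^ (2 * K) := by
  have hP1 : (∏ q ∈ Q, q) ∣ ∏ k ∈ Finset.range K, (a + k * M) := by
    apply Finset.prod_primes_dvd
    · exact fun q hq => (hp q hq).prime
    · intro q hq
      have h1 : q = a + (q / M) * M := by
        have := Nat.mod_add_div' q M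
        rw [hmod q hq] at this
        exact this.symm
      have h2 : q / M < K := by
        apply Nat.div_lt_of_lt_mul
        rw [mul_comm]; exact hKM q hq
      have h3 := Finset.dvd_prod_of_mem (fun k => a + k * M) (Finset.mem_range.2 h2)
      simp only [← h1] at h3
      exact h3
  have hcop : Nat.Coprime (∏ q ∈ Q, q) K.factorial := by
    apply Nat.Coprime.prod_left
    intro q hq
    rw [Nat.Prime.coprime_iff_not_dvd (hp q hq), (hp q hq).dvd_factorial]
    exact not_le.2 (hK q hq)
  have hdvd : (∏ q ∈ Q, q) * K.factorial ∣ M ^ K * ∏ k ∈ Finset.range K, (a + k * M) :=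
    hcop.mul_dvd_of_dvd_of_dvd (hP1.mul_left _) (aux_fact_dvd a M K)
  have hpos : 0 < M ^ K * ∏ k ∈ Finset.range K, (a + k * M) := by
    apply Nat.mul_pos (pow_pos (by omega) _)
    exact Finset.prod_pos fun k _ => by omega
  have hle := Nat.le_of_dvd hpos hdvd
  have hub : ∏ k ∈ Finset.range K, (a + k * M) ≤ M ^ K * K.factorial := by
    calc ∏ k ∈ Finset.range K, (a + k * M) ≤ ∏ k ∈ Finset.range K, (M * (k + 1)) := by
          apply Finset.prod_le_prod' 
          intro k _
          nlinarith
      _ = M ^ K * K.factorial := by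
          rw [Finset.prod_mul_distrib, Finset.prod_range_add_one_eq_factorial]; simp
  have hfin : (∏ q ∈ Q, q) * K.factorial ≤ M ^ (2 * K) * K.factorial := by
    calc _ ≤ _ := hle
      _ ≤ M ^ K * (M ^ K * K.factorial) := Nat.mul_le_mul_left _ hub
      _ = _ := by ring
  exact Nat.le_of_mul_le_mul_right hfin (Nat.factorial_pos K)

lemma aux_totient (ε : ℝ) (hε : 0 < ε) : ∃ W : ℕ, 8 ≤ W ∧ (Nat.totient W : ℝ) / W ≤ ε := by
  have h := not_summable_one_div_on_primes
  rw [not_summable_iff_tendsto_nat_atTop_of_nonneg] at h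
  · obtain ⟨n, hn, hn8⟩ := ((h.eventually_ge_atTop (- Real.log ε)).and (eventually_ge_atTop 9)).exists
    have hn' : - Real.log ε ≤ ∑ p ∈ Nat.primesLE n, (1 / (p : ℝ)) := by
      refine hn.trans ?_
      rw [Finset.sum_indicator_eq_sum_filter]
      apply Finset.sum_le_sum_of_subset_of_nonneg
      · intro p hp
        simp only [Finset.mem_filter, Finset.mem_range, Set.mem_ofPred_eq] at hp
        exact Nat.mem_primesLE.2 ⟨by omega, hp.2⟩
      · intros; positivity
    refine ⟨primorial n, by have := @le_primorial_self n; omega, ?_⟩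
    have hW : (0 : ℝ) < primorial n := by exact_mod_cast primorial_pos n
    have ht : ((Nat.totient (primorial n) : ℚ) : ℝ) = _ := congrArg _ (Nat.totient_eq_mul_prod_factors (primorial n))
    rw [primeFactors_primorial] at ht
    push_cast at ht
    rw [ht, mul_div_cancel_left₀ _ hW.ne']
    calc ∏ p ∈ Nat.primesLE n, (1 - (p : ℝ)⁻¹) ≤ ∏ p ∈ Nat.primesLE n, Real.exp (-(1 / (p : ℝ))) := by
          apply Finset.prod_le_prod
          · intro p hp
            have h1 : (1 : ℝ) ≤ p := by exact_mod_cast (Nat.mem_primesLE.1 hp).2.one_lt.le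
            have := inv_le_one_of_one_le₀ h1
            linarith
          · intro p hp
            have := Real.add_one_le_exp (-(1 / (p : ℝ)))
            rw [one_div] at this ⊢
            linarith
      _ = Real.exp (-∑ p ∈ Nat.primesLE n, (1 / (p : ℝ))) := by
          rw [← Real.exp_sum, Finset.sum_neg_distrib]
      _ ≤ Real.exp (Real.log ε) := Real.exp_le_exp.2 (by linarith)
      _ = ε := Real.exp_log hε
  · intro n
    apply Set.indicator_nonneg
    intros; positivity

lemma aux_sum_log (d : ℕ) : ∀ y z : ℕ, 1 ≤ y → z - y ≤ d →
    ∑ p ∈ (Finset.Ioc y z).filter Nat.Prime, Real.log p / (p : ℝ) ^ 2 ≤ 4 * Real.log 4 / y := by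
  induction d using Nat.strong_induction_on with
  | _ d ih =>
    intro y z hy hd
    have hy' : (0 : ℝ) < y := by exact_mod_cast hy
    have hl4 : 0 < Real.log 4 := Real.log_pos (by norm_num)
    by_cases hzy : z ≤ y
    · rw [Finset.Ioc_eq_empty (by omega)]
      simp only [Finset.filter_empty, Finset.sum_empty]
      positivity
    have hrec := ih (d - 1) (by omega) (2 * y) z (by omega) (by omega)
    have hsub : (Finset.Ioc y z).filter Nat.Prime ⊆
        (Finset.Ioc y (2 * y)).filter Nat.Prime ∪ (Finset.Ioc (2 * y) z).filter Nat.Prime := by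
      intro p
      simp only [Finset.mem_union, Finset.mem_filter, Finset.mem_Ioc]
      rintro ⟨⟨h1, h2⟩, h3⟩
      by_cases h : p ≤ 2 * y
      · exact Or.inl ⟨⟨h1, h⟩, h3⟩
      · exact Or.inr ⟨⟨by omega, h2⟩, h3⟩
    have hnn : ∀ p : ℕ, 0 ≤ Real.log p / (p : ℝ) ^ 2 := fun p =>
      div_nonneg (Real.log_natCast_nonneg p) (by positivity)
    have h1 := Finset.sum_le_sum_of_subset_of_nonneg (f := fun p : ℕ => Real.log p / (p : ℝ) ^ 2) hsub
      (fun p _ _ => hnn p)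
    have h2 : ∑ p ∈ (Finset.Ioc y (2 * y)).filter Nat.Prime ∪ (Finset.Ioc (2 * y) z).filter Nat.Prime,
        Real.log p / (p : ℝ) ^ 2 ≤ ∑ p ∈ (Finset.Ioc y (2 * y)).filter Nat.Prime, Real.log p / (p : ℝ) ^ 2
        + ∑ p ∈ (Finset.Ioc (2 * y) z).filter Nat.Prime, Real.log p / (p : ℝ) ^ 2 := by
      rw [← Finset.sum_union_inter]
      have : 0 ≤ ∑ p ∈ (Finset.Ioc y (2 * y)).filter Nat.Prime ∩ (Finset.Ioc (2 * y) z).filter Nat.Prime,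
        Real.log p / (p : ℝ) ^ 2 := Finset.sum_nonneg fun p _ => hnn p
      linarith
    have h3 : ∑ p ∈ (Finset.Ioc y (2 * y)).filter Nat.Prime, Real.log p / (p : ℝ) ^ 2 ≤
        2 * Real.log 4 / y := by
      calc _ ≤ ∑ p ∈ (Finset.Ioc y (2 * y)).filter Nat.Prime, Real.log p / (y : ℝ) ^ 2 := by
            apply Finset.sum_le_sum
            intro p hp
            simp only [Finset.mem_filter, Finset.mem_Ioc] at hp
            have : (y : ℝ) ≤ p := by exact_mod_cast hp.1.1.le
            have := Real.log_natCast_nonneg p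
            gcongr
        _ = (∑ p ∈ (Finset.Ioc y (2 * y)).filter Nat.Prime, Real.log p) / (y : ℝ) ^ 2 := by
            rw [Finset.sum_div]
        _ ≤ (Real.log 4 * (2 * y : ℕ)) / (y : ℝ) ^ 2 := by
            gcongr
            refine le_trans ?_ (Chebyshev.theta_le_log4_mul_x (x := ((2 * y : ℕ) : ℝ)) (by positivity))
            rw [Chebyshev.theta_eq_sum_primesLE_log]
            apply Finset.sum_le_sum_of_subset_of_nonneg
            · intro p hp
              simp only [Finset.mem_filter, Finset.mem_Ioc] at hp
              exact Nat.mem_primesLE.2 ⟨hp.1.2, hp.2⟩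
            · intro p _ _; exact Real.log_natCast_nonneg p
        _ = 2 * Real.log 4 / y := by
            push_cast
            field_simp
    have h4 : 4 * Real.log 4 / ((2 * y : ℕ) : ℝ) = 2 * Real.log 4 / y := by
      push_cast
      field_simp
      norm_num
    have h5 : 4 * Real.log 4 / (y : ℝ) = 2 * Real.log 4 / y + 2 * Real.log 4 / y := by ring
    rw [h4] at hrec
    linarith

lemma aux_incl (n p : ℕ) (hn : n ≠ 0) (hp : p.Prime) (hpn : p ∣ n) (hps : p ∣ sigma1 n) :
    (∃ d, d ^ 2 ∣ n ∧ p < 2 * d ^ 3) ∨ (∃ q, q.Prime ∧ p ∣ q + 1 ∧ p * q ∣ n) := by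
  unfold sigma1 at hps
  rw [ArithmeticFunction.isMultiplicative_sigma.multiplicative_factorization _ hn, Finsupp.prod] at hps
  obtain ⟨q, hq, hpq⟩ := (hp.prime.dvd_finsetProd_iff _).1 hps
  have hqp : q.Prime := Nat.prime_of_mem_primeFactors hq
  have hqn : q ∣ n := Nat.dvd_of_mem_primeFactors hq
  have ha : n.factorization q ≠ 0 := Finsupp.mem_support_iff.1 hq
  have hdn : q ^ n.factorization q ∣ n := Nat.ordProj_dvd n q
  generalize n.factorization q = a at *
  rw [ArithmeticFunction.sigma_one_apply_prime_pow hqp] at hpq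
  by_cases ha1 : a = 1
  · right
    subst ha1
    simp [Finset.sum_range_succ] at hpq
    rw [add_comm] at hpq
    refine ⟨q, hqp, hpq, ?_⟩
    apply Nat.Coprime.mul_dvd_of_dvd_of_dvd _ hpn hqn
    rw [Nat.coprime_primes hp hqp]
    rintro rfl
    exact hp.one_lt.ne' (Nat.dvd_one.1 ((Nat.dvd_add_right dvd_rfl).1 hpq))
  · left
    refine ⟨q ^ (a / 2), ?_, ?_⟩
    · rw [← pow_mul]
      exact (pow_dvd_pow q (by omega)).trans hdn
    · have h1 : p ≤ ∑ k ∈ Finset.range (a + 1), q ^ k :=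
        Nat.le_of_dvd (Finset.sum_pos (fun k _ => pow_pos hqp.pos k) (by simp)) hpq
      have h2 : ∑ k ∈ Finset.range a, q ^ k < q ^ a := Nat.geomSum_lt hqp.two_le (by simp)
      rw [Finset.sum_range_succ] at h1
      have h3 : q ^ a ≤ (q ^ (a / 2)) ^ 3 := by
        rw [← pow_mul]
        exact Nat.pow_le_pow_right hqp.pos (by omega)
      omega

lemma aux_block_log (W p j : ℕ) (hW : 8 ≤ W) (hp : p.Prime) (hWp : W < p) (Q : Finset ℕ)
    (hQ : ∀ q ∈ Q, q.Prime ∧ 2 ^ j ≤ q ∧ q < 2 ^ (j + 1) ∧ W * p ≤ q ∧ p ∣ q + 1) :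
    ∑ q ∈ Q, Real.log q ≤
      (Nat.totient W : ℝ) * (2 * ((2 ^ (j + 1) / (W * p) + 1 : ℕ) : ℝ) * Real.log ((W * p : ℕ) : ℝ)) := by
  set M := W * p with hM
  have hcop : Nat.Coprime W p := Nat.coprime_of_lt_prime (by omega) hWp hp |>.symm
  have hM64 : 8 * 8 ≤ M := Nat.mul_le_mul hW (by omega)
  have hmaps : ∀ q ∈ Q, q % W ∈ (Finset.range W).filter (fun c => W.Coprime c) := by
    intro q hq
    obtain ⟨h1, h2, h3, h4, h5⟩ := hQ q hq
    rw [Finset.mem_filter, Finset.mem_range]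
    refine ⟨Nat.mod_lt _ (by omega), ?_⟩
    have : W < q := lt_of_lt_of_le (by nlinarith) h4
    have h6 : Nat.Coprime W q := Nat.coprime_of_lt_prime (by omega) this h1 |>.symm
    rw [Nat.coprime_iff_gcd_eq_one] at *
    rw [← h6, Nat.gcd_comm, ← Nat.gcd_rec]
  rw [← Finset.sum_fiberwise_of_maps_to hmaps, Nat.totient_eq_card_coprime, ← nsmul_eq_mul]
  apply Finset.sum_le_card_nsmul
  intro c _
  rcases (Q.filter (fun q => q % W = c)).eq_empty_or_nonempty with he | ⟨q0, hq0⟩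
  · rw [he, Finset.sum_empty]
    have := Real.log_natCast_nonneg M
    positivity
  · rw [Finset.mem_filter] at hq0
    obtain ⟨h1, h2, h3, h4, h5⟩ := hQ q0 hq0.1
    have hT : M < 2 ^ (j + 1) := by omega
    have hprod : ∏ q ∈ Q.filter (fun q => q % W = c), q ≤ M ^ (2 * (2 ^ (j + 1) / M + 1)) := by
      apply aux_class (q0 % M) M (2 ^ (j + 1) / M + 1)
      · rw [Nat.pos_iff_ne_zero]
        intro h
        have h6 : p ∣ q0 := (Dvd.intro_left W rfl).trans (Nat.dvd_of_mod_eq_zero h)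
        exact hp.one_lt.ne' (Nat.dvd_one.1 ((Nat.dvd_add_right h6).1 h5))
      · exact Nat.mod_lt _ (by omega)
      · exact fun q hq => (hQ q (Finset.mem_filter.1 hq).1).1
      · intro q hq
        obtain ⟨g1, g2, g3, g4, g5⟩ := hQ q (Finset.mem_filter.1 hq).1
        have : 2 ^ (j + 1) / M ≤ 2 ^ (j + 1) / 8 := Nat.div_le_div_left (by omega) (by norm_num)
        have e : 2 ^ (j + 1) = 2 * 2 ^ j := by ring
        omega
      · intro q hq
        obtain ⟨g1, g2, g3, g4, g5⟩ := hQ q (Finset.mem_filter.1 hq).1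
        have := Nat.lt_mul_div_succ (2 ^ (j + 1)) (show 0 < M by omega)
        rw [mul_comm]
        omega
      · intro q hq
        obtain ⟨hq1, hq2⟩ := Finset.mem_filter.1 hq
        obtain ⟨g1, g2, g3, g4, g5⟩ := hQ q hq1
        have e1 : q ≡ q0 [MOD W] := by rw [Nat.ModEq, hq2, hq0.2]
        have e2 : q ≡ q0 [MOD p] := by
          apply Nat.ModEq.add_right_cancel' 1
          exact ((Nat.modEq_zero_iff_dvd).2 g5).trans ((Nat.modEq_zero_iff_dvd).2 h5).symm
        exact (Nat.modEq_and_modEq_iff_modEq_mul hcop).1 ⟨e1, e2⟩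
    have hne : ∀ q ∈ Q.filter (fun q => q % W = c), (q : ℝ) ≠ 0 := by
      intro q hq
      exact_mod_cast (hQ q (Finset.mem_filter.1 hq).1).1.ne_zero
    rw [← Real.log_prod hne]
    calc Real.log (∏ q ∈ Q.filter (fun q => q % W = c), (q : ℝ))
        ≤ Real.log ((M : ℝ) ^ (2 * (2 ^ (j + 1) / M + 1))) := by
          apply Real.log_le_log
          · exact Finset.prod_pos fun q hq => lt_of_le_of_ne (by positivity) (hne q hq).symm
          · rw [← Nat.cast_prod, ← Nat.cast_pow]
            exact Nat.cast_le.2 hprod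
      _ = _ := by rw [Real.log_pow]; push_cast; ring

lemma aux_block (W p j : ℕ) (hW : 8 ≤ W) (hp : p.Prime) (hWp : W < p) (hj : 1 ≤ j) (Q : Finset ℕ)
    (hQ : ∀ q ∈ Q, q.Prime ∧ 2 ^ j ≤ q ∧ q < 2 ^ (j + 1) ∧ W * p ≤ q ∧ p ∣ q + 1) :
    ∑ q ∈ Q, 1 / (q : ℝ) ≤
      8 / Real.log 2 * ((Nat.totient W : ℝ) / W) * (Real.log ((W * p : ℕ) : ℝ) / p) * (1 / (j : ℝ)) := by
  have hl2 : 0 < Real.log 2 := Real.log_pos (by norm_num)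
  have hWr : (0 : ℝ) < W := by exact_mod_cast (by omega : 0 < W)
  have hpr : (0 : ℝ) < p := by exact_mod_cast hp.pos
  have hjr : (0 : ℝ) < j := by exact_mod_cast hj
  have hlM := Real.log_natCast_nonneg (W * p)
  rcases Q.eq_empty_or_nonempty with he | ⟨q0, hq0⟩
  · rw [he, Finset.sum_empty]
    positivity
  have hlog := aux_block_log W p j hW hp hWp Q hQ
  have hT : W * p ≤ 2 ^ (j + 1) := by have := hQ q0 hq0; omega
  have hK : ((2 ^ (j + 1) / (W * p) + 1 : ℕ) : ℝ) ≤ 2 * (2 ^ (j + 1) / (W * p)) := by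
    have h1 : ((2 ^ (j + 1) / (W * p) : ℕ) : ℝ) ≤ ((2 ^ (j + 1) : ℕ) : ℝ) / ((W * p : ℕ) : ℝ) := Nat.cast_div_le
    have h2 : (1 : ℝ) ≤ 2 ^ (j + 1) / (W * p) := by
      rw [le_div_iff₀ (by positivity), one_mul]
      exact_mod_cast hT
    push_cast at h1 ⊢
    linarith
  have h1 : ∀ q ∈ Q, 1 / (q : ℝ) ≤ Real.log q * (1 / (2 ^ j * (j * Real.log 2))) := by
    intro q hq
    obtain ⟨g1, g2, g3, g4, g5⟩ := hQ q hq
    have g2' : (2 : ℝ) ^ j ≤ q := by exact_mod_cast g2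
    have hlq : j * Real.log 2 ≤ Real.log q := by
      rw [← Real.log_pow]
      exact Real.log_le_log (by positivity) g2'
    have hq' : (0 : ℝ) < q := by exact_mod_cast g1.pos
    rw [mul_one_div, div_le_div_iff₀ hq' (by positivity), one_mul, mul_comm]
    gcongr
  calc ∑ q ∈ Q, 1 / (q : ℝ) ≤ ∑ q ∈ Q, Real.log q * (1 / (2 ^ j * (j * Real.log 2))) :=
        Finset.sum_le_sum h1
    _ = (∑ q ∈ Q, Real.log q) * (1 / (2 ^ j * (j * Real.log 2))) := by rw [Finset.sum_mul]
    _ ≤ ((Nat.totient W : ℝ) * (2 * (2 * (2 ^ (j + 1) / (W * p))) * Real.log ((W * p : ℕ) : ℝ))) *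
        (1 / (2 ^ j * (j * Real.log 2))) := by
        gcongr
        refine hlog.trans ?_
        gcongr
    _ = _ := by
        rw [pow_succ]
        field_simp
        ring

lemma aux_S (W p N : ℕ) (hW : 8 ≤ W) (hp : p.Prime) (hWp : W < p) :
    ∑ q ∈ (Finset.Icc 1 N).filter (fun q => q.Prime ∧ p ∣ q + 1), 1 / (q : ℝ) ≤
      2 * W / p + 8 / Real.log 2 * ((Nat.totient W : ℝ) / W) * (Real.log ((W * p : ℕ) : ℝ) / p) *
        ∑ j ∈ Finset.Icc 1 (Nat.log 2 N), 1 / (j : ℝ) := by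
  have hpr : (0 : ℝ) < p := by exact_mod_cast hp.pos
  rw [← Finset.sum_filter_add_sum_filter_not _ (fun q => q < W * p)]
  apply add_le_add
  · set R := ((Finset.Icc 1 N).filter (fun q => q.Prime ∧ p ∣ q + 1)).filter (fun q => q < W * p) with hR
    have hR' : ∀ q ∈ R, q.Prime ∧ p ∣ q + 1 ∧ q < W * p := by
      intro q hq
      simp only [hR, Finset.mem_filter] at hq
      exact ⟨hq.1.2.1, hq.1.2.2, hq.2⟩
    have hcard : R.card ≤ W := by
      have : R.card ≤ (Finset.Icc 1 W).card := by
        apply Finset.card_le_card_of_injOn (fun q => (q + 1) / p)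
        · intro q hq
          obtain ⟨h1, ⟨k, hk⟩, h3⟩ := hR' q hq
          simp only [hk, Finset.coe_Icc, Set.mem_Icc]
          rw [Nat.mul_div_cancel_left _ hp.pos]
          constructor
          · rcases Nat.eq_zero_or_pos k with rfl | h
            · simp at hk
            · exact h
          · have : p * k ≤ p * W := by rw [mul_comm p W]; omega
            exact Nat.le_of_mul_le_mul_left this hp.pos
        · intro q hq q' hq' h
          obtain ⟨h1, h2, h3⟩ := hR' q hq
          obtain ⟨h1', h2', h3'⟩ := hR' q' hq'
          have := (Nat.div_left_inj h2 h2').1 h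
          omega
      simpa using this
    have hb : ∀ q ∈ R, 1 / (q : ℝ) ≤ 2 / p := by
      intro q hq
      obtain ⟨h1, h2, h3⟩ := hR' q hq
      have h4 : p ≤ q + 1 := Nat.le_of_dvd (by omega) h2
      have h5 : (p : ℝ) ≤ 2 * q := by
        have := h1.one_lt
        exact_mod_cast (by omega : p ≤ 2 * q)
      have hq' : (0 : ℝ) < q := by exact_mod_cast h1.pos
      rw [div_le_div_iff₀ hq' hpr]
      linarith
    have := Finset.sum_le_card_nsmul R _ _ hb
    refine this.trans ?_
    rw [nsmul_eq_mul]
    have hc : (R.card : ℝ) ≤ W := by exact_mod_cast hcard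
    calc (R.card : ℝ) * (2 / p) ≤ W * (2 / p) := by gcongr
      _ = _ := by ring
  · have hmaps : ∀ q ∈ ((Finset.Icc 1 N).filter (fun q => q.Prime ∧ p ∣ q + 1)).filter (fun q => ¬ q < W * p),
        Nat.log 2 q ∈ Finset.Icc 1 (Nat.log 2 N) := by
      intro q hq
      simp only [Finset.mem_filter, Finset.mem_Icc] at hq ⊢
      exact ⟨Nat.log_pos (by norm_num) hq.1.2.1.two_le, Nat.log_mono_right hq.1.1.2⟩
    rw [← Finset.sum_fiberwise_of_maps_to hmaps, Finset.mul_sum]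
    apply Finset.sum_le_sum
    intro j hj
    apply aux_block W p j hW hp hWp (Finset.mem_Icc.1 hj).1
    intro q hq
    simp only [Finset.mem_filter, Finset.mem_Icc] at hq
    obtain ⟨⟨⟨⟨h1, h2⟩, h3, h4⟩, h5⟩, h6⟩ := hq
    refine ⟨h3, ?_, ?_, not_lt.1 h5, h4⟩
    · rw [← h6]; exact Nat.pow_log_le_self 2 (by omega)
    · rw [← h6]; exact Nat.lt_pow_succ_log_self (by norm_num) q

lemma aux_card_dvd (N d : ℕ) : (((Finset.Icc 1 N).filter (fun n => d ∣ n)).card : ℝ) ≤ N / d := by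
  have h := Nat.card_multiples' N d
  have h2 : (Finset.Icc 1 N).filter (fun n => d ∣ n) ⊆
      (Finset.range N.succ).filter (fun k => k ≠ 0 ∧ d ∣ k) := by
    intro n
    simp only [Finset.mem_filter, Finset.mem_Icc, Finset.mem_range]
    rintro ⟨⟨h1, h2⟩, h3⟩
    exact ⟨by omega, by omega, h3⟩
  have h3 := Finset.card_le_card h2
  have h4 : ((Finset.Icc 1 N).filter (fun n => d ∣ n)).card ≤ N / d := by
    refine h3.trans (le_of_eq ?_)
    convert h
  calc (((Finset.Icc 1 N).filter (fun n => d ∣ n)).card : ℝ) ≤ ((N / d : ℕ) : ℝ) := by exact_mod_cast h4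
    _ ≤ N / d := Nat.cast_div_le

lemma aux_sum_sq (Y N : ℕ) (hY : 1 ≤ Y) : ∑ d ∈ Finset.Ioc Y N, 1 / (d : ℝ) ^ 2 ≤ 1 / (Y : ℝ) := by
  rcases le_total Y N with h | h
  · have := sum_Ioc_inv_sq_le_sub (α := ℝ) (k := Y) (n := N) (by omega) h
    simp only [one_div]
    refine this.trans ?_
    have : (0 : ℝ) ≤ (N : ℝ)⁻¹ := by positivity
    linarith
  · rw [Finset.Ioc_eq_empty (by omega), Finset.sum_empty]; positivity

lemma aux_A (D N : ℕ) (hD : 1 ≤ D) :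
    (((Finset.Icc 1 N).filter (fun n => ∃ d, D < d ∧ d ^ 2 ∣ n)).card : ℝ) ≤ N * (1 / D) := by
  have hsub : (Finset.Icc 1 N).filter (fun n => ∃ d, D < d ∧ d ^ 2 ∣ n) ⊆
      (Finset.Ioc D N).biUnion (fun d => (Finset.Icc 1 N).filter (fun n => d ^ 2 ∣ n)) := by
    intro n hn
    simp only [Finset.mem_filter, Finset.mem_Icc, Finset.mem_biUnion, Finset.mem_Ioc] at hn ⊢
    obtain ⟨⟨h1, h2⟩, d, h3, h4⟩ := hn
    have h5 := Nat.le_of_dvd (by omega) h4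
    refine ⟨d, ⟨h3, ?_⟩, ⟨h1, h2⟩, h4⟩
    nlinarith
  calc _ ≤ (((Finset.Ioc D N).biUnion (fun d => (Finset.Icc 1 N).filter (fun n => d ^ 2 ∣ n))).card : ℝ) := by
        exact_mod_cast Finset.card_le_card hsub
    _ ≤ ∑ d ∈ Finset.Ioc D N, (((Finset.Icc 1 N).filter (fun n => d ^ 2 ∣ n)).card : ℝ) := by
        exact_mod_cast Finset.card_biUnion_le
    _ ≤ ∑ d ∈ Finset.Ioc D N, N * (1 / (d : ℝ) ^ 2) := by
        apply Finset.sum_le_sum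
        intro d _
        refine (aux_card_dvd N (d ^ 2)).trans (le_of_eq ?_)
        push_cast; ring
    _ = N * ∑ d ∈ Finset.Ioc D N, (1 / (d : ℝ) ^ 2) := by rw [Finset.mul_sum]
    _ ≤ _ := by
        gcongr
        exact aux_sum_sq D N hD

lemma aux_B (W Y N : ℕ) (hW : 8 ≤ W) (hY : W ≤ Y) :
    (((Finset.Icc 1 N).filter (fun n => ∃ p, p.Prime ∧ Y < p ∧ ∃ q, q.Prime ∧ p ∣ q + 1 ∧ p * q ∣ n)).card : ℝ)
      ≤ N * (2 * W / Y + 64 * Real.log 4 / Real.log 2 * ((Nat.totient W : ℝ) / W) *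
        ((∑ j ∈ Finset.Icc 1 (Nat.log 2 N), 1 / (j : ℝ)) / Y)) := by
  set H := ∑ j ∈ Finset.Icc 1 (Nat.log 2 N), 1 / (j : ℝ) with hH
  have hH0 : 0 ≤ H := Finset.sum_nonneg fun _ _ => by positivity
  have hl2 : 0 < Real.log 2 := Real.log_pos (by norm_num)
  set PP := (Finset.Ioc Y N).filter Nat.Prime with hPP
  set QQ : ℕ → Finset ℕ := fun p => (Finset.Icc 1 N).filter (fun q => q.Prime ∧ p ∣ q + 1) with hQQ
  have hsub : (Finset.Icc 1 N).filter (fun n => ∃ p, p.Prime ∧ Y < p ∧ ∃ q, q.Prime ∧ p ∣ q + 1 ∧ p * q ∣ n) ⊆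
      PP.biUnion (fun p => (QQ p).biUnion (fun q => (Finset.Icc 1 N).filter (fun n => p * q ∣ n))) := by
    intro n hn
    simp only [hPP, hQQ, Finset.mem_filter, Finset.mem_Icc, Finset.mem_biUnion, Finset.mem_Ioc] at hn ⊢
    obtain ⟨⟨h1, h2⟩, p, hp, hYp, q, hq, hpq, hd⟩ := hn
    have h5 := Nat.le_of_dvd (by omega) ((Dvd.intro q rfl).trans hd)
    have h6 := Nat.le_of_dvd (by omega) ((Dvd.intro_left p rfl).trans hd)
    exact ⟨p, ⟨⟨hYp, by omega⟩, hp⟩, q, ⟨⟨hq.pos, by omega⟩, hq, hpq⟩, ⟨h1, h2⟩, hd⟩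
  have hstep : ∀ p ∈ PP, (1 / (p : ℝ)) * ∑ q ∈ QQ p, 1 / (q : ℝ) ≤
      2 * W * (1 / (p : ℝ) ^ 2) + 16 / Real.log 2 * ((Nat.totient W : ℝ) / W) * H * (Real.log p / (p : ℝ) ^ 2) := by
    intro p hp
    simp only [hPP, Finset.mem_filter, Finset.mem_Ioc] at hp
    obtain ⟨⟨h1, h2⟩, h3⟩ := hp
    have hpr : (0 : ℝ) < p := by exact_mod_cast h3.pos
    have hWr : (0 : ℝ) < W := by exact_mod_cast (by omega : 0 < W)
    have hS := aux_S W p N hW h3 (by omega)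
    have hlog : Real.log ((W * p : ℕ) : ℝ) ≤ 2 * Real.log p := by
      push_cast
      rw [Real.log_mul hWr.ne' hpr.ne']
      have : Real.log W ≤ Real.log p := Real.log_le_log hWr (by exact_mod_cast (by omega : W ≤ p))
      linarith
    calc (1 / (p : ℝ)) * ∑ q ∈ QQ p, 1 / (q : ℝ) ≤ (1 / (p : ℝ)) * (2 * W / p + 8 / Real.log 2 *
          ((Nat.totient W : ℝ) / W) * (Real.log ((W * p : ℕ) : ℝ) / p) * H) := by gcongr
      _ ≤ (1 / (p : ℝ)) * (2 * W / p + 8 / Real.log 2 *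
          ((Nat.totient W : ℝ) / W) * (2 * Real.log p / p) * H) := by gcongr
      _ = _ := by ring
  calc _ ≤ ((PP.biUnion (fun p => (QQ p).biUnion (fun q => (Finset.Icc 1 N).filter (fun n => p * q ∣ n)))).card : ℝ) := by
        exact_mod_cast Finset.card_le_card hsub
    _ ≤ ∑ p ∈ PP, (((QQ p).biUnion (fun q => (Finset.Icc 1 N).filter (fun n => p * q ∣ n))).card : ℝ) := by
        exact_mod_cast Finset.card_biUnion_le
    _ ≤ ∑ p ∈ PP, ∑ q ∈ QQ p, (((Finset.Icc 1 N).filter (fun n => p * q ∣ n)).card : ℝ) := by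
        apply Finset.sum_le_sum
        intro p _
        exact_mod_cast Finset.card_biUnion_le
    _ ≤ ∑ p ∈ PP, ∑ q ∈ QQ p, N * ((1 / (p : ℝ)) * (1 / (q : ℝ))) := by
        apply Finset.sum_le_sum
        intro p _
        apply Finset.sum_le_sum
        intro q _
        refine (aux_card_dvd N (p * q)).trans (le_of_eq ?_)
        push_cast
        rw [one_div_mul_one_div, mul_one_div]
    _ = N * ∑ p ∈ PP, (1 / (p : ℝ)) * ∑ q ∈ QQ p, 1 / (q : ℝ) := by
        simp only [Finset.mul_sum]
    _ ≤ N * ∑ p ∈ PP, (2 * W * (1 / (p : ℝ) ^ 2) +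
          16 / Real.log 2 * ((Nat.totient W : ℝ) / W) * H * (Real.log p / (p : ℝ) ^ 2)) := by
        gcongr with p hp
        exact hstep p hp
    _ = N * (2 * W * ∑ p ∈ PP, 1 / (p : ℝ) ^ 2 +
          16 / Real.log 2 * ((Nat.totient W : ℝ) / W) * H * ∑ p ∈ PP, Real.log p / (p : ℝ) ^ 2) := by
        rw [Finset.sum_add_distrib, ← Finset.mul_sum, ← Finset.mul_sum]
    _ ≤ N * (2 * W * (1 / Y) +
          16 / Real.log 2 * ((Nat.totient W : ℝ) / W) * H * (4 * Real.log 4 / Y)) := by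
        gcongr
        · refine le_trans ?_ (aux_sum_sq Y N (by omega))
          apply Finset.sum_le_sum_of_subset_of_nonneg (Finset.filter_subset _ _)
          intros; positivity
        · exact aux_sum_log _ Y N (by omega) le_rfl
    _ = _ := by ring

lemma aux_H (N : ℕ) (x : ℝ) (hx : 0 < x) (hN : (N : ℝ) ≤ x) (hN2 : 2 ≤ N) :
    ∑ j ∈ Finset.Icc 1 (Nat.log 2 N), 1 / (j : ℝ) ≤ 2 + Real.log (Real.log x) := by
  set J := Nat.log 2 N with hJ
  have hJ1 : 1 ≤ J := Nat.log_pos (by norm_num) hN2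
  have hJr : (0 : ℝ) < J := by exact_mod_cast hJ1
  have h1 : ∑ j ∈ Finset.Icc 1 J, 1 / (j : ℝ) ≤ 1 + Real.log J := by
    have := harmonic_le_one_add_log J
    rw [harmonic_eq_sum_Icc] at this
    push_cast at this
    simpa only [one_div] using this
  have h2 : (2 : ℝ) ^ J ≤ x := by
    have : 2 ^ J ≤ N := Nat.pow_log_le_self 2 (by omega)
    refine le_trans ?_ hN
    exact_mod_cast this
  have h3 : J * Real.log 2 ≤ Real.log x := by
    rw [← Real.log_pow]
    exact Real.log_le_log (by positivity) h2
  have hl2 : 1 / 2 < Real.log 2 := by have := Real.log_two_gt_d9; linarith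
  have h4 : (J : ℝ) ≤ 2 * Real.log x := by nlinarith
  have hlx : 0 < Real.log x := by linarith
  have h5 : Real.log J ≤ Real.log 2 + Real.log (Real.log x) := by
    rw [← Real.log_mul (by norm_num) hlx.ne']
    exact Real.log_le_log hJr h4
  have h6 := Real.log_two_lt_d9
  linarith

theorem gcd_n_sigma_n_smooth :
    (fun x : ℝ => (((Finset.Icc 1 ⌊x⌋₊).filter
        (fun n => ∃ p : ℕ, p.Prime ∧ p ∣ Nat.gcd n (sigma1 n) ∧
          Real.log (Real.log x) < (p : ℝ))).card : ℝ))
      =o[atTop] (fun x : ℝ => x) := by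
  rw [Asymptotics.isLittleO_iff]
  intro c hc
  obtain ⟨W, hW, hWc⟩ := aux_totient (c / 768) (by positivity)
  obtain ⟨D, hD⟩ := exists_nat_gt (3 / c)
  have hDr : (0 : ℝ) < D := lt_trans (by positivity) hD
  have hD1 : 1 ≤ D := by exact_mod_cast hDr
  have hLL : Tendsto (fun x : ℝ => Real.log (Real.log x)) atTop atTop :=
    Real.tendsto_log_atTop.comp Real.tendsto_log_atTop
  have hY : Tendsto (fun x : ℝ => ⌊Real.log (Real.log x)⌋₊) atTop atTop :=
    tendsto_nat_floor_atTop.comp hLL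
  obtain ⟨E, hE⟩ := exists_nat_gt (6 * W / c)
  filter_upwards [hY.eventually_ge_atTop (W + 2 * D ^ 3 + E), hLL.eventually_ge_atTop 0,
    eventually_ge_atTop (2 : ℝ)] with x hYx hL0 hx2
  set L := Real.log (Real.log x) with hL
  set Y := ⌊L⌋₊ with hYdef
  set N := ⌊x⌋₊ with hN
  have hNx : (N : ℝ) ≤ x := Nat.floor_le (by linarith)
  have hN2 : 2 ≤ N := Nat.le_floor (by exact_mod_cast hx2)
  have hYr : (0 : ℝ) < Y := by exact_mod_cast (by omega : 0 < Y)
  have hH := aux_H N x (by linarith) hNx hN2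
  have hLY : L < Y + 1 := Nat.lt_floor_add_one L
  have hsub : (Finset.Icc 1 N).filter (fun n => ∃ p : ℕ, p.Prime ∧ p ∣ Nat.gcd n (sigma1 n) ∧ L < (p : ℝ)) ⊆
      (Finset.Icc 1 N).filter (fun n => ∃ d, D < d ∧ d ^ 2 ∣ n) ∪
      (Finset.Icc 1 N).filter (fun n => ∃ p, p.Prime ∧ Y < p ∧ ∃ q, q.Prime ∧ p ∣ q + 1 ∧ p * q ∣ n) := by
    intro n hn
    simp only [Finset.mem_union, Finset.mem_filter, Finset.mem_Icc] at hn ⊢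
    obtain ⟨hn1, p, hp, hpg, hpL⟩ := hn
    have hYp : Y < p := (Nat.floor_lt hL0).2 hpL
    rcases aux_incl n p (by omega) hp (hpg.trans (Nat.gcd_dvd_left _ _))
      (hpg.trans (Nat.gcd_dvd_right _ _)) with ⟨d, hd, hpd⟩ | ⟨q, hq, h1, h2⟩
    · left
      refine ⟨hn1, d, ?_, hd⟩
      by_contra hcon
      have : d ^ 3 ≤ D ^ 3 := Nat.pow_le_pow_left (not_lt.1 hcon) 3
      omega
    · right
      exact ⟨hn1, p, hp, hYp, q, hq, h1, h2⟩
  have hA := aux_A D N hD1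
  have hB := aux_B W Y N hW (by omega)
  set H := ∑ j ∈ Finset.Icc 1 (Nat.log 2 N), 1 / (j : ℝ) with hHdef
  have hH0 : 0 ≤ H := Finset.sum_nonneg fun _ _ => by positivity
  have hcard : (((Finset.Icc 1 N).filter
      (fun n => ∃ p : ℕ, p.Prime ∧ p ∣ Nat.gcd n (sigma1 n) ∧ L < (p : ℝ))).card : ℝ) ≤
      (((Finset.Icc 1 N).filter (fun n => ∃ d, D < d ∧ d ^ 2 ∣ n)).card : ℝ) +
      (((Finset.Icc 1 N).filter (fun n => ∃ p, p.Prime ∧ Y < p ∧ ∃ q, q.Prime ∧ p ∣ q + 1 ∧ p * q ∣ n)).card : ℝ) := by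
    exact_mod_cast (Finset.card_le_card hsub).trans (Finset.card_union_le _ _)
  have b1 : 1 / (D : ℝ) ≤ c / 3 := by
    rw [div_lt_iff₀ hc] at hD
    rw [div_le_div_iff₀ hDr (by norm_num)]
    linarith
  have b2 : 2 * W / (Y : ℝ) ≤ c / 3 := by
    have : (E : ℝ) ≤ Y := by exact_mod_cast (by omega : E ≤ Y)
    rw [div_lt_iff₀ hc] at hE
    rw [div_le_div_iff₀ hYr (by norm_num)]
    nlinarith
  have b3 : H / Y ≤ 2 := by
    have : (8 : ℝ) ≤ Y := by exact_mod_cast (by omega : 8 ≤ Y)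
    rw [div_le_iff₀ hYr]
    linarith
  have b4 : 64 * Real.log 4 / Real.log 2 = 128 := by
    have hl2 : 0 < Real.log 2 := Real.log_pos (by norm_num)
    have : Real.log 4 = 2 * Real.log 2 := by
      rw [show (4 : ℝ) = 2 ^ 2 by norm_num, Real.log_pow]; norm_num
    rw [this]
    field_simp
    norm_num
  have b5 : 128 * ((Nat.totient W : ℝ) / W) * (H / Y) ≤ c / 3 := by
    calc 128 * ((Nat.totient W : ℝ) / W) * (H / Y) ≤ 128 * (c / 768) * 2 := by gcongr
      _ = c / 3 := by ring
  rw [b4] at hB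
  rw [Real.norm_of_nonneg (by positivity), Real.norm_of_nonneg (by linarith)]
  refine hcard.trans ?_
  calc _ ≤ (N : ℝ) * (1 / D) + N * (2 * W / Y + 128 * ((Nat.totient W : ℝ) / W) * (H / Y)) := add_le_add hA hB
    _ ≤ (N : ℝ) * (c / 3) + N * (c / 3 + c / 3) := by gcongr
    _ = c * N := by ring
    _ ≤ c * x := by gcongr
end
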